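/- Assume rᵐsⁿ = 1 implies m = n = 0 (r ≠ s). Every K-algebra endomorphism of the localized down-up algebra A_S(r+s, -rs) is an algebra automorphism. -/

import Mathlib

noncomputable section

/-- The defining relations of the localized down-up algebra
`A_S(r+s, -rs)`: generators `0 = d`, `1 = u`, `2 = x⁻¹`, `3 = y⁻¹`, with the
down-up relations together with the relations making `2` a two-sided inverse of
`x = du - r·ud` and `3` a two-sided inverse of `y = ud - s·du`. -/
inductive DULRel (K : Type) [CommRing K] (r s : K) :
    FreeAlgebra K (Fin 4) → FreeAlgebra K (Fin 4) → Prop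
  | rel1 : DULRel K r s
      (FreeAlgebra.ι K 0 * FreeAlgebra.ι K 0 * FreeAlgebra.ι K 1)
      ((r + s) • (FreeAlgebra.ι K 0 * FreeAlgebra.ι K 1 * FreeAlgebra.ι K 0)
        - (r * s) • (FreeAlgebra.ι K 1 * FreeAlgebra.ι K 0 * FreeAlgebra.ι K 0))
  | rel2 : DULRel K r s
      (FreeAlgebra.ι K 0 * FreeAlgebra.ι K 1 * FreeAlgebra.ι K 1)
      ((r + s) • (FreeAlgebra.ι K 1 * FreeAlgebra.ι K 0 * FreeAlgebra.ι K 1)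
        - (r * s) • (FreeAlgebra.ι K 1 * FreeAlgebra.ι K 1 * FreeAlgebra.ι K 0))
  | xinvr : DULRel K r s
      ((FreeAlgebra.ι K 0 * FreeAlgebra.ι K 1
          - r • (FreeAlgebra.ι K 1 * FreeAlgebra.ι K 0)) * FreeAlgebra.ι K 2) 1
  | xinvl : DULRel K r s
      (FreeAlgebra.ι K 2 * (FreeAlgebra.ι K 0 * FreeAlgebra.ι K 1
          - r • (FreeAlgebra.ι K 1 * FreeAlgebra.ι K 0))) 1
  | yinvr : DULRel K r s
      ((FreeAlgebra.ι K 1 * FreeAlgebra.ι K 0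
          - s • (FreeAlgebra.ι K 0 * FreeAlgebra.ι K 1)) * FreeAlgebra.ι K 3) 1
  | yinvl : DULRel K r s
      (FreeAlgebra.ι K 3 * (FreeAlgebra.ι K 1 * FreeAlgebra.ι K 0
          - s • (FreeAlgebra.ι K 0 * FreeAlgebra.ι K 1))) 1

/-- The localized down-up algebra `A_S(r+s, -rs)`, the localization of
`A(r+s, -rs)` at the Ore set `S = {xⁱyʲ}` generated by the normal elements
`x` and `y` (presented as the universal algebra inverting `x` and `y`). -/
abbrev DUL (K : Type) [CommRing K] (r s : K) : Type := RingQuot (DULRel K r s)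

/-- The generator `d` of `A_S(r+s, -rs)`. -/
def DUL.d (K : Type) [CommRing K] (r s : K) : DUL K r s :=
  RingQuot.mkAlgHom K (DULRel K r s) (FreeAlgebra.ι K 0)

/-- The generator `u` of `A_S(r+s, -rs)`. -/
def DUL.u (K : Type) [CommRing K] (r s : K) : DUL K r s :=
  RingQuot.mkAlgHom K (DULRel K r s) (FreeAlgebra.ι K 1)

/-- The element `x = du - r·ud` of `A_S(r+s, -rs)` (a unit there). -/
def DUL.x (K : Type) [CommRing K] (r s : K) : DUL K r s :=
  DUL.d K r s * DUL.u K r s - r • (DUL.u K r s * DUL.d K r s)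

/-- The element `y = ud - s·du` of `A_S(r+s, -rs)` (a unit there). -/
def DUL.y (K : Type) [CommRing K] (r s : K) : DUL K r s :=
  DUL.u K r s * DUL.d K r s - s • (DUL.d K r s * DUL.u K r s)

/-!
Put `q = r / s`, `κ = (r - s)⁻¹` and `t = (du - s ud) x⁻¹`. The algebra is then generated by
`d`, `u`, the unit `x` and `t`, subject to `d x = s x d`, `d t = q t d`, the inverse relations for
`u`, `ud = κ x (t - 1)`, `du = κ s x (q t - 1)` and the invertibility of `t - c` for one scalar `c`.

An endomorphism `θ` is studied through two representations. In the skew Laurent ring over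
`K[x, x⁻¹]⟦t⟧` in the variable `d`, a factor of a monomial is a monomial, because `ℤ` has two
unique products; as `r` and `s` are independent, `θ` acts there by `t ↦ μ t`, `x ↦ a x` and
preserves the degrees of `d` and `u`. In the Fock representation on `e₀, e₁, …` over `K(T)`, the
element `t` is diagonal with eigenvalues `q ^ (-k - 1)`; it exists when `c` is none of these, which
can be achieved by exchanging `d` and `u`.

* If `t - 1` is not invertible, the skew Laurent representation is faithful and, since `u e₀ = 0`,
  the scalar `μ` is `1`. Hence `θ` fixes `t`, scales `x`, multiplies `d` and `u` by units, and is
  bijective.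
* If `t - 1` is invertible, then `v = (ud)⁻¹ u` is a left inverse of `d`, and the kernel of the
  skew Laurent representation is recovered from its compressions by the projections
  `dⁿ (1 - dv) vⁿ` to the levels. Comparing eigenvalues of `θ t` in the Fock representation shows
  that `θ` maps the projection to level `k + i` to the one to level `m + i`, for all `i`. Then
  `vᵐ θ(d)ᵏ` is a unit, its degree forces `k = m`, and after conjugation by it `θ` fixes every
  level. This again gives `θ t = t` and the bijectivity of `θ`.
-/

universe u

section SkewMonoidAlgebra

open SkewMonoidAlgebra

theorem exists_eq_single_of_card_support_eq_one {k G : Type*} [AddCommMonoid k]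
    {a : SkewMonoidAlgebra k G} (h : a.support.card = 1) : ∃ g f, a = single g f := by
  obtain ⟨g, hg⟩ := Finset.card_eq_one.1 h
  refine ⟨g, a.coeff g, ?_⟩
  conv_lhs => rw [← sum_single a, sum_def, Finsupp.sum, support_coeff, hg, Finset.sum_singleton]

variable {k G : Type*} [Ring k] [Group G] [MulSemiringAction G k]

theorem coeff_mul_of_uniqueMul {a b : SkewMonoidAlgebra k G} {g h : G}
    (hgh : UniqueMul a.support b.support g h) (hg : g ∈ a.support) (hh : h ∈ b.support) :
    (a * b).coeff (g * h) = a.coeff g * g • b.coeff h := by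
  classical
  rw [coeff_mul, sum_def, Finsupp.sum, support_coeff, Finset.sum_eq_single g, sum_def, Finsupp.sum,
    support_coeff, Finset.sum_eq_single h, if_pos rfl]
  · exact fun h' hh' hne => if_neg fun e => hne (hgh hg hh' e).2
  · exact fun hn => absurd hh hn
  · intro g' hg' hne
    rw [sum_def, Finsupp.sum]
    refine Finset.sum_eq_zero fun h' hh' => if_neg fun e => hne (hgh hg' ?_ e).1
    rwa [support_coeff] at hh'
  · exact fun hn => absurd hg hn

variable [NoZeroDivisors k]

theorem mul_mem_support_of_uniqueMul {a b : SkewMonoidAlgebra k G} {g h : G}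
    (hgh : UniqueMul a.support b.support g h) (hg : g ∈ a.support) (hh : h ∈ b.support) :
    g * h ∈ (a * b).support := by
  rw [mem_support_iff, coeff_mul_of_uniqueMul hgh hg hh]
  rw [mem_support_iff] at hg hh
  exact mul_ne_zero hg ((smul_eq_zero_iff_eq g).not.2 hh)

theorem skewMonoidAlgebra_noZeroDivisors [UniqueProds G] :
    NoZeroDivisors (SkewMonoidAlgebra k G) where
  eq_zero_or_eq_zero_of_mul_eq_zero {a b} hab := by
    by_contra! hne
    obtain ⟨g, hg, h, hh, hgh⟩ := UniqueProds.uniqueMul_of_nonempty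
      (Finset.nonempty_iff_ne_empty.2 (support_eq_empty.not.2 hne.1))
      (Finset.nonempty_iff_ne_empty.2 (support_eq_empty.not.2 hne.2))
    simpa [hab] using mul_mem_support_of_uniqueMul hgh hg hh

theorem exists_eq_single_of_mul_eq_single [TwoUniqueProds G] {a b : SkewMonoidAlgebra k G}
    {g₀ : G} {f₀ : k} (hf₀ : f₀ ≠ 0) (h : a * b = single g₀ f₀) :
    (∃ g f, a = single g f) ∧ ∃ g f, b = single g f := by
  have eq_of_mem {g : G} (hg : g ∈ (a * b).support) : g = g₀ := by
    by_contra hne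
    rw [h, mem_support_iff, coeff_single, Finsupp.single_eq_of_ne hne] at hg
    exact hg rfl
  have hab : a * b ≠ 0 := by rwa [h, Ne, single_eq_zero]
  have ha : 0 < a.support.card :=
    Finset.card_pos.2 <| Finset.nonempty_iff_ne_empty.2 <|
      support_eq_empty.not.2 (left_ne_zero_of_mul hab)
  have hb : 0 < b.support.card :=
    Finset.card_pos.2 <| Finset.nonempty_iff_ne_empty.2 <|
      support_eq_empty.not.2 (right_ne_zero_of_mul hab)
  have hcard : a.support.card * b.support.card ≤ 1 := by
    by_contra! hc
    obtain ⟨p₁, h₁, p₂, h₂, hne, u₁, u₂⟩ := TwoUniqueProds.uniqueMul_of_one_lt_card hc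
    rw [Finset.mem_product] at h₁ h₂
    have e₁ := eq_of_mem (mul_mem_support_of_uniqueMul u₁ h₁.1 h₁.2)
    have e₂ := eq_of_mem (mul_mem_support_of_uniqueMul u₂ h₂.1 h₂.2)
    have := u₁ h₂.1 h₂.2 (e₂.trans e₁.symm)
    exact hne (Prod.ext this.1.symm this.2.symm)
  exact ⟨exists_eq_single_of_card_support_eq_one (by nlinarith),
    exists_eq_single_of_card_support_eq_one (by nlinarith)⟩

end SkewMonoidAlgebra

section FiniteDimensional

open Module

theorem eq_bot_of_mul_eq_smul_mul {F V : Type*} [Field F] [AddCommGroup V] [Module F V]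
    {D X : Module.End F V} (hD : Function.Injective D) (hX : Function.Injective X) {s : F}
    (hs : ∀ n : ℕ, s ^ n = 1 → n = 0) (h : D * X = s • (X * D)) {Z : Submodule F V}
    [FiniteDimensional F Z] (hDZ : ∀ z ∈ Z, D z ∈ Z) (hXZ : ∀ z ∈ Z, X z ∈ Z) : Z = ⊥ := by
  have det_ne_zero {Y : Module.End F V} (hY : Function.Injective Y) (hYZ : ∀ z ∈ Z, Y z ∈ Z) :
      LinearMap.det (Y.restrict hYZ) ≠ 0 := by
    have : Function.Injective (Y.restrict hYZ) := fun a b e =>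
      Subtype.ext (hY (congrArg Subtype.val e))
    exact (LinearEquiv.isUnit_det' (LinearEquiv.ofInjectiveEndo _ this)).ne_zero
  have hDX : D.restrict hDZ * X.restrict hXZ = s • (X.restrict hXZ * D.restrict hDZ) :=
    LinearMap.ext fun z => Subtype.ext (LinearMap.congr_fun h (z : V))
  have hdet := congrArg LinearMap.det hDX
  rw [map_mul, LinearMap.det_smul, map_mul, mul_comm (LinearMap.det (X.restrict hXZ))] at hdet
  have hpow : s ^ finrank F Z = 1 :=
    (mul_eq_right₀ (mul_ne_zero (det_ne_zero hD hDZ) (det_ne_zero hX hXZ))).1 hdet.symm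
  exact Submodule.finrank_eq_zero.1 (hs _ hpow)

end FiniteDimensional

section CoeffRing

open LaurentPolynomial

variable {K : Type*} [Field K] {q s : Kˣ}

/-- The automorphism `T ↦ b T` of the Laurent polynomials. -/
def laurentTwist (b : Kˣ) : K[T;T⁻¹] →ₐ[K] K[T;T⁻¹] :=
  AddMonoidAlgebra.lift K K[T;T⁻¹] ℤ
    { toFun n := C ((b ^ n.toAdd : Kˣ) : K) * T n.toAdd
      map_one' := by simp
      map_mul' m n := by
        rw [toAdd_mul, zpow_add, Units.val_mul, map_mul, T_add]
        exact mul_mul_mul_comm _ _ _ _ }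

theorem laurentTwist_C_mul_T (b : Kˣ) (a : K) (n : ℤ) :
    laurentTwist b (C a * T n) = C (((b ^ n : Kˣ) : K) * a) * T n := by
  rw [← single_eq_C_mul_T, laurentTwist, AddMonoidAlgebra.lift_single, smul_eq_C_mul,
    mul_comm ((b ^ n : Kˣ) : K), map_mul, mul_assoc]
  rfl

theorem coeff_laurentTwist (b : Kˣ) (f : K[T;T⁻¹]) (j : ℤ) :
    (laurentTwist b f).coeff j = ((b ^ j : Kˣ) : K) * f.coeff j := by
  induction f using LaurentPolynomial.induction_on' with
  | add f g hf hg =>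
    simp only [map_add, AddMonoidAlgebra.coeff_add, Finsupp.add_apply, hf, hg, mul_add]
  | C_mul_T n a =>
    rw [laurentTwist_C_mul_T]
    rw [← LaurentPolynomial.single_eq_C_mul_T, ← LaurentPolynomial.single_eq_C_mul_T]
    simp only [AddMonoidAlgebra.coeff_single, Finsupp.single_apply]
    split_ifs with h
    · rw [h]
    · rw [mul_zero]

theorem laurentTwist_laurentTwist_inv (b : Kˣ) (f : K[T;T⁻¹]) :
    laurentTwist b (laurentTwist b⁻¹ f) = f := by
  ext j
  rw [coeff_laurentTwist, coeff_laurentTwist, ← mul_assoc, ← Units.val_mul, ← mul_zpow,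
    mul_inv_cancel, one_zpow, Units.val_one, one_mul]

theorem laurentTwist_injective (b : Kˣ) : Function.Injective (laurentTwist b) :=
  Function.LeftInverse.injective (g := laurentTwist b⁻¹) fun f => by
    simpa only [inv_inv] using laurentTwist_laurentTwist_inv b⁻¹ f

/-- The endomorphism `t ↦ a t`, `T ↦ b T` of `K[T;T⁻¹]⟦t⟧`. -/
def seriesScale (a b : Kˣ) : PowerSeries K[T;T⁻¹] →+* PowerSeries K[T;T⁻¹] :=
  (PowerSeries.rescale (C (a : K))).comp (PowerSeries.map (laurentTwist b).toRingHom)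

theorem coeff_coeff_seriesScale (a b : Kˣ) (f : PowerSeries K[T;T⁻¹]) (i : ℕ) (j : ℤ) :
    (PowerSeries.coeff i (seriesScale a b f)).coeff j =
      ((a ^ i * b ^ j : Kˣ) : K) * (PowerSeries.coeff i f).coeff j := by
  have h : PowerSeries.coeff i (seriesScale a b f) =
      (a : K) ^ i • laurentTwist b (PowerSeries.coeff i f) := by
    rw [smul_eq_C_mul, map_pow, seriesScale, RingHom.comp_apply, PowerSeries.coeff_rescale,
      PowerSeries.coeff_map]
    rfl
  rw [h, AddMonoidAlgebra.coeff_smul, Finsupp.smul_apply, coeff_laurentTwist, smul_eq_mul,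
    Units.val_mul, Units.val_pow_eq_pow_val, mul_assoc]

theorem seriesScale_smul (a b : Kˣ) (k : K) (f : PowerSeries K[T;T⁻¹]) :
    seriesScale a b (k • f) = k • seriesScale a b f := by
  ext i j
  simp only [coeff_coeff_seriesScale, PowerSeries.coeff_smul, AddMonoidAlgebra.coeff_smul,
    Finsupp.smul_apply, smul_eq_mul]
  exact mul_left_comm _ _ _

/-- The ring `K[x, x⁻¹]⟦t⟧`. The units `q`, `s` only enter through the action of `ℤ`, whose
generator is the automorphism `x ↦ s x`, `t ↦ q t`. -/
def CoeffRing (_q _s : Kˣ) : Type _ := PowerSeries K[T;T⁻¹]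

namespace CoeffRing

instance : CommRing (CoeffRing q s) := inferInstanceAs (CommRing (PowerSeries K[T;T⁻¹]))

instance : IsDomain (CoeffRing q s) := inferInstanceAs (IsDomain (PowerSeries K[T;T⁻¹]))

instance : Algebra K (CoeffRing q s) := inferInstanceAs (Algebra K (PowerSeries K[T;T⁻¹]))

/-- The coefficient of `t ^ i x ^ j`. -/
def coeff (f : CoeffRing q s) (i : ℕ) (j : ℤ) : K := (PowerSeries.coeff i f).coeff j

@[ext] theorem ext {f g : CoeffRing q s} (h : ∀ i j, f.coeff i j = g.coeff i j) : f = g :=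
  PowerSeries.ext fun i => LaurentPolynomial.ext (h i)

/-- The inclusion of `K[x, x⁻¹][t]`. -/
def ofPolynomial : Polynomial K[T;T⁻¹] →ₐ[K] CoeffRing q s :=
  { Polynomial.coeToPowerSeries.ringHom with
    commutes' := fun k => (Polynomial.coe_C (C k)).trans
      (PowerSeries.algebraMap_apply (A := K[T;T⁻¹]) (r := k)).symm }

theorem ofPolynomial_injective : Function.Injective (ofPolynomial (q := q) (s := s)) :=
  Polynomial.coe_injective K[T;T⁻¹]

/-- The variable `x`. -/
def x : CoeffRing q s := PowerSeries.C (T 1)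

/-- The variable `t`. -/
def t : CoeffRing q s := PowerSeries.X (R := K[T;T⁻¹])

/-- The automorphism `t ↦ a t`, `x ↦ b x`. -/
def scale (a b : Kˣ) : CoeffRing q s →ₐ[K] CoeffRing q s :=
  AlgHom.mk' (seriesScale a b) (seriesScale_smul a b)

theorem coeff_scale (a b : Kˣ) (f : CoeffRing q s) (i : ℕ) (j : ℤ) :
    (scale a b f).coeff i j = ((a ^ i * b ^ j : Kˣ) : K) * f.coeff i j :=
  coeff_coeff_seriesScale a b f i j

theorem coeff_smul (k : K) (f : CoeffRing q s) (i : ℕ) (j : ℤ) :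
    (k • f).coeff i j = k * f.coeff i j := rfl

theorem coeff_x (i : ℕ) (j : ℤ) :
    (x : CoeffRing q s).coeff i j = if i = 0 ∧ j = 1 then 1 else 0 := by
  rw [coeff, x, PowerSeries.coeff_C]
  split_ifs with hi h h <;> simp_all [T_apply]
  grind

theorem coeff_t (i : ℕ) (j : ℤ) :
    (t : CoeffRing q s).coeff i j = if i = 1 ∧ j = 0 then 1 else 0 := by
  rw [coeff, t, PowerSeries.coeff_X]
  split_ifs with hi h h <;> simp_all [← T_zero, T_apply]
  grind

theorem ofPolynomial_C_T : ofPolynomial (Polynomial.C (T 1)) = (x : CoeffRing q s) :=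
  Polynomial.coe_C _

theorem ofPolynomial_X : ofPolynomial Polynomial.X = (t : CoeffRing q s) :=
  Polynomial.coe_X

theorem scale_injective (a b : Kˣ) : Function.Injective (scale a b (q := q) (s := s)) := by
  intro f g h
  ext i j
  have := congrArg (coeff · i j) h
  simp only [coeff_scale] at this
  exact mul_left_cancel₀ (Units.ne_zero _) this

instance : MulSemiringAction (Multiplicative ℤ) (CoeffRing q s) where
  smul n := scale (q ^ n.toAdd) (s ^ n.toAdd)
  one_smul f := by
    ext i j
    exact (coeff_scale _ _ _ _ _).trans (by simp)
  mul_smul m n f := by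
    ext i j
    change (scale _ _ f).coeff i j = (scale _ _ (scale _ _ f)).coeff i j
    simp only [coeff_scale, toAdd_mul, ← mul_assoc, ← Units.val_mul, zpow_add, mul_pow, mul_zpow]
    rw [mul_right_comm (_ ^ _) (_ ^ _) (_ ^ _)]
  smul_zero _ := map_zero _
  smul_add _ := map_add _
  smul_one _ := map_one _
  smul_mul _ := map_mul _

theorem ofAdd_smul (n : ℤ) (f : CoeffRing q s) :
    Multiplicative.ofAdd n • f = scale (q ^ n) (s ^ n) f := rfl

instance : SMulCommClass (Multiplicative ℤ) K (CoeffRing q s) where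
  smul_comm _ k f := map_smul (scale _ _) k f

theorem scale_x (a b : Kˣ) : scale a b (x : CoeffRing q s) = (b : K) • x := by
  ext i j
  rw [coeff_scale, coeff_smul, coeff_x]
  split_ifs with h <;> simp [h]

theorem scale_t (a b : Kˣ) : scale a b (t : CoeffRing q s) = (a : K) • t := by
  ext i j
  rw [coeff_scale, coeff_smul, coeff_t]
  split_ifs with h <;> simp [h]

theorem pow_mul_zpow_eq_of_scale_eq_smul {a b : Kˣ} {k : K} {f : CoeffRing q s}
    (h : scale a b f = k • f) {i : ℕ} {j : ℤ} (hf : f.coeff i j ≠ 0) :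
    ((a ^ i * b ^ j : Kˣ) : K) = k := by
  have := congrArg (coeff · i j) h
  simp only [coeff_scale, coeff_smul] at this
  exact mul_right_cancel₀ hf this

theorem isUnit_x : IsUnit (x : CoeffRing q s) := (isUnit_T 1).map (PowerSeries.C (R := K[T;T⁻¹]))

theorem isUnit_algebraMap_sub_t {a : K} (ha : a ≠ 0) :
    IsUnit (algebraMap K (CoeffRing q s) a - t) := by
  refine PowerSeries.isUnit_iff_constantCoeff.2 ?_
  change IsUnit (PowerSeries.constantCoeff (PowerSeries.C (C a) - PowerSeries.X))
  simpa using ha.isUnit.map (C (R := K))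

theorem t_ne_zero : (t : CoeffRing q s) ≠ 0 := PowerSeries.X_ne_zero

variable (hqs : ∀ m n : ℤ, q ^ m * s ^ n = 1 → m = 0 ∧ n = 0)
include hqs

theorem exists_eq_smul_t {n : ℤ} {f : CoeffRing q s}
    (h : scale (q ^ n) (s ^ n) f = (q : K) • f) : ∃ k : K, f = k • t := by
  refine ⟨f.coeff 1 0, ext fun i j => ?_⟩
  rw [coeff_smul, coeff_t]
  split_ifs with hij
  · rw [hij.1, hij.2, mul_one]
  by_contra hf
  rw [mul_zero] at hf
  have := Units.ext (pow_mul_zpow_eq_of_scale_eq_smul h hf)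
  have := hqs (n * i - 1) (n * j) (by
    rw [zpow_sub_one, zpow_mul, zpow_mul, zpow_natCast, mul_right_comm, this, mul_inv_cancel])
  have hn : n ≠ 0 := by rintro rfl; omega
  have hi : (i : ℤ) ∣ 1 := ⟨n, by linarith [this.1, mul_comm n i]⟩
  have hi : i = 1 := by exact_mod_cast Int.eq_one_of_dvd_one (by positivity) hi
  exact hij ⟨hi, (mul_eq_zero.1 this.2).resolve_left hn⟩

theorem exists_eq_smul_x {f : CoeffRing q s} (h : scale q s f = (s : K) • f) :
    ∃ k : K, f = k • x := by
  refine ⟨f.coeff 0 1, ext fun i j => ?_⟩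
  rw [coeff_smul, coeff_x]
  split_ifs with hij
  · rw [hij.1, hij.2, mul_one]
  by_contra hf
  rw [mul_zero] at hf
  have := Units.ext (pow_mul_zpow_eq_of_scale_eq_smul h hf)
  have := hqs i (j - 1) (by rw [zpow_sub_one, zpow_natCast, ← mul_assoc, this, mul_inv_cancel])
  omega

end CoeffRing
end CoeffRing

section DownUpData

variable {K : Type u} [Field K] {q s : Kˣ} {κ c : K} {B C : Type*} [Ring B] [Algebra K B]
  [Ring C] [Algebra K C]

/-- A representation in `B` of the localized down-up algebra by the generators `d`, `u`, the unit
`x` and the element `t = (du - s ud) x⁻¹`, where `q = r s⁻¹` and `κ = (r - s)⁻¹`. The unit `y` is a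
multiple of `x (t - c)`, with `c = (1 - s²) (1 - rs)⁻¹`. -/
@[ext] structure DownUpData (q s : Kˣ) (κ c : K) (B : Type*) [Ring B] [Algebra K B] where
  (d u x t : B)
  d_x : SemiconjBy d x ((s : K) • x)
  d_t : SemiconjBy d t ((q : K) • t)
  u_x : SemiconjBy u ((s : K) • x) x
  u_t : SemiconjBy u ((q : K) • t) t
  x_t : Commute x t
  u_mul_d : u * d = κ • (x * (t - 1))
  d_mul_u : d * u = (κ * s) • (x * ((q : K) • t - 1))
  isUnit_x : IsUnit x
  c_mem : c ∈ resolventSet K t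

namespace DownUpData

/-- The image of a representation under an algebra homomorphism. -/
@[simps d u x t] def map (R : DownUpData q s κ c B) (f : B →ₐ[K] C) : DownUpData q s κ c C where
  d := f R.d
  u := f R.u
  x := f R.x
  t := f R.t
  d_x := by simpa using R.d_x.map f
  d_t := by simpa using R.d_t.map f
  u_x := by simpa using R.u_x.map f
  u_t := by simpa using R.u_t.map f
  x_t := R.x_t.map f
  u_mul_d := by simpa using congrArg f R.u_mul_d
  d_mul_u := by simpa using congrArg f R.d_mul_u
  isUnit_x := R.isUnit_x.map f
  c_mem := AlgHom.mem_resolventSet_apply f R.c_mem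

/-- The symmetry exchanging `d` and `u`. -/
@[simps d u x t] def swap (R : DownUpData q s κ c B) :
    DownUpData q⁻¹ s⁻¹ (κ * s) (c * q) B where
  d := R.u
  u := R.d
  x := R.x
  t := (q : K) • R.t
  d_x := by simpa [smul_smul] using R.u_x.smul_right ((s⁻¹ : Kˣ) : K)
  d_t := by simpa [smul_smul] using R.u_t
  u_x := by simpa [smul_smul] using R.d_x.smul_right ((s⁻¹ : Kˣ) : K)
  u_t := by simpa [smul_smul] using R.d_t
  x_t := R.x_t.smul_right _
  u_mul_d := R.d_mul_u
  d_mul_u := by simpa [smul_smul] using R.u_mul_d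
  isUnit_x := R.isUnit_x
  c_mem := by
    have h : q • c ∈ resolventSet K (q • R.t) :=
      not_not.1 (spectrum.smul_mem_smul_iff.not.2 (not_not.2 R.c_mem))
    rwa [mul_comm]

/-- `R` exhibits `B` as the universal algebra generated by a representation. -/
structure IsUniversal (R : DownUpData q s κ c B) : Prop where
  adjoin_eq_top :
    Algebra.adjoin K {R.d, R.u, R.x, Ring.inverse R.x, R.t, resolvent R.t c} = ⊤
  exists_algHom : ∀ (C : Type u) [Ring C] [Algebra K C] (S : DownUpData q s κ c C),
    ∃ f : B →ₐ[K] C, R.map f = S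

theorem exists_swap_eq (S : DownUpData q⁻¹ s⁻¹ (κ * s) (c * q) B) :
    ∃ R : DownUpData q s κ c B, R.swap = S := by
  have hκ : κ * s * ((s⁻¹ : Kˣ) : K) = κ := by simp
  have hc : c * q * ((q⁻¹ : Kˣ) : K) = c := by simp
  refine ⟨{ S.swap with
    d_x := by simpa using S.swap.d_x
    d_t := by simpa using S.swap.d_t
    u_x := by simpa using S.swap.u_x
    u_t := by simpa using S.swap.u_t
    u_mul_d := by simpa [hκ] using S.swap.u_mul_d
    d_mul_u := by simpa [hκ] using S.swap.d_mul_u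
    c_mem := by simpa [hc] using S.swap.c_mem }, ?_⟩
  obtain ⟨d, u, x, t, _⟩ := S
  simp [DownUpData.swap]

theorem resolvent_swap (R : DownUpData q s κ c B) (a : K) :
    resolvent R.t a = (q : K) • resolvent R.swap.t (a * q) := by
  have h := spectrum.units_smul_resolvent (r := q) (s := a * q) (a := (q : K) • R.t)
  rw [← Units.smul_def, swap_t, h, ← Units.smul_def q R.t, inv_smul_smul, mul_comm a,
    ← smul_eq_mul, ← Units.smul_def, inv_smul_smul]

theorem IsUniversal.swap {R : DownUpData q s κ c B} (h : R.IsUniversal) :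
    R.swap.IsUniversal where
  adjoin_eq_top := by
    rw [eq_top_iff, ← h.adjoin_eq_top, Algebra.adjoin_le_iff]
    set A := Algebra.adjoin K {R.swap.d, R.swap.u, R.swap.x, Ring.inverse R.swap.x, R.swap.t,
      resolvent R.swap.t (c * q)}
    have mem {w} (hw : w ∈ ({R.swap.d, R.swap.u, R.swap.x, Ring.inverse R.swap.x, R.swap.t,
      resolvent R.swap.t (c * q)} : Set B)) : w ∈ A := Algebra.subset_adjoin hw
    rintro _ (rfl | rfl | rfl | rfl | rfl | rfl)
    · exact mem (by simp)
    · exact mem (by simp)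
    · exact mem (by simp)
    · exact mem (by simp)
    · have : R.t = ((q⁻¹ : Kˣ) : K) • R.swap.t := by simp [smul_smul]
      exact this ▸ A.smul_mem (mem (by simp)) _
    · exact R.resolvent_swap c ▸ A.smul_mem (mem (by simp)) _
  exists_algHom C _ _ S := by
    obtain ⟨S, rfl⟩ := exists_swap_eq S
    obtain ⟨f, rfl⟩ := h.exists_algHom C S
    exact ⟨f, by ext <;> simp⟩

variable (R : DownUpData q s κ c B)

theorem d_sub (a : K) : SemiconjBy R.d (algebraMap K B (q * a) - R.t)
    ((q : K) • (algebraMap K B a - R.t)) := by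
  rw [smul_sub, Algebra.smul_def (q : K) (algebraMap K B a), ← map_mul]
  exact (Algebra.commute_algebraMap_right _ _).semiconjBy.sub_right R.d_t

theorem u_sub (a : K) : SemiconjBy R.u ((q : K) • (algebraMap K B a - R.t))
    (algebraMap K B (q * a) - R.t) := by
  rw [smul_sub, Algebra.smul_def (q : K) (algebraMap K B a), ← map_mul]
  exact (Algebra.commute_algebraMap_right _ _).semiconjBy.sub_right R.u_t

theorem commute_x_sub (a : K) : Commute R.x (algebraMap K B a - R.t) :=
  (Algebra.commute_algebraMap_right _ _).sub_right R.x_t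

theorem mul_mem_resolventSet (hκ : κ ≠ 0) {a : K} (ha : a ∈ resolventSet K R.t)
    (hqa : (q : K) * a ≠ 1) : (q : K) * a ∈ resolventSet K R.t := by
  set p := algebraMap K B (q * a) - R.t with hp
  set w := R.u * resolvent R.t a * R.d + ((q : K) * κ) • R.x with hw
  have hud : (q : K) • (R.u * R.d) + ((q : K) * κ) • (R.x * p) =
      ((q : K) * κ * (q * a - 1)) • R.x := by
    rw [R.u_mul_d, hp, mul_sub, mul_sub, ← Algebra.commutes, ← Algebra.smul_def, mul_one]
    module
  have hpw : p * w = ((q : K) * κ * (q * a - 1)) • R.x := by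
    rw [← hud, hw, mul_add, ← mul_assoc, ← mul_assoc, ← (R.u_sub a).eq, mul_smul_comm,
      mul_smul_comm, (R.commute_x_sub _).eq, smul_mul_assoc, smul_mul_assoc, mul_assoc R.u,
      resolvent, Ring.mul_inverse_cancel _ ha, mul_one]
  have hwp : w * p = ((q : K) * κ * (q * a - 1)) • R.x := by
    rw [← hud, hw, add_mul, mul_assoc, (R.d_sub a).eq, smul_mul_assoc, smul_mul_assoc,
      mul_smul_comm, ← mul_assoc, mul_assoc R.u, resolvent, Ring.inverse_mul_cancel _ ha, mul_one]
  have hunit : IsUnit (((q : K) * κ * (q * a - 1)) • R.x) :=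
    R.isUnit_x.smul (Units.mk0 _ (mul_ne_zero (mul_ne_zero q.ne_zero hκ) (sub_ne_zero.2 hqa)))
  exact ((show Commute p w from hpw.trans hwp.symm).isUnit_mul_iff.1 (hpw ▸ hunit)).1

theorem smul_mem_resolventSet {a : K} :
    (q : K) * a ∈ resolventSet K ((q : K) • R.t) ↔ a ∈ resolventSet K R.t :=
  not_iff_not.1 (spectrum.smul_mem_smul_iff (r := q))

theorem inv_mul_mem_resolventSet (hκ : κ ≠ 0) {a : K} (ha : a ∈ resolventSet K R.t) (ha1 : a ≠ 1) :
    ((q⁻¹ : Kˣ) : K) * a ∈ resolventSet K R.t := by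
  have h := R.swap.mul_mem_resolventSet (mul_ne_zero hκ s.ne_zero)
    (R.smul_mem_resolventSet.2 ha) (by simpa using ha1)
  refine R.smul_mem_resolventSet.1 ?_
  rwa [mul_left_comm] at h

theorem d_resolvent {a : K} (ha : a ∈ resolventSet K R.t)
    (hqa : (q : K) * a ∈ resolventSet K R.t) :
    SemiconjBy R.d ((q : K) • resolvent R.t (q * a)) (resolvent R.t a) := by
  refine ha.mul_left_cancel (hqa.mul_right_cancel ?_)
  have h : (q : K) • resolvent R.t (q * a) * (algebraMap K B (q * a) - R.t) = (q : K) • 1 := by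
    rw [smul_mul_assoc, resolvent, Ring.inverse_mul_cancel _ hqa]
  rw [mul_assoc _ (_ * _), mul_assoc _ (_ * _), mul_assoc R.d, h, mul_assoc, (R.d_sub a).eq,
    resolvent, smul_mul_assoc, mul_smul_comm _ (Ring.inverse _),
    Ring.inverse_mul_cancel_left _ _ ha, mul_smul_comm, mul_one]

theorem u_resolvent {a : K} (ha : a ∈ resolventSet K R.t)
    (hqa : (q : K) * a ∈ resolventSet K R.t) :
    SemiconjBy R.u (resolvent R.t a) ((q : K) • resolvent R.t (q * a)) := by
  refine hqa.mul_left_cancel (ha.mul_right_cancel ?_)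
  have h : (algebraMap K B (q * a) - R.t) * (q : K) • resolvent R.t (q * a) = (q : K) • 1 := by
    rw [mul_smul_comm, resolvent, Ring.mul_inverse_cancel _ hqa]
  rw [← mul_assoc _ _ R.u, h, mul_assoc, mul_assoc, resolvent, Ring.inverse_mul_cancel _ ha,
    mul_one, ← (R.u_sub a).eq, smul_one_mul, mul_smul_comm, smul_mul_assoc]

theorem d_ne_zero [Nontrivial B] (hκ : κ ≠ 0) (hq : (q : K) ≠ 1) : R.d ≠ 0 := by
  intro hd
  have ht : R.t = 1 := by
    have h := R.u_mul_d
    rwa [hd, mul_zero, eq_comm, smul_eq_zero_iff_right hκ, R.isUnit_x.mul_right_eq_zero,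
      sub_eq_zero] at h
  have h := R.d_mul_u
  rw [hd, zero_mul, eq_comm, smul_eq_zero_iff_right (mul_ne_zero hκ s.ne_zero),
    R.isUnit_x.mul_right_eq_zero, ht, ← Algebra.algebraMap_eq_smul_one, ← map_one (algebraMap K B),
    ← map_sub, map_eq_zero_iff _ (algebraMap K B).injective, sub_eq_zero] at h
  exact hq h

theorem u_ne_zero [Nontrivial B] (hκ : κ ≠ 0) (hq : (q : K) ≠ 1) : R.u ≠ 0 :=
  R.swap.d_ne_zero (mul_ne_zero hκ s.ne_zero) (by simpa using hq)

end DownUpData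
end DownUpData

/-! ### The skew Laurent representation -/

section SkewLaurent

variable {K : Type u} [Field K] {q s : Kˣ} {κ c : K}

/-- The skew Laurent polynomial ring over `K[x, x⁻¹]⟦t⟧` in a variable `d` with
`d f = scale q s f d`, in which representations of the down-up algebra are compared. -/
abbrev SkewLaurent (q s : Kˣ) : Type u := SkewMonoidAlgebra (CoeffRing q s) (Multiplicative ℤ)

namespace SkewLaurent

open CoeffRing (scale)

instance : NoZeroDivisors (SkewLaurent q s) := skewMonoidAlgebra_noZeroDivisors

/-- The monomial `f dⁿ`. -/
def monomial (n : ℤ) : CoeffRing q s →ₗ[K] SkewLaurent q s where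
  toFun := SkewMonoidAlgebra.single (Multiplicative.ofAdd n)
  map_add' := SkewMonoidAlgebra.single_add _
  map_smul' k f := (SkewMonoidAlgebra.smul_single k _ f).symm

theorem monomial_mul_monomial (m n : ℤ) (f g : CoeffRing q s) :
    monomial m f * monomial n g = monomial (m + n) (f * scale (q ^ m) (s ^ m) g) :=
  SkewMonoidAlgebra.single_mul_single

theorem monomial_injective (n : ℤ) : Function.Injective (monomial n (q := q) (s := s)) :=
  SkewMonoidAlgebra.single_injective _

theorem monomial_eq_zero {n : ℤ} {f : CoeffRing q s} : monomial n f = 0 ↔ f = 0 :=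
  SkewMonoidAlgebra.single_eq_zero

theorem coeff_monomial_self (n : ℤ) (f : CoeffRing q s) :
    (monomial n f).coeff (Multiplicative.ofAdd n) = f :=
  Finsupp.single_eq_same

theorem coeff_monomial_of_ne {m n : ℤ} (h : m ≠ n) (f : CoeffRing q s) :
    (monomial m f).coeff (Multiplicative.ofAdd n) = 0 :=
  Finsupp.single_eq_of_ne' h

theorem eq_of_monomial_eq {m n : ℤ} {f g : CoeffRing q s} (hf : f ≠ 0)
    (h : monomial m f = monomial n g) : m = n := by
  by_contra hne
  rw [← coeff_monomial_self m f, h, coeff_monomial_of_ne (Ne.symm hne)] at hf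
  exact hf rfl

theorem monomial_zero_one : monomial 0 (1 : CoeffRing q s) = 1 := rfl

theorem algebraMap_eq (k : K) :
    algebraMap K (SkewLaurent q s) k = monomial 0 (algebraMap K (CoeffRing q s) k) := rfl

theorem monomial_zero_mul (n : ℤ) (f g : CoeffRing q s) :
    monomial 0 f * monomial n g = monomial n (f * g) := by
  have h : scale (q ^ (0 : ℤ)) (s ^ (0 : ℤ)) g = g := by
    rw [← CoeffRing.ofAdd_smul, ofAdd_zero, one_smul]
  rw [monomial_mul_monomial, zero_add, h]

theorem exists_eq_monomial_of_mul_eq {a b : SkewLaurent q s} {n : ℤ} {f : CoeffRing q s}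
    (hf : f ≠ 0) (h : a * b = monomial n f) :
    (∃ m g, a = monomial m g) ∧ ∃ m g, b = monomial m g :=
  exists_eq_single_of_mul_eq_single (G := Multiplicative ℤ) (k := CoeffRing q s)
    (g₀ := Multiplicative.ofAdd n) hf h

theorem exists_eq_monomial_of_isUnit {a : SkewLaurent q s} (ha : IsUnit a) :
    ∃ n f, a = monomial n f := by
  obtain ⟨a, rfl⟩ := ha
  exact (exists_eq_monomial_of_mul_eq (one_ne_zero (α := CoeffRing q s))
    (a.mul_inv.trans monomial_zero_one.symm)).1

theorem isUnit_monomial_zero {f : CoeffRing q s} (hf : IsUnit f) :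
    IsUnit (monomial 0 f) := by
  obtain ⟨f, rfl⟩ := hf
  have h {a b : CoeffRing q s} (hab : a * b = 1) : monomial 0 a * monomial 0 b = 1 := by
    rw [monomial_zero_mul, hab, monomial_zero_one]
  exact ⟨⟨_, _, h f.mul_inv, h f.inv_mul⟩, rfl⟩

/-- The tautological representation. -/
def downUpData (q s : Kˣ) (κ : K) {c : K} (hc : c ≠ 0) : DownUpData q s κ c (SkewLaurent q s) where
  d := monomial 1 1
  u := monomial (-1) (κ • (CoeffRing.x * (CoeffRing.t - 1)))
  x := monomial 0 CoeffRing.x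
  t := monomial 0 CoeffRing.t
  d_x := by
    rw [SemiconjBy, ← map_smul, monomial_mul_monomial, monomial_zero_mul, zpow_one, zpow_one,
      CoeffRing.scale_x, one_mul, mul_one, add_zero]
  d_t := by
    rw [SemiconjBy, ← map_smul, monomial_mul_monomial, monomial_zero_mul, zpow_one, zpow_one,
      CoeffRing.scale_t, one_mul, mul_one, add_zero]
  u_x := by
    rw [SemiconjBy, ← map_smul, monomial_mul_monomial, monomial_zero_mul, map_smul, add_zero,
      CoeffRing.scale_x, smul_smul, ← Units.val_mul, zpow_neg_one, mul_inv_cancel, Units.val_one,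
      one_smul, mul_comm]
  u_t := by
    rw [SemiconjBy, ← map_smul, monomial_mul_monomial, monomial_zero_mul, map_smul, add_zero,
      CoeffRing.scale_t, smul_smul, ← Units.val_mul, zpow_neg_one, mul_inv_cancel, Units.val_one,
      one_smul, mul_comm]
  x_t := by
    rw [Commute, SemiconjBy, monomial_zero_mul, monomial_zero_mul, mul_comm]
  u_mul_d := by
    rw [monomial_mul_monomial, map_one, mul_one, neg_add_cancel, map_smul, ← monomial_zero_one,
      ← map_sub, monomial_zero_mul]
  d_mul_u := by
    rw [monomial_mul_monomial, one_mul, add_neg_cancel, zpow_one, zpow_one, map_smul (scale q s),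
      map_mul (scale q s), map_sub (scale q s), CoeffRing.scale_x, CoeffRing.scale_t,
      map_one (scale q s), ← monomial_zero_one, ← map_smul, ← map_sub, monomial_zero_mul,
      ← map_smul, smul_mul_assoc, smul_smul]
  isUnit_x := isUnit_monomial_zero CoeffRing.isUnit_x
  c_mem := by
    rw [spectrum.mem_resolventSet_iff, algebraMap_eq, ← map_sub]
    exact isUnit_monomial_zero (CoeffRing.isUnit_algebraMap_sub_t hc)

theorem coeff_mul_monomial_zero (a : SkewLaurent q s) (f : CoeffRing q s) (n : ℤ) :
    (a * monomial 0 f).coeff (Multiplicative.ofAdd n) =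
      a.coeff (Multiplicative.ofAdd n) * scale (q ^ n) (s ^ n) f :=
  SkewMonoidAlgebra.coeff_mul_single_one a f _

theorem coeff_monomial_zero_mul (f : CoeffRing q s) (a : SkewLaurent q s) (n : ℤ) :
    (monomial 0 f * a).coeff (Multiplicative.ofAdd n) = f * a.coeff (Multiplicative.ofAdd n) :=
  SkewMonoidAlgebra.coeff_single_one_mul a f _

theorem ne_one_of_independent (hqs : ∀ m n : ℤ, q ^ m * s ^ n = 1 → m = 0 ∧ n = 0) :
    (q : K) ≠ 1 := fun h => by
  have := hqs 1 0 (by simpa using h)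
  omega

variable (hκ : κ ≠ 0) (hc : c ≠ 0) (hqs : ∀ m n : ℤ, q ^ m * s ^ n = 1 → m = 0 ∧ n = 0)
  (T : DownUpData q s κ c (SkewLaurent q s))

include hκ hc hqs in
theorem exists_t_eq_monomial_zero : ∃ τ, T.t = monomial 0 τ := by
  have hq := ne_one_of_independent hqs
  obtain ⟨c', hne, hc'⟩ : ∃ c', c - c' ≠ 0 ∧ c' ∈ resolventSet K T.t := by
    by_cases hqc : (q : K) * c = 1
    · refine ⟨_, fun h => ?_, T.inv_mul_mem_resolventSet hκ T.c_mem fun h => ?_⟩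
      · rw [sub_eq_zero, eq_comm, Units.inv_mul_eq_iff_eq_mul, eq_comm, mul_left_eq_self₀] at h
        tauto
      · rw [h, mul_one] at hqc
        exact hq hqc
    · refine ⟨_, fun h => ?_, T.mul_mem_resolventSet hκ T.c_mem hqc⟩
      rw [sub_eq_zero, eq_comm, mul_left_eq_self₀] at h
      tauto
  obtain ⟨n, f, hf⟩ := exists_eq_monomial_of_isUnit T.c_mem
  obtain ⟨m, g, hg⟩ := exists_eq_monomial_of_isUnit hc'
  obtain rfl | hn := eq_or_ne n 0
  · exact ⟨algebraMap K _ c - f, by rw [map_sub, ← hf, algebraMap_eq, sub_sub_cancel]⟩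
  obtain rfl | hm := eq_or_ne m 0
  · exact ⟨algebraMap K _ c' - g, by rw [map_sub, ← hg, algebraMap_eq, sub_sub_cancel]⟩
  have hfg : monomial n f - monomial m g = monomial 0 (algebraMap K _ (c - c')) := by
    rw [← hf, ← hg, ← algebraMap_eq, map_sub, sub_sub_sub_cancel_right]
  have h0 := congrArg (SkewMonoidAlgebra.coeff · (Multiplicative.ofAdd 0)) hfg
  rw [SkewMonoidAlgebra.coeff_sub, Finsupp.sub_apply, coeff_monomial_of_ne hn,
    coeff_monomial_of_ne hm, coeff_monomial_self, sub_zero, eq_comm,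
    map_eq_zero_iff _ (algebraMap K (CoeffRing q s)).injective] at h0
  exact absurd h0 hne

include hκ hc hqs in
theorem exists_t_eq_smul : ∃ μ : K, T.t = monomial 0 (μ • CoeffRing.t) := by
  obtain ⟨τ, hτ⟩ := exists_t_eq_monomial_zero hκ hc hqs T
  obtain ⟨m, hm⟩ : ∃ m : ℤ, T.d.coeff (Multiplicative.ofAdd m) ≠ 0 := by
    by_contra! h
    exact T.d_ne_zero hκ (ne_one_of_independent hqs) (SkewMonoidAlgebra.ext h)
  have h := congrArg (SkewMonoidAlgebra.coeff · (Multiplicative.ofAdd m)) T.d_t.eq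
  simp only [hτ, ← map_smul, coeff_mul_monomial_zero, coeff_monomial_zero_mul] at h
  rw [mul_comm] at h
  obtain ⟨μ, rfl⟩ := CoeffRing.exists_eq_smul_t hqs (mul_right_cancel₀ hm h)
  exact ⟨μ, hτ⟩

/-- A representation by monomials of the same degrees as in the tautological one. -/
structure IsMonomial (T : DownUpData q s κ c (SkewLaurent q s)) (l μ : Kˣ) : Prop where
  d : ∃ f ≠ 0, T.d = monomial 1 f
  u : ∃ f ≠ 0, T.u = monomial (-1) f
  x : T.x = monomial 0 ((l : K) • CoeffRing.x)
  t : T.t = monomial 0 ((μ : K) • CoeffRing.t)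

theorem IsMonomial.d_ne_zero {T : DownUpData q s κ c (SkewLaurent q s)} {l μ : Kˣ}
    (hT : IsMonomial T l μ) : T.d ≠ 0 := by
  obtain ⟨f, hf, hd⟩ := hT.d
  rwa [hd, Ne, monomial_eq_zero]

theorem IsMonomial.u_ne_zero {T : DownUpData q s κ c (SkewLaurent q s)} {l μ : Kˣ}
    (hT : IsMonomial T l μ) : T.u ≠ 0 := by
  obtain ⟨f, hf, hu⟩ := hT.u
  rwa [hu, Ne, monomial_eq_zero]

theorem scale_eq_of_semiconjBy {n : ℤ} {f g h : CoeffRing q s} (hf : f ≠ 0)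
    (H : SemiconjBy (monomial n f) (monomial 0 g) (monomial 0 h)) :
    scale (q ^ n) (s ^ n) g = h := by
  rw [SemiconjBy, monomial_mul_monomial, monomial_zero_mul, add_zero, mul_comm f] at H
  exact mul_right_cancel₀ hf (monomial_injective _ H)

theorem zpow_eq_of_semiconjBy {μ k : Kˣ} {n : ℤ} {f : CoeffRing q s} (hf : f ≠ 0)
    (H : SemiconjBy (monomial n f) (monomial 0 ((μ : K) • CoeffRing.t))
      (monomial 0 ((k : K) • (μ : K) • CoeffRing.t))) : q ^ n = k := by
  have h := scale_eq_of_semiconjBy hf H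
  rw [map_smul, CoeffRing.scale_t, smul_comm] at h
  exact Units.ext (smul_left_injective K CoeffRing.t_ne_zero
    (smul_right_injective (CoeffRing q s) μ.ne_zero
      ((smul_comm _ _ _).trans (h.trans (smul_comm _ _ _)))))

include hκ hqs in
theorem exists_isMonomial {μ : Kˣ} (ht : T.t = monomial 0 ((μ : K) • CoeffRing.t)) :
    ∃ l, IsMonomial T l μ := by
  have hud : T.u * T.d ≠ 0 := mul_ne_zero (T.u_ne_zero hκ (ne_one_of_independent hqs))
    (T.d_ne_zero hκ (ne_one_of_independent hqs))
  obtain ⟨n, h, hx⟩ := exists_eq_monomial_of_isUnit T.isUnit_x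
  have hh : h ≠ 0 := fun e => T.isUnit_x.ne_zero (by rw [hx, e, map_zero])
  obtain rfl : n = 0 := by
    have : SemiconjBy (monomial n h) (monomial 0 ((μ : K) • CoeffRing.t))
        (monomial 0 (((1 : Kˣ) : K) • (μ : K) • CoeffRing.t)) := by
      rw [Units.val_one, one_smul, ← ht, ← hx]
      exact T.x_t
    exact (hqs n 0 (by rw [zpow_zero, mul_one, zpow_eq_of_semiconjBy hh this])).1
  obtain ⟨k, hk⟩ : ∃ k, T.u * T.d = monomial 0 k := by
    refine ⟨κ • (h * ((μ : K) • CoeffRing.t - 1)), ?_⟩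
    rw [T.u_mul_d, hx, ht, ← monomial_zero_one, ← map_sub, monomial_zero_mul, ← map_smul]
  rw [hk, Ne, monomial_eq_zero] at hud
  obtain ⟨⟨m', g, hu⟩, m, f, hd⟩ := exists_eq_monomial_of_mul_eq hud hk
  have hf : f ≠ 0 := by
    rintro rfl
    exact T.d_ne_zero hκ (ne_one_of_independent hqs) (hd.trans (map_zero _))
  have hg : g ≠ 0 := by
    rintro rfl
    exact T.u_ne_zero hκ (ne_one_of_independent hqs) (hu.trans (map_zero _))
  rw [hu, hd, monomial_mul_monomial] at hk
  obtain rfl : m = 1 := by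
    have := T.d_t
    rw [hd, ht, ← map_smul] at this
    have := zpow_eq_of_semiconjBy hf this
    have := (hqs (m - 1) 0 (by rw [zpow_zero, mul_one, zpow_sub_one, this, mul_inv_cancel])).1
    omega
  obtain rfl : m' = -1 := eq_neg_of_add_eq_zero_left (eq_of_monomial_eq hud hk.symm).symm
  obtain ⟨l, rfl⟩ := CoeffRing.exists_eq_smul_x hqs <| by
    have := T.d_x
    rw [hd, hx, ← map_smul] at this
    simpa only [zpow_one] using scale_eq_of_semiconjBy hf this
  exact ⟨Units.mk0 l (left_ne_zero_of_smul hh), ⟨f, hf, hd⟩, ⟨g, hg, hu⟩, hx, ht⟩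

end SkewLaurent
end SkewLaurent

namespace DownUpData

open LaurentPolynomial

variable {K : Type u} [Field K] {q s : Kˣ} {κ c : K} {B : Type*} [Ring B] [Algebra K B]
  (R : DownUpData q s κ c B)

/-- The commutative subalgebra generated by `x`, `t` and the inverses of `x` and of all
invertible `a - t`. -/
def base : Subalgebra K B :=
  Algebra.adjoin K ({R.x, Ring.inverse R.x, R.t} ∪ resolvent R.t '' resolventSet K R.t)

theorem x_mem_base : R.x ∈ R.base := Algebra.subset_adjoin (by simp)

theorem inverse_x_mem_base : Ring.inverse R.x ∈ R.base := Algebra.subset_adjoin (by simp)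

theorem t_mem_base : R.t ∈ R.base := Algebra.subset_adjoin (by simp)

theorem resolvent_mem_base {a : K} (ha : a ∈ resolventSet K R.t) : resolvent R.t a ∈ R.base :=
  Algebra.subset_adjoin (Or.inr ⟨a, ha, rfl⟩)

theorem base_induction {p : (a : B) → a ∈ R.base → Prop} (x : p R.x R.x_mem_base)
    (x_inv : p (Ring.inverse R.x) R.inverse_x_mem_base) (t : p R.t R.t_mem_base)
    (resolvent : ∀ a (h : a ∈ resolventSet K R.t), p (resolvent R.t a) (R.resolvent_mem_base h))
    (algebraMap : ∀ k, p (algebraMap K B k) (R.base.algebraMap_mem k))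
    (add : ∀ a b ha hb, p a ha → p b hb → p (a + b) (R.base.add_mem ha hb))
    (mul : ∀ a b ha hb, p a ha → p b hb → p (a * b) (R.base.mul_mem ha hb))
    {a : B} (ha : a ∈ R.base) : p a ha := by
  induction ha using Algebra.adjoin_induction with
  | mem a ha =>
    obtain (rfl | rfl | rfl) | ⟨k, hk, rfl⟩ := ha
    exacts [x, x_inv, t, resolvent k hk]
  | algebraMap k => exact algebraMap k
  | add a b ha hb iha ihb => exact add a b ha hb iha ihb
  | mul a b ha hb iha ihb => exact mul a b ha hb iha ihb

theorem commute_inverse_right {a b : B} (h : Commute a b) : Commute a (Ring.inverse b) := by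
  by_cases hb : IsUnit b
  · obtain ⟨b, rfl⟩ := hb
    rw [Ring.inverse_unit]
    exact h.units_inv_right
  · rw [Ring.inverse_non_unit _ hb]
    exact Commute.zero_right a

theorem commute_of_mem_base_of_commute {a b : B} (ha : a ∈ R.base) (hx : Commute b R.x)
    (ht : Commute b R.t) : Commute b a :=
  R.base_induction (p := fun a _ => Commute b a) hx (commute_inverse_right hx) ht
    (fun _ _ => commute_inverse_right ((Algebra.commute_algebraMap_right _ _).sub_right ht))
    (fun _ => Algebra.commute_algebraMap_right _ _) (fun _ _ _ _ => Commute.add_right)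
    (fun _ _ _ _ => Commute.mul_right) ha

theorem commute_of_mem_base {a b : B} (ha : a ∈ R.base) (hb : b ∈ R.base) : Commute a b :=
  R.commute_of_mem_base_of_commute hb
    (R.commute_of_mem_base_of_commute ha (Commute.refl _) R.x_t).symm
    (R.commute_of_mem_base_of_commute ha R.x_t.symm (Commute.refl _)).symm

section Shift

variable (hA : ∀ a ∈ resolventSet K R.t, (q : K) * a ∈ resolventSet K R.t)
include hA

theorem exists_semiconjBy_of_mem_base {a : B} (ha : a ∈ R.base) :
    ∃ a' ∈ R.base, SemiconjBy R.d a' a ∧ SemiconjBy R.u a a' := by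
  induction ha using R.base_induction with
  | x =>
    refine ⟨_, R.base.smul_mem R.x_mem_base ((s⁻¹ : Kˣ) : K), ?_, ?_⟩
    · simpa [smul_smul] using R.d_x.smul_right ((s⁻¹ : Kˣ) : K)
    · simpa [smul_smul] using R.u_x.smul_right ((s⁻¹ : Kˣ) : K)
  | x_inv =>
    obtain ⟨X, hX⟩ := R.isUnit_x
    refine ⟨_, R.base.smul_mem R.inverse_x_mem_base (s : K), ?_, ?_⟩
    · have h : SemiconjBy R.d (X : B) ((s • X : Bˣ) : B) := by
        simpa [hX, Units.smul_def] using R.d_x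
      simpa [← hX, smul_inv, Units.smul_def, smul_smul] using h.units_inv_right.smul_right (s : K)
    · have h : SemiconjBy R.u ((s • X : Bˣ) : B) (X : B) := by
        simpa [hX, Units.smul_def] using R.u_x
      simpa [← hX, smul_inv, Units.smul_def, smul_smul] using h.units_inv_right.smul_right (s : K)
  | t =>
    refine ⟨_, R.base.smul_mem R.t_mem_base ((q⁻¹ : Kˣ) : K), ?_, ?_⟩
    · simpa [smul_smul] using R.d_t.smul_right ((q⁻¹ : Kˣ) : K)
    · simpa [smul_smul] using R.u_t.smul_right ((q⁻¹ : Kˣ) : K)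
  | resolvent a ha =>
    exact ⟨_, R.base.smul_mem (R.resolvent_mem_base (hA a ha)) _, R.d_resolvent ha (hA a ha),
      R.u_resolvent ha (hA a ha)⟩
  | algebraMap k =>
    exact ⟨_, R.base.algebraMap_mem k, Algebra.commute_algebraMap_right _ _,
      Algebra.commute_algebraMap_right _ _⟩
  | add a b _ _ ha hb =>
    obtain ⟨a', ha', hda, hua⟩ := ha
    obtain ⟨b', hb', hdb, hub⟩ := hb
    exact ⟨_, R.base.add_mem ha' hb', hda.add_right hdb, hua.add_right hub⟩
  | mul a b _ _ ha hb =>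
    obtain ⟨a', ha', hda, hua⟩ := ha
    obtain ⟨b', hb', hdb, hub⟩ := hb
    exact ⟨_, R.base.mul_mem ha' hb', hda.mul_right hdb, hua.mul_right hub⟩

theorem exists_semiconjBy_pow_of_mem_base (n : ℕ) {a : B} (ha : a ∈ R.base) :
    ∃ a' ∈ R.base, SemiconjBy (R.d ^ n) a' a ∧ SemiconjBy (R.u ^ n) a a' := by
  induction n with
  | zero => exact ⟨a, ha, by simp, by simp⟩
  | succ n ih =>
    obtain ⟨a', ha', hd, hu⟩ := ih
    obtain ⟨b, hb, hd', hu'⟩ := R.exists_semiconjBy_of_mem_base hA ha'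
    exact ⟨b, hb, by rw [pow_succ]; exact hd.mul_left hd', by rw [pow_succ']; exact hu'.mul_left hu⟩

theorem u_pow_mul_d_pow_mem_base (n : ℕ) : R.u ^ n * R.d ^ n ∈ R.base := by
  induction n with
  | zero => simp
  | succ n ih =>
    obtain ⟨a, ha, -, hu⟩ := R.exists_semiconjBy_of_mem_base hA ih
    have hud : R.u * R.d ∈ R.base := by
      rw [R.u_mul_d]
      exact R.base.smul_mem (R.base.mul_mem R.x_mem_base (R.base.sub_mem R.t_mem_base
        R.base.one_mem)) _
    rw [pow_succ', pow_succ, mul_assoc, ← mul_assoc (R.u ^ n), ← mul_assoc, hu.eq, mul_assoc]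
    exact R.base.mul_mem ha hud

end Shift

/-- The span of the elements `dⁱ a uʲ` of degree `i - j = n`, with `a` in the base. -/
def part (n : ℤ) : Submodule K B :=
  Submodule.span K {b | ∃ i j : ℕ, ∃ a ∈ R.base, (i : ℤ) - j = n ∧ b = R.d ^ i * a * R.u ^ j}

theorem mul_mem_part_of_generators {m n : ℤ} {g : B}
    (h : ∀ i j : ℕ, (i : ℤ) - j = n → ∀ a ∈ R.base, g * (R.d ^ i * a * R.u ^ j) ∈ R.part m)
    {b : B} (hb : b ∈ R.part n) : g * b ∈ R.part m := by
  have : R.part n ≤ (R.part m).comap (LinearMap.mulLeft K g) :=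
    Submodule.span_le.2 <| by
      rintro _ ⟨i, j, a, ha, hij, rfl⟩
      exact h i j hij a ha
  exact this hb

theorem mem_part {a : B} (ha : a ∈ R.base) {i j : ℕ} {n : ℤ} (hn : (i : ℤ) - j = n) :
    R.d ^ i * a * R.u ^ j ∈ R.part n :=
  Submodule.subset_span ⟨i, j, a, ha, hn, rfl⟩

theorem d_mul_mem_part {n : ℤ} {b : B} (hb : b ∈ R.part n) : R.d * b ∈ R.part (n + 1) := by
  refine R.mul_mem_part_of_generators (fun i j hij a ha => ?_) hb
  rw [← mul_assoc, ← mul_assoc, ← pow_succ']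
  exact R.mem_part ha (by omega)

section Shift

variable (hA : ∀ a ∈ resolventSet K R.t, (q : K) * a ∈ resolventSet K R.t)
include hA

theorem base_mul_mem_part {n : ℤ} {a b : B} (ha : a ∈ R.base) (hb : b ∈ R.part n) :
    a * b ∈ R.part n := by
  refine R.mul_mem_part_of_generators (fun i j hij c hc => ?_) hb
  obtain ⟨a', ha', hd, -⟩ := R.exists_semiconjBy_pow_of_mem_base hA i ha
  rw [← mul_assoc, ← mul_assoc, ← hd.eq, mul_assoc _ a' c]
  exact R.mem_part (R.base.mul_mem ha' hc) hij

theorem u_mul_mem_part {n : ℤ} {b : B} (hb : b ∈ R.part n) : R.u * b ∈ R.part (n - 1) := by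
  refine R.mul_mem_part_of_generators (fun i j hij a ha => ?_) hb
  cases i with
  | zero =>
    obtain ⟨a', ha', -, hu⟩ := R.exists_semiconjBy_of_mem_base hA ha
    rw [pow_zero, one_mul, ← mul_assoc, hu.eq, mul_assoc, ← pow_succ', ← one_mul a',
      ← pow_zero R.d]
    exact R.mem_part ha' (by omega)
  | succ i =>
    have hud := R.u_pow_mul_d_pow_mem_base hA 1
    rw [pow_one, pow_one] at hud
    rw [pow_succ', mul_assoc, mul_assoc, ← mul_assoc R.u, ← mul_assoc (R.d ^ i)]
    exact R.base_mul_mem_part hA hud (R.mem_part ha (by omega))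

variable {R} in
theorem IsUniversal.iSup_part (hR : R.IsUniversal) : ⨆ n, R.part n = ⊤ := by
  have mul_mem {m : ℤ → ℤ} {g : B} (hg : ∀ n, ∀ b ∈ R.part n, g * b ∈ R.part (m n)) {b : B}
      (hb : b ∈ ⨆ n, R.part n) : g * b ∈ ⨆ n, R.part n := by
    have : ⨆ n, R.part n ≤ (⨆ n, R.part n).comap (LinearMap.mulLeft K g) :=
      iSup_le fun n b hb => Submodule.mem_iSup_of_mem _ (hg n b hb)
    exact this hb
  have stable {a : B} (ha : a ∈ (⊤ : Subalgebra K B)) :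
      ∀ b ∈ ⨆ n, R.part n, a * b ∈ ⨆ n, R.part n := by
    rw [← hR.adjoin_eq_top] at ha
    have base {a : B} (ha : a ∈ R.base) {b : B} (hb : b ∈ ⨆ n, R.part n) :=
      mul_mem (fun n b hb => R.base_mul_mem_part hA ha hb) hb
    induction ha using Algebra.adjoin_induction with
    | mem a ha =>
      intro b hb
      obtain rfl | rfl | rfl | rfl | rfl | rfl := ha
      · exact mul_mem (fun n b hb => R.d_mul_mem_part hb) hb
      · exact mul_mem (fun n b hb => R.u_mul_mem_part hA hb) hb
      · exact base R.x_mem_base hb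
      · exact base R.inverse_x_mem_base hb
      · exact base R.t_mem_base hb
      · exact base (R.resolvent_mem_base R.c_mem) hb
    | algebraMap k => exact fun b hb => base (R.base.algebraMap_mem k) hb
    | add a b _ _ ha hb => exact fun c hc => add_mul a b c ▸ add_mem (ha c hc) (hb c hc)
    | mul a b _ _ ha hb => exact fun c hc => mul_assoc a b c ▸ ha _ (hb c hc)
  have one_mem : (1 : B) ∈ ⨆ n, R.part n := Submodule.mem_iSup_of_mem 0 <| by
    simpa using R.mem_part R.base.one_mem (i := 0) (j := 0) rfl
  exact eq_top_iff.2 fun a _ => mul_one a ▸ stable Algebra.mem_top 1 one_mem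

variable {R} in
@[elab_as_elim]
theorem IsUniversal.induction (hR : R.IsUniversal) {p : B → Prop}
    (d_pow_mul_u_pow : ∀ i j : ℕ, ∀ a ∈ R.base, p (R.d ^ i * a * R.u ^ j))
    (add : ∀ a b, p a → p b → p (a + b)) (smul : ∀ (k : K) a, p a → p (k • a)) (b : B) : p b := by
  have zero : p 0 := by simpa using d_pow_mul_u_pow 0 0 0 R.base.zero_mem
  have hb : b ∈ ⨆ n, R.part n := hR.iSup_part hA ▸ Submodule.mem_top
  refine Submodule.iSup_induction _ (motive := p) hb (fun n b hb => ?_) zero add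
  induction hb using Submodule.span_induction with
  | mem b hb =>
    obtain ⟨i, j, a, ha, -, rfl⟩ := hb
    exact d_pow_mul_u_pow i j a ha
  | zero => exact zero
  | add a b _ _ ha hb => exact add a b ha hb
  | smul k b _ hb => exact smul k b hb

end Shift

end DownUpData

namespace SkewLaurent

open CoeffRing (scale)

variable {K : Type u} [Field K] {q s : Kˣ} {B : Type*} [AddCommGroup B] [Module K B]

/-- The homogeneous elements of degree `n` in `d`. -/
def homogeneous (q s : Kˣ) (n : ℤ) : Submodule K (SkewLaurent q s) := LinearMap.range (monomial n)

theorem mem_homogeneous_iff {n : ℤ} {a : SkewLaurent q s} :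
    a ∈ homogeneous q s n ↔ ∃ f, monomial n f = a := Iff.rfl

theorem monomial_mem (n : ℤ) (f : CoeffRing q s) : monomial n f ∈ homogeneous q s n := ⟨f, rfl⟩

/-- The coefficient of `dⁿ`. -/
def component (n : ℤ) : SkewLaurent q s →ₗ[K] CoeffRing q s where
  toFun a := a.coeff (Multiplicative.ofAdd n)
  map_add' a b := by rw [SkewMonoidAlgebra.coeff_add, Finsupp.add_apply]
  map_smul' k a := by rw [SkewMonoidAlgebra.coeff_smul, Finsupp.smul_apply, RingHom.id_apply]

theorem component_monomial (n : ℤ) (f : CoeffRing q s) : component n (monomial n f) = f :=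
  coeff_monomial_self n f

theorem component_monomial_of_ne {m n : ℤ} (h : m ≠ n) (f : CoeffRing q s) :
    component n (monomial m f) = 0 :=
  coeff_monomial_of_ne h f

instance : SetLike.GradedMonoid (homogeneous q s) where
  one_mem := ⟨1, monomial_zero_one⟩
  mul_mem := by
    rintro m n _ _ ⟨f, rfl⟩ ⟨g, rfl⟩
    exact ⟨_, (monomial_mul_monomial m n f g).symm⟩

theorem mem_homogeneous_zero_of_commute (hqs : ∀ m n : ℤ, q ^ m * s ^ n = 1 → m = 0 ∧ n = 0)
    {a : SkewLaurent q s} (h : Commute a (monomial 0 CoeffRing.x)) : a ∈ homogeneous q s 0 := by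
  refine ⟨a.coeff (Multiplicative.ofAdd 0), SkewMonoidAlgebra.ext fun n => ?_⟩
  obtain rfl | hn := eq_or_ne n (Multiplicative.ofAdd 0)
  · exact coeff_monomial_self 0 _
  rw [← ofAdd_toAdd n] at hn ⊢
  rw [coeff_monomial_of_ne fun e => hn (congrArg _ e.symm)]
  by_contra ha
  have hx := congrArg (SkewMonoidAlgebra.coeff · (Multiplicative.ofAdd n.toAdd)) h.eq
  simp only [coeff_mul_monomial_zero, coeff_monomial_zero_mul, CoeffRing.scale_x] at hx
  rw [mul_comm] at hx
  have hs : ((s ^ n.toAdd : Kˣ) : K) = 1 := by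
    rw [← sub_eq_zero]
    refine (smul_eq_zero_iff_left (CoeffRing.isUnit_x (q := q) (s := s)).ne_zero).1 ?_
    rw [sub_smul, one_smul, mul_right_cancel₀ (Ne.symm ha) hx, sub_self]
  have hs : s ^ n.toAdd = 1 := Units.ext hs
  exact hn (congrArg _ (hqs 0 n.toAdd (by rw [zpow_zero, one_mul, hs])).2)

theorem exists_components {ι : Type*} {N : ι → Submodule K B} {deg : ι → ℤ}
    (hdeg : Function.Injective deg) {ψ : B →ₗ[K] SkewLaurent q s}
    (hψ : ∀ i, ∀ b ∈ N i, ψ b ∈ homogeneous q s (deg i)) {b : B} (hb : b ∈ ⨆ i, N i) :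
    ∃ f : ι →₀ B, (∀ i, f i ∈ N i) ∧ (f.sum fun _ a => a) = b ∧
      ∀ i, ψ (f i) = monomial (deg i) (component (deg i) (ψ b)) := by
  obtain ⟨f, hf, rfl⟩ := (Submodule.mem_iSup_iff_exists_finsupp N b).1 hb
  refine ⟨f, hf, rfl, fun i => ?_⟩
  choose g hg using fun i => mem_homogeneous_iff.1 (hψ i (f i) (hf i))
  have h : component (deg i) (ψ (f.sum fun _ a => a)) = component (deg i) (ψ (f i)) := by
    rw [Finsupp.sum, map_sum, map_sum]
    refine Finset.sum_eq_single i (fun j _ hj => ?_) fun hi => ?_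
    · rw [← hg, component_monomial_of_ne (hdeg.ne hj)]
    · rw [Finsupp.notMem_support_iff.1 hi, map_zero, map_zero]
  rw [h, ← hg, component_monomial]

theorem exists_mem_map_eq {N : ℤ → Submodule K B} {ψ : B →ₗ[K] SkewLaurent q s}
    (hψ : ∀ n, ∀ b ∈ N n, ψ b ∈ homogeneous q s n) {b : B} (hb : b ∈ ⨆ n, N n) {n : ℤ}
    (hn : ψ b ∈ homogeneous q s n) : ∃ b' ∈ N n, ψ b' = ψ b := by
  obtain ⟨f, hf, -, hfb⟩ := exists_components Function.injective_id hψ hb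
  obtain ⟨g, hg⟩ := mem_homogeneous_iff.1 hn
  exact ⟨f n, hf n, by rw [hfb, ← hg, id, component_monomial]⟩

theorem eq_zero_of_mem_iSup {ι : Type*} {N : ι → Submodule K B} {deg : ι → ℤ}
    (hdeg : Function.Injective deg) {ψ : B →ₗ[K] SkewLaurent q s}
    (hψ : ∀ i, ∀ b ∈ N i, ψ b ∈ homogeneous q s (deg i)) (h : ∀ i, ∀ b ∈ N i, ψ b = 0 → b = 0)
    {b : B} (hb : b ∈ ⨆ i, N i) (hb0 : ψ b = 0) : b = 0 := by
  obtain ⟨f, hf, rfl, hfb⟩ := exists_components hdeg hψ hb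
  refine Finset.sum_eq_zero fun i _ => h i _ (hf i) ?_
  rw [hfb, hb0, map_zero, map_zero]

end SkewLaurent

section LaurentPolynomial

open LaurentPolynomial

theorem laurentPolynomial_algHom_ext {K B : Type*} [CommRing K] [Semiring B] [Algebra K B]
    {f g : K[T;T⁻¹] →ₐ[K] B} (h : f (T 1) = g (T 1)) : f = g :=
  AddMonoidAlgebra.algHom_ext' (MonoidHom.ext_mint h) (Subsingleton.elim _ _)

/-- The evaluation of a Laurent polynomial at a unit. -/
def laurentEval {K B : Type*} [CommRing K] [Semiring B] [Algebra K B] (X : Bˣ) :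
    K[T;T⁻¹] →ₐ[K] B :=
  AddMonoidAlgebra.lift K B ℤ ((Units.coeHom B).comp (zpowersHom Bˣ X))

theorem laurentEval_T {K B : Type*} [CommRing K] [Semiring B] [Algebra K B] (X : Bˣ) (n : ℤ) :
    laurentEval X (T n : K[T;T⁻¹]) = ((X ^ n : Bˣ) : B) := by
  rw [laurentEval, T, AddMonoidAlgebra.lift_single, one_smul]
  rfl

end LaurentPolynomial

namespace DownUpData

section Evaluation

open LaurentPolynomial SkewLaurent

variable {K : Type u} [Field K] {q s : Kˣ} {κ c : K} {B : Type*} [Ring B] [Algebra K B]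
  (R : DownUpData q s κ c B)

/-- The evaluation of Laurent polynomials at `x`. -/
def evalX : K[T;T⁻¹] →ₐ[K] B := laurentEval R.isUnit_x.unit

theorem evalX_T_one : R.evalX (T 1) = R.x := by
  rw [evalX, laurentEval_T, zpow_one, IsUnit.unit_spec]

theorem evalX_T_neg_one : R.evalX (T (-1)) = Ring.inverse R.x := by
  rw [evalX, laurentEval_T, zpow_neg_one, ← Ring.inverse_unit, IsUnit.unit_spec]

theorem evalX_mem_base (f : K[T;T⁻¹]) : R.evalX f ∈ R.base := by
  have T_mem (n : ℤ) : R.evalX (T n) ∈ R.base := by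
    obtain ⟨n, rfl | rfl⟩ := n.eq_nat_or_neg
    · rw [← mul_one (n : ℤ), ← T_pow, map_pow, evalX_T_one]
      exact R.base.pow_mem R.x_mem_base n
    · rw [← mul_neg_one (n : ℤ), ← T_pow, map_pow, evalX_T_neg_one]
      exact R.base.pow_mem R.inverse_x_mem_base n
  induction f using LaurentPolynomial.induction_on' with
  | add f g hf hg => exact map_add R.evalX f g ▸ R.base.add_mem hf hg
  | C_mul_T n a =>
    rw [← smul_eq_C_mul, map_smul]
    exact R.base.smul_mem (T_mem n) a

theorem commute_evalX_t (f : K[T;T⁻¹]) : Commute (R.evalX f) R.t :=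
  (R.commute_of_mem_base (R.evalX_mem_base f) R.t_mem_base)

/-- The evaluation of polynomials in `x`, `x⁻¹` and `t`. -/
def evalXT : Polynomial K[T;T⁻¹] →ₐ[K] B := Polynomial.eval₂AlgHom R.evalX R.t R.commute_evalX_t

theorem evalXT_C_T (n : ℤ) : R.evalXT (Polynomial.C (T n)) = R.evalX (T n) :=
  Polynomial.eval₂_C _ _

theorem evalXT_X : R.evalXT Polynomial.X = R.t := Polynomial.eval₂_X _ _

theorem commute_evalXT {a : B} (ha : a ∈ R.base) (p : Polynomial K[T;T⁻¹]) :
    Commute (R.evalXT p) a := by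
  refine R.commute_of_mem_base_of_commute ha ?_ ?_
  · rw [← R.evalX_T_one, ← R.evalXT_C_T]
    exact (Commute.all _ _).map R.evalXT
  · rw [← R.evalXT_X]
    exact (Commute.all _ _).map R.evalXT

theorem exists_isUnit_evalXT_mul_eq {a : B} (ha : a ∈ R.base) :
    ∃ δ p, IsUnit (R.evalXT δ) ∧ R.evalXT δ * a = R.evalXT p := by
  have of_eq {a : B} (p) (h : R.evalXT p = a) :
      ∃ δ p, IsUnit (R.evalXT δ) ∧ R.evalXT δ * a = R.evalXT p :=
    ⟨1, p, by rw [map_one]; exact isUnit_one, by rw [map_one, one_mul, h]⟩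
  induction ha using R.base_induction with
  | x => exact of_eq _ ((R.evalXT_C_T 1).trans R.evalX_T_one)
  | x_inv => exact of_eq _ ((R.evalXT_C_T (-1)).trans R.evalX_T_neg_one)
  | t => exact of_eq _ R.evalXT_X
  | resolvent a ha =>
    have h : R.evalXT (algebraMap K _ a - Polynomial.X) = algebraMap K B a - R.t := by
      rw [map_sub, AlgHom.commutes, R.evalXT_X]
    exact ⟨_, 1, by rwa [h], by rw [h, resolvent, Ring.mul_inverse_cancel _ ha, map_one]⟩
  | algebraMap k => exact of_eq _ (R.evalXT.commutes k)
  | add a b ha _ iha ihb =>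
    obtain ⟨δ, p, hδ, hp⟩ := iha
    obtain ⟨ε, r, hε, hr⟩ := ihb
    refine ⟨δ * ε, p * ε + δ * r, map_mul R.evalXT δ ε ▸ hδ.mul hε, ?_⟩
    rw [map_mul, map_add, map_mul, map_mul, ← hp, ← hr, mul_add, mul_assoc _ _ a,
      (R.commute_evalXT ha ε).eq, mul_assoc, mul_assoc]
  | mul a b ha _ iha ihb =>
    obtain ⟨δ, p, hδ, hp⟩ := iha
    obtain ⟨ε, r, hε, hr⟩ := ihb
    refine ⟨δ * ε, p * r, map_mul R.evalXT δ ε ▸ hδ.mul hε, ?_⟩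
    rw [map_mul, map_mul, ← hp, ← hr, (R.commute_evalXT ha ε).mul_mul_mul_comm]

variable {R} {ψ : B →ₐ[K] SkewLaurent q s} {l μ : Kˣ} (hψ : IsMonomial (R.map ψ) l μ)
include hψ

theorem map_evalXT (p : Polynomial K[T;T⁻¹]) :
    ψ (R.evalXT p) = monomial 0 (CoeffRing.scale μ l (CoeffRing.ofPolynomial p)) := by
  have h : ψ.comp R.evalXT = (AlgHom.ofLinearMap (monomial 0) monomial_zero_one
      fun f g => (monomial_zero_mul 0 f g).symm).comp
        ((CoeffRing.scale μ l).comp CoeffRing.ofPolynomial) := by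
    refine Polynomial.algHom_ext' (laurentPolynomial_algHom_ext ?_) ?_
    · change ψ (R.evalXT (Polynomial.C (T 1))) =
        monomial 0 (CoeffRing.scale μ l (CoeffRing.ofPolynomial (Polynomial.C (T 1))))
      rw [R.evalXT_C_T, R.evalX_T_one, CoeffRing.ofPolynomial_C_T, CoeffRing.scale_x, ← hψ.x, map_x]
    · change ψ (R.evalXT Polynomial.X) =
        monomial 0 (CoeffRing.scale μ l (CoeffRing.ofPolynomial Polynomial.X))
      rw [R.evalXT_X, CoeffRing.ofPolynomial_X, CoeffRing.scale_t, ← hψ.t, map_t]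
  exact AlgHom.congr_fun h p

theorem eq_zero_of_mem_base {a : B} (ha : a ∈ R.base) (h : ψ a = 0) : a = 0 := by
  obtain ⟨δ, p, hδ, hp⟩ := R.exists_isUnit_evalXT_mul_eq ha
  have hp0 : p = 0 := by
    have hψp := map_evalXT hψ p
    rw [← hp, map_mul, h, mul_zero, eq_comm, monomial_eq_zero,
      map_eq_zero_iff _ (CoeffRing.scale_injective μ l),
      map_eq_zero_iff _ CoeffRing.ofPolynomial_injective] at hψp
    exact hψp
  rwa [hp0, map_zero, hδ.mul_right_eq_zero] at hp

section Homogeneous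

variable (hqs : ∀ m n : ℤ, q ^ m * s ^ n = 1 → m = 0 ∧ n = 0)
include hqs

theorem map_mem_homogeneous_of_mem_base {a : B} (ha : a ∈ R.base) : ψ a ∈ homogeneous q s 0 := by
  refine mem_homogeneous_zero_of_commute hqs ?_
  have h := (R.commute_of_mem_base ha R.x_mem_base).map ψ
  rw [← map_x, hψ.x, map_smul] at h
  simpa using h.smul_right ((l⁻¹ : Kˣ) : K)

theorem map_mem_homogeneous {i j : ℕ} {n : ℤ} (hn : (i : ℤ) - j = n) {a : B} (ha : a ∈ R.base) :
    ψ (R.d ^ i * a * R.u ^ j) ∈ homogeneous q s n := by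
  obtain ⟨f, -, hd⟩ := hψ.d
  obtain ⟨g, -, hu⟩ := hψ.u
  have hi := SetLike.pow_mem_graded i (hd ▸ monomial_mem 1 f)
  have hj := SetLike.pow_mem_graded j (hu ▸ monomial_mem (-1) g)
  have h := SetLike.mul_mem_graded
    (SetLike.mul_mem_graded hi (map_mem_homogeneous_of_mem_base hψ hqs ha)) hj
  rw [map_mul, map_mul, map_pow, map_pow, ← hn]
  simpa [sub_eq_add_neg] using h

theorem map_mem_homogeneous_of_mem_part {n : ℤ} {b : B} (hb : b ∈ R.part n) :
    ψ b ∈ homogeneous q s n := by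
  have : R.part n ≤ (homogeneous q s n).comap ψ.toLinearMap := Submodule.span_le.2 <| by
    rintro _ ⟨i, j, a, ha, hij, rfl⟩
    exact map_mem_homogeneous hψ hqs hij ha
  exact this hb

end Homogeneous

end Evaluation

section Torsion

open SkewLaurent

variable {K : Type u} [Field K] {q s : Kˣ} {κ c : K} {B : Type*} [Ring B] [Algebra K B]
  (R : DownUpData q s κ c B)

/-- Elements annihilated by high powers of `u` on the left and of `d` on the right. They form the
kernel of every monomial representation in `SkewLaurent q s`. -/
def IsTorsion (b : B) : Prop := ∃ n : ℕ, R.u ^ n * b = 0 ∧ b * R.d ^ n = 0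

/-- The submodule `dᵏ base`. -/
def dPowBase (k : ℕ) : Submodule K B := R.base.toSubmodule.map (LinearMap.mulLeft K (R.d ^ k))

/-- The submodule `base uᵏ`. -/
def baseUPow (k : ℕ) : Submodule K B := R.base.toSubmodule.map (LinearMap.mulRight K (R.u ^ k))

variable {R} (hR : R.IsUniversal)
  (hA : ∀ a ∈ resolventSet K R.t, (q : K) * a ∈ resolventSet K R.t)
include hR hA

theorem exists_mul_d_pow_mem (b : B) :
    ∃ N : ℕ, ∀ n ≥ N, b * R.d ^ n ∈ ⨆ k, R.dPowBase k := by
  induction b using hR.induction hA with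
  | d_pow_mul_u_pow i j a ha =>
    refine ⟨j, fun n hn => Submodule.mem_iSup_of_mem (i + (n - j)) ?_⟩
    obtain ⟨a', ha', h, -⟩ := R.exists_semiconjBy_pow_of_mem_base hA (n - j)
      (R.base.mul_mem ha (R.u_pow_mul_d_pow_mem_base hA j))
    refine ⟨a', ha', ?_⟩
    rw [LinearMap.mulLeft_apply, pow_add, mul_assoc, h.eq, ← Nat.add_sub_cancel' hn, pow_add,
      Nat.add_sub_cancel_left]
    simp only [mul_assoc]
  | add a b iha ihb =>
    obtain ⟨M, hM⟩ := iha
    obtain ⟨N, hN⟩ := ihb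
    refine ⟨max M N, fun n hn => ?_⟩
    rw [add_mul]
    exact add_mem (hM n (le_of_max_le_left hn)) (hN n (le_of_max_le_right hn))
  | smul k a iha =>
    obtain ⟨N, hN⟩ := iha
    refine ⟨N, fun n hn => ?_⟩
    rw [smul_mul_assoc]
    exact Submodule.smul_mem _ k (hN n hn)

theorem exists_u_pow_mul_mem (b : B) :
    ∃ N : ℕ, ∀ n ≥ N, R.u ^ n * b ∈ ⨆ k, R.baseUPow k := by
  induction b using hR.induction hA with
  | d_pow_mul_u_pow i j a ha =>
    refine ⟨i, fun n hn => Submodule.mem_iSup_of_mem (n - i + j) ?_⟩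
    obtain ⟨a', ha', -, h⟩ := R.exists_semiconjBy_pow_of_mem_base hA (n - i)
      (R.base.mul_mem (R.u_pow_mul_d_pow_mem_base hA i) ha)
    refine ⟨a', ha', ?_⟩
    rw [LinearMap.mulRight_apply, pow_add, ← mul_assoc, ← h.eq, ← Nat.sub_add_cancel hn, pow_add,
      Nat.add_sub_cancel]
    simp only [mul_assoc]
  | add a b iha ihb =>
    obtain ⟨M, hM⟩ := iha
    obtain ⟨N, hN⟩ := ihb
    refine ⟨max M N, fun n hn => ?_⟩
    rw [mul_add]
    exact add_mem (hM n (le_of_max_le_left hn)) (hN n (le_of_max_le_right hn))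
  | smul k a iha =>
    obtain ⟨N, hN⟩ := iha
    refine ⟨N, fun n hn => ?_⟩
    rw [mul_smul_comm]
    exact Submodule.smul_mem _ k (hN n hn)

theorem map_eq_zero_iff_isTorsion (hqs : ∀ m n : ℤ, q ^ m * s ^ n = 1 → m = 0 ∧ n = 0)
    {ψ : B →ₐ[K] SkewLaurent q s} {l μ : Kˣ} (hψ : IsMonomial (R.map ψ) l μ) {b : B} :
    ψ b = 0 ↔ R.IsTorsion b := by
  have hd : ψ R.d ≠ 0 := hψ.d_ne_zero
  have hu : ψ R.u ≠ 0 := hψ.u_ne_zero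
  constructor
  · intro hb
    obtain ⟨M, hM⟩ := exists_mul_d_pow_mem hR hA b
    obtain ⟨N, hN⟩ := exists_u_pow_mul_mem hR hA b
    refine ⟨max M N, eq_zero_of_mem_iSup (ψ := ψ.toLinearMap) (deg := fun k : ℕ => (-k : ℤ))
      (neg_injective.comp Nat.cast_injective) ?_ ?_ (hN _ (le_max_right M N)) ?_,
      eq_zero_of_mem_iSup (ψ := ψ.toLinearMap) (deg := ((↑) : ℕ → ℤ)) Nat.cast_injective ?_ ?_
        (hM _ (le_max_left M N)) ?_⟩
    · rintro k _ ⟨a, ha, rfl⟩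
      simpa using map_mem_homogeneous hψ hqs (i := 0) (j := k) (by simp) ha
    · rintro k _ ⟨a, ha, rfl⟩ h
      have : ψ a = 0 := by simpa [hu] using h
      rw [eq_zero_of_mem_base hψ ha this, map_zero]
    · simp [hb]
    · rintro k _ ⟨a, ha, rfl⟩
      simpa using map_mem_homogeneous hψ hqs (i := k) (j := 0) (by simp) ha
    · rintro k _ ⟨a, ha, rfl⟩ h
      have : ψ a = 0 := by simpa [hd] using h
      rw [eq_zero_of_mem_base hψ ha this, map_zero]
    · simp [hb]
  · rintro ⟨n, hn, -⟩
    have := congrArg ψ hn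
    rw [map_mul, map_zero, map_pow] at this
    exact (mul_eq_zero.1 this).resolve_left (pow_ne_zero n hu)

end Torsion

end DownUpData

/-! ### The Fock representation -/

section Fock

open Module

variable {K : Type u} [Field K] {κ c : K} {F : Type*} [Field F] [Algebra K F]

/-- The operator `e_k ↦ w k • e_(g k)` on the space with basis `e_0, e_1, …`. -/
def weightedMap (g : ℕ → ℕ) (w : ℕ → F) : End F (ℕ →₀ F) :=
  Finsupp.linearCombination F fun k => Finsupp.single (g k) (w k)

theorem weightedMap_single (g : ℕ → ℕ) (w : ℕ → F) (k : ℕ) (a : F) :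
    weightedMap g w (Finsupp.single k a) = Finsupp.single (g k) (a * w k) := by
  rw [weightedMap, Finsupp.linearCombination_single, Finsupp.smul_single, smul_eq_mul]

theorem weightedMap_mul (g g' : ℕ → ℕ) (w w' : ℕ → F) :
    weightedMap g w * weightedMap g' w' = weightedMap (g ∘ g') fun k => w' k * w (g' k) :=
  Finsupp.lhom_ext fun k a => by simp only [End.mul_apply, weightedMap_single, mul_assoc,
    Function.comp_apply]

theorem semiconjBy_weightedMap {g : ℕ → ℕ} {w a b : ℕ → F} (h : ∀ k, w k = 0 ∨ a k = b (g k)) :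
    SemiconjBy (weightedMap g w) (weightedMap id a) (weightedMap id b) := by
  rw [SemiconjBy, weightedMap_mul, weightedMap_mul]
  refine congrArg (weightedMap g) (funext fun k => ?_)
  obtain hk | hk := h k
  · simp only [id_eq, hk, mul_zero, zero_mul]
  · rw [hk, mul_comm, id_eq]

theorem weightedMap_succ_mul_weightedMap_pred {w : ℕ → F} (hw : w 0 = 0) :
    weightedMap Nat.succ (fun _ => 1) * weightedMap Nat.pred w = weightedMap id w := by
  rw [weightedMap_mul]
  refine Finsupp.lhom_ext fun k a => ?_
  cases k with
  | zero => simp [weightedMap_single, hw]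
  | succ k => simp [weightedMap_single]

theorem smul_weightedMap (k : K) (g : ℕ → ℕ) (w : ℕ → F) :
    k • weightedMap g w = weightedMap g fun i => algebraMap K F k * w i :=
  Finsupp.lhom_ext fun i a => by
    rw [LinearMap.smul_apply, weightedMap_single, weightedMap_single, Finsupp.smul_single,
      Algebra.smul_def, mul_left_comm]

theorem weightedMap_sub (g : ℕ → ℕ) (w w' : ℕ → F) :
    weightedMap g w - weightedMap g w' = weightedMap g fun k => w k - w' k :=
  Finsupp.lhom_ext fun k a => by
    rw [LinearMap.sub_apply, weightedMap_single, weightedMap_single, weightedMap_single,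
      ← Finsupp.single_sub, ← mul_sub]

theorem one_eq_weightedMap : (1 : End F (ℕ →₀ F)) = weightedMap id fun _ => 1 :=
  Finsupp.lhom_ext fun k a => by rw [weightedMap_single, mul_one, End.one_apply, id_eq]

theorem isUnit_weightedMap_id {w : ℕ → F} (hw : ∀ k, w k ≠ 0) : IsUnit (weightedMap id w) := by
  refine isUnit_iff_exists.2 ⟨weightedMap id fun k => (w k)⁻¹, ?_, ?_⟩ <;>
    simp [weightedMap_mul, one_eq_weightedMap, hw]

theorem weightedMap_id_apply (w : ℕ → F) (y : ℕ →₀ F) (k : ℕ) :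
    weightedMap id w y k = y k * w k := by
  classical
  induction y using Finsupp.induction_linear with
  | zero => simp
  | add y z hy hz => rw [map_add, Finsupp.add_apply, hy, hz, Finsupp.add_apply, add_mul]
  | single m a =>
    rw [weightedMap_single, id_eq, Finsupp.single_apply, Finsupp.single_apply]
    split_ifs with h
    · rw [h]
    · rw [zero_mul]

theorem weightedMap_pred_apply {w : ℕ → F} (hw : w 0 = 0) (y : ℕ →₀ F) (k : ℕ) :
    weightedMap Nat.pred w y k = y (k + 1) * w (k + 1) := by
  classical
  induction y using Finsupp.induction_linear with
  | zero => simp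
  | add y z hy hz => rw [map_add, Finsupp.add_apply, hy, hz, Finsupp.add_apply, add_mul]
  | single m a =>
    rw [weightedMap_single]
    cases m with
    | zero => simp [hw]
    | succ m =>
      rw [Finsupp.single_apply, Finsupp.single_apply, Nat.pred_succ]
      simp only [Nat.add_right_cancel_iff]
      split_ifs with h
      · rw [h]
      · rw [zero_mul]

/-- The span of `e_0, …, e_(N-1)`. -/
abbrev initialSpan (F : Type*) [Field F] (N : ℕ) : Submodule F (ℕ →₀ F) :=
  Finsupp.supported F F (Set.Iio N)

theorem mem_initialSpan {N : ℕ} {y : ℕ →₀ F} : y ∈ initialSpan F N ↔ ∀ k ≥ N, y k = 0 := by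
  simp [Finsupp.mem_supported']

theorem single_mem_initialSpan {N k : ℕ} (h : k < N) (a : F) :
    Finsupp.single k a ∈ initialSpan F N :=
  Finsupp.single_mem_supported F a h

theorem apply_mem_of_mem_initialSpan {f : End F (ℕ →₀ F)} {W : Submodule F (ℕ →₀ F)} {N : ℕ}
    (h : ∀ k < N, f (Finsupp.single k 1) ∈ W) {y : ℕ →₀ F} (hy : y ∈ initialSpan F N) :
    f y ∈ W := by
  have : initialSpan F N ≤ W.comap f := by
    rw [initialSpan, Finsupp.supported_eq_span_single, Submodule.span_le]
    rintro _ ⟨k, hk, rfl⟩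
    exact h k hk
  exact this hy

instance (N : ℕ) : FiniteDimensional F (initialSpan F N) :=
  (Finsupp.supportedEquivFinsupp (M := F) (R := F) (Set.Iio N)).symm.finiteDimensional

theorem finrank_initialSpan (N : ℕ) : finrank F (initialSpan F N) = N := by
  rw [(Finsupp.supportedEquivFinsupp (M := F) (R := F) (Set.Iio N)).finrank_eq,
    finrank_finsupp_self]
  simp

/-- The representation of the localized down-up algebra on the space with basis `e_0, e_1, …` in
which `d` is the shift and `u` annihilates `e_0`. -/
def fock (q s : Kˣ) (κ : K) (ξ : Fˣ) (hc : ∀ k : ℕ, c ≠ (q : K)⁻¹ ^ (k + 1)) :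
    DownUpData q s κ c (End F (ℕ →₀ F)) where
  d := weightedMap Nat.succ fun _ => 1
  u := weightedMap Nat.pred fun k =>
    algebraMap K F (κ * s * (s : K)⁻¹ ^ k * ((q : K)⁻¹ ^ k - 1)) * ξ
  x := weightedMap id fun k => algebraMap K F ((s : K)⁻¹ ^ k) * ξ
  t := weightedMap id fun k => algebraMap K F ((q : K)⁻¹ ^ (k + 1))
  d_x := by
    rw [smul_weightedMap]
    exact semiconjBy_weightedMap fun k => .inr (by simp [pow_succ', mul_assoc])
  d_t := by
    rw [smul_weightedMap]
    exact semiconjBy_weightedMap fun k => .inr (by simp [pow_succ'])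
  u_x := by
    rw [smul_weightedMap]
    refine semiconjBy_weightedMap fun k => ?_
    cases k with
    | zero => exact .inl (by simp)
    | succ k => exact .inr (by simp [pow_succ', mul_assoc])
  u_t := by
    rw [smul_weightedMap]
    refine semiconjBy_weightedMap fun k => ?_
    cases k with
    | zero => exact .inl (by simp)
    | succ k => exact .inr (by simp [pow_succ'])
  x_t := semiconjBy_weightedMap fun _ => .inr rfl
  u_mul_d := by
    rw [one_eq_weightedMap, weightedMap_sub, weightedMap_mul, weightedMap_mul, smul_weightedMap]
    refine congrArg (weightedMap _) (funext fun k => ?_)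
    simp [pow_succ', mul_assoc, mul_left_comm, mul_comm]
  d_mul_u := by
    rw [weightedMap_succ_mul_weightedMap_pred (by simp), one_eq_weightedMap, smul_weightedMap,
      weightedMap_sub, weightedMap_mul, smul_weightedMap]
    refine congrArg (weightedMap _) (funext fun k => ?_)
    simp [pow_succ', mul_assoc, mul_left_comm, mul_comm]
  isUnit_x := isUnit_weightedMap_id fun k => by simp
  c_mem := by
    rw [spectrum.mem_resolventSet_iff, Algebra.algebraMap_eq_smul_one, one_eq_weightedMap,
      smul_weightedMap, weightedMap_sub]
    refine isUnit_weightedMap_id fun k => ?_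
    rw [mul_one, ← map_sub, Ne, map_eq_zero_iff _ (algebraMap K F).injective, sub_eq_zero]
    exact hc k

variable {q s : Kˣ} {ξ : Fˣ} {hc : ∀ k : ℕ, c ≠ (q : K)⁻¹ ^ (k + 1)}

theorem fock_d_single (k : ℕ) (a : F) :
    (fock q s κ ξ hc).d (Finsupp.single k a) = Finsupp.single (k + 1) a :=
  (weightedMap_single _ _ _ _).trans (by rw [mul_one])

theorem fock_d_pow_single (n k : ℕ) (a : F) :
    ((fock q s κ ξ hc).d ^ n) (Finsupp.single k a) = Finsupp.single (k + n) a := by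
  induction n with
  | zero => simp
  | succ n ih => rw [pow_succ', End.mul_apply, ih, fock_d_single, add_assoc]

theorem fock_x_single (k : ℕ) (a : F) : (fock q s κ ξ hc).x (Finsupp.single k a) =
    Finsupp.single k (a * (algebraMap K F ((s : K)⁻¹ ^ k) * ξ)) :=
  weightedMap_single _ _ _ _

theorem fock_t_apply (y : ℕ →₀ F) (k : ℕ) :
    (fock q s κ ξ hc).t y k = y k * algebraMap K F ((q : K)⁻¹ ^ (k + 1)) :=
  weightedMap_id_apply _ _ _

theorem fock_u_single_zero (a : F) : (fock q s κ ξ hc).u (Finsupp.single 0 a) = 0 :=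
  (weightedMap_single _ _ _ _).trans (by simp)

section Independent

variable (hqs : ∀ m n : ℤ, q ^ m * s ^ n = 1 → m = 0 ∧ n = 0)
include hqs

theorem inv_pow_injective : Function.Injective fun k : ℕ => (q : K)⁻¹ ^ k := fun m n h => by
  have h : q ^ (n : ℤ) = q ^ (m : ℤ) :=
    Units.ext <| by simpa using (inv_inj.1 (by simpa using h)).symm
  have := (hqs (n - m) 0 (by rw [zpow_sub, h]; simp)).1
  omega

theorem fock_u_apply_mem (hκ : κ ≠ 0) {N : ℕ} {y : ℕ →₀ F} :
    (fock q s κ ξ hc).u y ∈ initialSpan F N ↔ y ∈ initialSpan F (N + 1) := by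
  have hw (k : ℕ) : κ * s * (s : K)⁻¹ ^ (k + 1) * ((q : K)⁻¹ ^ (k + 1) - 1) ≠ 0 := by
    have := (inv_pow_injective hqs).ne (Nat.succ_ne_zero k)
    simpa [hκ, sub_eq_zero] using this
  have hu (k : ℕ) : (fock q s κ ξ hc).u y k = 0 ↔ y (k + 1) = 0 := by
    refine (congrArg (· = 0) (weightedMap_pred_apply (by simp) y k)).to_iff.trans ?_
    rw [mul_eq_zero, or_iff_left (mul_ne_zero ((map_ne_zero _).2 (hw k)) ξ.ne_zero)]
  simp only [mem_initialSpan, hu]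
  refine ⟨fun h k hk => ?_, fun h k hk => h _ (by omega)⟩
  obtain ⟨k, rfl⟩ := Nat.exists_eq_succ_of_ne_zero (by omega : k ≠ 0)
  exact h k (by omega)

theorem fock_u_pow_apply_mem (hκ : κ ≠ 0) (n : ℕ) {N : ℕ} {y : ℕ →₀ F} :
    ((fock q s κ ξ hc).u ^ n) y ∈ initialSpan F N ↔ y ∈ initialSpan F (N + n) := by
  induction n generalizing N with
  | zero => simp
  | succ n ih =>
    rw [pow_succ', End.mul_apply, fock_u_apply_mem hqs hκ, ih, add_right_comm, add_assoc]

end Independent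

end Fock

namespace DownUpData

section FockRepresentation

open Module SkewLaurent

variable {K : Type u} [Field K] {q s : Kˣ} {κ c : K} {B : Type*} [Ring B] [Algebra K B]
  {R : DownUpData q s κ c B} {F : Type*} [Field F] [Algebra K F] {ξ : Fˣ}
  {hc : ∀ k : ℕ, c ≠ (q : K)⁻¹ ^ (k + 1)} {ρ : B →ₐ[K] End F (ℕ →₀ F)}
  (hρ : R.map ρ = fock q s κ ξ hc)
include hρ

theorem map_d_pow_single (n k : ℕ) (a : F) :
    ρ (R.d ^ n) (Finsupp.single k a) = Finsupp.single (k + n) a := by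
  rw [map_pow, show ρ R.d = _ from congrArg d hρ, fock_d_pow_single]

theorem map_x_single (k : ℕ) (a : F) : ρ R.x (Finsupp.single k a) =
    Finsupp.single k (a * (algebraMap K F ((s : K)⁻¹ ^ k) * ξ)) := by
  rw [show ρ R.x = _ from congrArg x hρ, fock_x_single]

theorem map_t_apply (y : ℕ →₀ F) (k : ℕ) :
    ρ R.t y k = y k * algebraMap K F ((q : K)⁻¹ ^ (k + 1)) := by
  rw [show ρ R.t = _ from congrArg t hρ, fock_t_apply]

theorem map_t_single (k : ℕ) (a : F) : ρ R.t (Finsupp.single k a) =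
    algebraMap K F ((q : K)⁻¹ ^ (k + 1)) • Finsupp.single k a := by
  classical
  ext m
  rw [map_t_apply hρ, Finsupp.smul_apply, smul_eq_mul, mul_comm, Finsupp.single_apply]
  split_ifs with h
  · rw [h]
  · rw [mul_zero, mul_zero]

theorem map_u_single_zero (a : F) : ρ R.u (Finsupp.single 0 a) = 0 := by
  rw [show ρ R.u = _ from congrArg u hρ, fock_u_single_zero]

theorem ne_inv_pow_of_mem_resolventSet {a : K} (ha : a ∈ resolventSet K R.t) (k : ℕ) :
    a ≠ (q : K)⁻¹ ^ (k + 1) := by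
  rintro rfl
  obtain ⟨v, hv⟩ := ha.map ρ
  have h : (v : End F (ℕ →₀ F)) (Finsupp.single k 1) = 0 := by
    rw [hv, map_sub, LinearMap.sub_apply, map_t_single hρ, AlgHom.commutes,
      Module.algebraMap_end_apply, algebraMap_smul, sub_self]
  have h' := congrArg (v⁻¹ : (End F (ℕ →₀ F))ˣ).val h
  rw [← End.mul_apply, Units.inv_mul, map_zero, End.one_apply, Finsupp.single_eq_zero] at h'
  exact one_ne_zero h'

theorem mul_mem_resolventSet_of_map_eq_fock (hκ : κ ≠ 0) (a : K) (ha : a ∈ resolventSet K R.t) :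
    (q : K) * a ∈ resolventSet K R.t :=
  R.mul_mem_resolventSet hκ ha fun h =>
    ne_inv_pow_of_mem_resolventSet hρ ha 0 (by rw [zero_add, pow_one, eq_inv_of_mul_eq_one_right h])

section Independent

variable (hqs : ∀ m n : ℤ, q ^ m * s ^ n = 1 → m = 0 ∧ n = 0)
include hqs

theorem eq_single_of_map_t_eq {y : ℕ →₀ F} {k : ℕ}
    (h : ρ R.t y = algebraMap K F ((q : K)⁻¹ ^ (k + 1)) • y) : y = Finsupp.single k (y k) := by
  ext m
  obtain rfl | hm := eq_or_ne k m
  · simp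
  · have := DFunLike.congr_fun h m
    rw [map_t_apply hρ, Finsupp.smul_apply, smul_eq_mul, mul_comm, mul_eq_mul_right_iff,
      (algebraMap K F).injective.eq_iff, (inv_pow_injective hqs).eq_iff] at this
    rw [Finsupp.single_eq_of_ne' hm]
    exact this.resolve_left (by omega)

theorem exists_map_single_of_mem_base {a : B} (ha : a ∈ R.base) (k : ℕ) :
    ∃ α : F, ρ a (Finsupp.single k 1) = Finsupp.single k α := by
  refine ⟨_, eq_single_of_map_t_eq hρ hqs ?_⟩
  rw [← End.mul_apply, ← map_mul, (R.commute_of_mem_base R.t_mem_base ha).eq, map_mul,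
    End.mul_apply, map_t_single hρ, map_smul]

theorem map_mem_initialSpan_of_mem_part (hκ : κ ≠ 0) {b : B} {n : ℤ} (hb : b ∈ R.part n) {M N : ℕ}
    (h : (M : ℤ) + n ≤ N) {y : ℕ →₀ F} (hy : y ∈ initialSpan F M) : ρ b y ∈ initialSpan F N := by
  induction hb using Submodule.span_induction with
  | zero => simp
  | add a b _ _ ha hb => exact map_add ρ a b ▸ add_mem ha hb
  | smul k b _ hb =>
    rw [map_smul, LinearMap.smul_apply, ← algebraMap_smul F]
    exact Submodule.smul_mem _ _ hb
  | mem b hb =>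
    obtain ⟨i, j, a, ha, hij, rfl⟩ := hb
    have hu : ρ (R.u ^ j) y ∈ initialSpan F (M - j) := by
      rw [map_pow, show ρ R.u = _ from congrArg u hρ, fock_u_pow_apply_mem hqs hκ]
      exact Finsupp.supported_mono (Set.Iio_subset_Iio (by omega)) hy
    rw [map_mul, End.mul_apply]
    refine apply_mem_of_mem_initialSpan (fun k hk => ?_) hu
    obtain ⟨α, hα⟩ := exists_map_single_of_mem_base hρ hqs ha k
    rw [map_mul, End.mul_apply, hα, map_d_pow_single hρ]
    exact single_mem_initialSpan (by omega) α

theorem IsTorsion.exists_map_mem_initialSpan (hκ : κ ≠ 0) {b : B} (hb : R.IsTorsion b) :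
    ∃ N : ℕ, (∀ y, ρ b y ∈ initialSpan F N) ∧ ∀ m ≥ N, ∀ a, ρ b (Finsupp.single m a) = 0 := by
  obtain ⟨N, hu, hd⟩ := hb
  refine ⟨N, fun y => ?_, fun m hm a => ?_⟩
  · have h : ρ (R.u ^ N) (ρ b y) ∈ initialSpan F 0 := by
      rw [← End.mul_apply, ← map_mul, hu, map_zero]
      exact zero_mem _
    rw [map_pow, show ρ R.u = _ from congrArg u hρ, fock_u_pow_apply_mem hqs hκ, zero_add] at h
    exact h
  · obtain ⟨k, rfl⟩ := Nat.exists_eq_add_of_le' hm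
    rw [← map_d_pow_single hρ, ← End.mul_apply, ← map_mul, hd, map_zero, LinearMap.zero_apply]

theorem nonneg_of_isUnit_of_map_eq_monomial (hκ : κ ≠ 0) (hR : R.IsUniversal)
    {ψ : B →ₐ[K] SkewLaurent q s} {l μ : Kˣ} (hψ : IsMonomial (R.map ψ) l μ) {b : B} (hb : IsUnit b)
    {n : ℤ} {f : CoeffRing q s} (h : ψ b = monomial n f) : 0 ≤ n := by
  by_contra! hn
  have hA := mul_mem_resolventSet_of_map_eq_fock hρ hκ
  obtain ⟨b', hb', hbb'⟩ := exists_mem_map_eq (ψ := ψ.toLinearMap)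
    (fun n b hb => map_mem_homogeneous_of_mem_part hψ hqs hb) (hR.iSup_part hA ▸ Submodule.mem_top)
    (show ψ b ∈ _ from h ▸ monomial_mem n f)
  have htors : R.IsTorsion (b - b') := by
    rw [← map_eq_zero_iff_isTorsion hR hA hqs hψ, map_sub, sub_eq_zero]
    exact hbb'.symm
  obtain ⟨N, hN, -⟩ := htors.exists_map_mem_initialSpan hρ hqs hκ
  have hmaps : ∀ y ∈ initialSpan F (N + 1), ρ b y ∈ initialSpan F N := fun y hy => by
    have h := map_mem_initialSpan_of_mem_part hρ hqs hκ hb' (N := N) (by omega) hy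
    rw [← sub_add_cancel b b', map_add]
    exact add_mem (hN y) h
  have hinj : Function.Injective (ρ b) := ((End.isUnit_iff _).1 (hb.map ρ)).injective
  have := LinearMap.finrank_le_finrank_of_injective (f := (ρ b).restrict hmaps)
    (fun y z hyz => Subtype.ext (hinj (congrArg Subtype.val hyz)))
  rw [finrank_initialSpan, finrank_initialSpan] at this
  omega

theorem map_mem_homogeneous_zero_of_isUnit (hκ : κ ≠ 0) (hR : R.IsUniversal)
    {ψ : B →ₐ[K] SkewLaurent q s} {l μ : Kˣ} (hψ : IsMonomial (R.map ψ) l μ) {b : B}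
    (hb : IsUnit b) : ψ b ∈ homogeneous q s 0 := by
  obtain ⟨b, rfl⟩ := hb
  obtain ⟨n, f, hf⟩ := exists_eq_monomial_of_isUnit (b.isUnit.map ψ)
  obtain ⟨m, g, hg⟩ := exists_eq_monomial_of_isUnit (b⁻¹.isUnit.map ψ)
  have hn := nonneg_of_isUnit_of_map_eq_monomial hρ hqs hκ hR hψ b.isUnit hf
  have hm := nonneg_of_isUnit_of_map_eq_monomial hρ hqs hκ hR hψ b⁻¹.isUnit hg
  have h : ψ b * ψ ↑b⁻¹ = monomial 0 1 := by
    rw [← map_mul, b.mul_inv, map_one, monomial_zero_one]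
  rw [hf, hg, monomial_mul_monomial] at h
  have := eq_of_monomial_eq one_ne_zero h.symm
  rw [hf, (by omega : n = 0)]
  exact monomial_mem 0 f

end Independent

end FockRepresentation

section Injectivity

open Module SkewLaurent

variable {K : Type u} [Field K] {q s : Kˣ} {κ c : K} {B : Type*} [Ring B] [Algebra K B]
  {R : DownUpData q s κ c B}

theorem base_swap (R : DownUpData q s κ c B) : R.swap.base = R.base := by
  refine le_antisymm (Algebra.adjoin_le ?_) (Algebra.adjoin_le ?_)
  · rintro _ ((rfl | rfl | rfl) | ⟨a, ha, rfl⟩)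
    · exact R.x_mem_base
    · exact R.inverse_x_mem_base
    · exact R.base.smul_mem R.t_mem_base _
    · obtain ⟨a, rfl⟩ : ∃ b, q * b = a := ⟨q⁻¹ * a, by simp⟩
      have h := R.base.smul_mem (R.resolvent_mem_base (R.smul_mem_resolventSet.1 ha)) (↑q⁻¹ : K)
      rwa [R.resolvent_swap, smul_smul, Units.inv_mul, one_smul, mul_comm a] at h
  · rintro _ ((rfl | rfl | rfl) | ⟨a, ha, rfl⟩)
    · exact R.swap.x_mem_base
    · exact R.swap.inverse_x_mem_base
    · simpa [smul_smul] using R.swap.base.smul_mem R.swap.t_mem_base (↑q⁻¹ : K)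
    · rw [R.resolvent_swap]
      refine R.swap.base.smul_mem (R.swap.resolvent_mem_base ?_) _
      rw [mul_comm a]
      exact R.smul_mem_resolventSet.2 ha

theorem IsUniversal.eq_top (hR : R.IsUniversal) {A : Subalgebra K B} (hd : R.d ∈ A) (hu : R.u ∈ A)
    (hbase : R.base ≤ A) : A = ⊤ := by
  rw [eq_top_iff, ← hR.adjoin_eq_top, Algebra.adjoin_le_iff]
  rintro _ (rfl | rfl | rfl | rfl | rfl | rfl)
  exacts [hd, hu, hbase R.x_mem_base, hbase R.inverse_x_mem_base, hbase R.t_mem_base,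
    hbase (R.resolvent_mem_base R.c_mem)]

theorem isUnit_of_isUnit_mul {a b : B} (hab : IsUnit (a * b)) (hba : IsUnit (b * a)) :
    IsUnit a := by
  obtain ⟨v, hv⟩ := hab
  obtain ⟨w, hw⟩ := hba
  refine isUnit_iff_exists_and_exists.2 ⟨⟨b * ↑v⁻¹, ?_⟩, ↑w⁻¹ * b, ?_⟩
  · rw [← mul_assoc, ← hv, v.mul_inv]
  · rw [mul_assoc, ← hw, w.inv_mul]

section Injective

variable (hA : ∀ a ∈ resolventSet K R.t, (q : K) * a ∈ resolventSet K R.t)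
  (hA' : ∀ a ∈ resolventSet K R.t, (↑q⁻¹ : K) * a ∈ resolventSet K R.t)

include hA' in
theorem inv_mul_mem_resolventSet_swap (a : K) (ha : a ∈ resolventSet K R.swap.t) :
    (↑q⁻¹ : K) * a ∈ resolventSet K R.swap.t := by
  obtain ⟨a, rfl⟩ : ∃ b, q * b = a := ⟨q⁻¹ * a, by simp⟩
  rw [mul_left_comm]
  exact R.smul_mem_resolventSet.2 (hA' a (R.smul_mem_resolventSet.1 ha))

include hA' in
theorem exists_semiconjBy_d_pow_of_mem_base (n : ℕ) {a : B} (ha : a ∈ R.base) :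
    ∃ a' ∈ R.base, SemiconjBy (R.d ^ n) a a' := by
  rw [← R.base_swap] at ha ⊢
  obtain ⟨a', ha', -, h⟩ :=
    R.swap.exists_semiconjBy_pow_of_mem_base (inv_mul_mem_resolventSet_swap hA') n ha
  exact ⟨a', ha', h⟩

include hA' in
theorem d_pow_mul_u_pow_mem_base (n : ℕ) : R.d ^ n * R.u ^ n ∈ R.base :=
  R.base_swap ▸ R.swap.u_pow_mul_d_pow_mem_base (inv_mul_mem_resolventSet_swap hA') n

include hA' in
theorem exists_eq_mul_d_pow_of_mem_part {n : ℕ} {b : B} (hb : b ∈ R.part n) :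
    ∃ a ∈ R.base, a * R.d ^ n = b := by
  suffices R.part n ≤ R.base.toSubmodule.map (LinearMap.mulRight K (R.d ^ n)) from this hb
  refine Submodule.span_le.2 ?_
  rintro _ ⟨i, j, a, ha, hij, rfl⟩
  obtain rfl : i = n + j := by omega
  obtain ⟨a', ha', h⟩ := exists_semiconjBy_d_pow_of_mem_base hA' j ha
  obtain ⟨b, hb, h'⟩ := exists_semiconjBy_d_pow_of_mem_base hA' n
    (R.base.mul_mem ha' (d_pow_mul_u_pow_mem_base hA' j))
  exact ⟨b, hb, h'.eq.symm.trans (by rw [pow_add, mul_assoc _ _ a, h.eq]; simp only [mul_assoc])⟩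

include hA' in
theorem exists_eq_mul_u_pow_of_mem_part {n : ℕ} {b : B} (hb : b ∈ R.part (-n)) :
    ∃ a ∈ R.base, a * R.u ^ n = b := by
  suffices R.part (-n) ≤ R.baseUPow n from this hb
  refine Submodule.span_le.2 ?_
  rintro _ ⟨i, j, a, ha, hij, rfl⟩
  obtain rfl : j = i + n := by omega
  obtain ⟨a', ha', h⟩ := exists_semiconjBy_d_pow_of_mem_base hA' i ha
  refine ⟨_, R.base.mul_mem ha' (d_pow_mul_u_pow_mem_base hA' i), ?_⟩
  rw [LinearMap.mulRight_apply, pow_add, h.eq]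
  simp only [mul_assoc]

include hA hA' in
theorem injective_of_isMonomial (hR : R.IsUniversal)
    (hqs : ∀ m n : ℤ, q ^ m * s ^ n = 1 → m = 0 ∧ n = 0)
    {ψ : B →ₐ[K] SkewLaurent q s} {l μ : Kˣ} (hψ : IsMonomial (R.map ψ) l μ) :
    Function.Injective ψ := by
  have hd : ψ R.d ≠ 0 := hψ.d_ne_zero
  have hu : ψ R.u ≠ 0 := hψ.u_ne_zero
  refine (injective_iff_map_eq_zero _).2 fun b => eq_zero_of_mem_iSup (ψ := ψ.toLinearMap)
    Function.injective_id (fun n b hb => map_mem_homogeneous_of_mem_part hψ hqs hb)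
    (fun n b hb hb0 => ?_) (hR.iSup_part hA ▸ Submodule.mem_top)
  obtain ⟨n, rfl | rfl⟩ := n.eq_nat_or_neg
  · obtain ⟨a, ha, rfl⟩ := exists_eq_mul_d_pow_of_mem_part hA' hb
    have : ψ a = 0 := by simpa [hd] using hb0
    rw [eq_zero_of_mem_base hψ ha this, zero_mul]
  · obtain ⟨a, ha, rfl⟩ := exists_eq_mul_u_pow_of_mem_part hA' hb
    have : ψ a = 0 := by simpa [hu] using hb0
    rw [eq_zero_of_mem_base hψ ha this, zero_mul]

end Injective

end Injectivity

/-! ### The case of `1` in the spectrum of `t` -/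

section OneNotMem

open Module SkewLaurent

variable {K : Type u} [Field K] {q s : Kˣ} {κ c : K} {B : Type*} [Ring B] [Algebra K B]
  {R : DownUpData q s κ c B} {F : Type*} [Field F] [Algebra K F] {ξ : Fˣ}
  {hc : ∀ k : ℕ, c ≠ (q : K)⁻¹ ^ (k + 1)} {ρ : B →ₐ[K] End F (ℕ →₀ F)}
  {ψ : B →ₐ[K] SkewLaurent q s} {l ν : Kˣ} {θ : B →ₐ[K] B}

theorem map_ringInverse {C : Type*} [Ring C] [Algebra K C] (f : B →ₐ[K] C) {b : B} (hb : IsUnit b) :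
    f (Ring.inverse b) = Ring.inverse (f b) :=
  (hb.map f).mul_right_cancel <| by
    rw [← map_mul, Ring.inverse_mul_cancel _ hb, map_one, Ring.inverse_mul_cancel _ (hb.map f)]

theorem map_algHom_resolvent {t : B} {k : K} (hk : k ∈ resolventSet K t) :
    θ (resolvent t k) = resolvent (θ t) k := by
  rw [resolvent, map_ringInverse θ hk, map_sub, AlgHom.commutes, resolvent]

section MonomialType

variable (hψ : IsMonomial (R.map ψ) l ν) (hqs : ∀ m n : ℤ, q ^ m * s ^ n = 1 → m = 0 ∧ n = 0)
  (hκ : κ ≠ 0)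
include hψ hqs hκ

theorem exists_map_comp_t_eq_smul (hc0 : c ≠ 0) (θ : B →ₐ[K] B) :
    ∃ μ : K, ψ (θ R.t) = ψ (μ • R.t) := by
  obtain ⟨μ, hμ⟩ := exists_t_eq_smul hκ hc0 hqs (R.map (ψ.comp θ))
  refine ⟨μ * ν⁻¹, ?_⟩
  rw [map_smul, show ψ R.t = _ from hψ.t, ← map_smul, smul_smul, Units.val_inv_eq_inv_val,
    inv_mul_cancel_right₀ ν.ne_zero]
  exact hμ

theorem exists_isMonomial_comp {μ : Kˣ} (hμ : ψ (θ R.t) = ψ ((μ : K) • R.t)) :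
    ∃ l', IsMonomial (R.map (ψ.comp θ)) l' (μ * ν) := by
  refine exists_isMonomial hκ hqs _ (hμ.trans ?_)
  rw [map_smul, show ψ R.t = _ from hψ.t, ← map_smul, smul_smul, Units.val_mul]

theorem exists_map_comp_x_eq_smul {μ : Kˣ} (hμ : ψ (θ R.t) = ψ ((μ : K) • R.t)) :
    ∃ k : Kˣ, ψ (θ R.x) = ψ ((k : K) • R.x) := by
  obtain ⟨l', h⟩ := exists_isMonomial_comp hψ hqs hκ hμ
  refine ⟨l' * l⁻¹, ?_⟩
  rw [map_smul, show ψ R.x = _ from hψ.x, show ψ (θ R.x) = _ from h.x, ← map_smul, smul_smul,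
    Units.val_mul, Units.inv_mul_cancel_right]

end MonomialType

section NotUnit

variable (hρ : R.map ρ = fock q s κ ξ hc) (hψ : IsMonomial (R.map ψ) l ν)
  (hqs : ∀ m n : ℤ, q ^ m * s ^ n = 1 → m = 0 ∧ n = 0) (hκ : κ ≠ 0) (hR : R.IsUniversal)
include hρ hψ hqs hκ hR

theorem not_isUnit_d (S : DownUpData q s κ c B) : ¬ IsUnit S.d := by
  intro hd
  obtain ⟨f, hf⟩ := map_mem_homogeneous_zero_of_isUnit hρ hqs hκ hR hψ hd
  obtain ⟨g, hg⟩ := map_mem_homogeneous_zero_of_isUnit hρ hqs hκ hR hψ S.isUnit_x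
  have hcomm : ψ S.d * ψ S.x = ψ S.x * ψ S.d := by
    rw [← hf, ← hg, monomial_zero_mul, monomial_zero_mul, mul_comm]
  have h : (1 : K) • (ψ S.x * ψ S.d) = (s : K) • (ψ S.x * ψ S.d) := by
    have := (S.d_x.map ψ).eq
    rw [map_smul, smul_mul_assoc, hcomm] at this
    rw [one_smul]
    exact this
  have hs := smul_left_injective K ((S.isUnit_x.map ψ).mul (hd.map ψ)).ne_zero h
  have := hqs 0 1 (by simpa [eq_comm] using hs)
  omega

end NotUnit

section NotMem

variable (h1 : (1 : K) ∉ resolventSet K R.t)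

include h1 in
theorem inv_mul_mem_resolventSet_of_one_notMem (hκ : κ ≠ 0) (a : K) (ha : a ∈ resolventSet K R.t) :
    (↑q⁻¹ : K) * a ∈ resolventSet K R.t :=
  R.inv_mul_mem_resolventSet hκ ha fun h => h1 (h ▸ ha)

theorem isUnit_d_of_t_eq_zero (S : DownUpData q s κ c B) (hκ : κ ≠ 0) (ht : S.t = 0) :
    IsUnit S.d := by
  refine isUnit_of_isUnit_mul (b := S.u) ?_ ?_
  · rw [S.d_mul_u, ht, smul_zero, zero_sub, mul_neg_one]
    exact S.isUnit_x.neg.smul (Units.mk0 _ (mul_ne_zero hκ s.ne_zero))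
  · rw [S.u_mul_d, ht, zero_sub, mul_neg_one]
    exact S.isUnit_x.neg.smul (Units.mk0 _ hκ)

variable (hρ : R.map ρ = fock q s κ ξ hc) (hψ : IsMonomial (R.map ψ) l ν)
  (hqs : ∀ m n : ℤ, q ^ m * s ^ n = 1 → m = 0 ∧ n = 0) (hκ : κ ≠ 0) (hR : R.IsUniversal)

include hψ hqs hR in
theorem mem_part_of_injective
    (hA : ∀ a ∈ resolventSet K R.t, (q : K) * a ∈ resolventSet K R.t)
    (hinj : Function.Injective ψ) {b : B} {n : ℤ} {f : CoeffRing q s} (hb : ψ b = monomial n f) :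
    b ∈ R.part n := by
  obtain ⟨b', hb', h⟩ := exists_mem_map_eq (ψ := ψ.toLinearMap)
    (fun n b hb => map_mem_homogeneous_of_mem_part hψ hqs hb) (hR.iSup_part hA ▸ Submodule.mem_top)
    (show ψ b ∈ _ from hb ▸ monomial_mem n f)
  exact hinj h ▸ hb'

include hρ hqs in
theorem eq_one_of_u_mem_part (hκ : κ ≠ 0) {μ : K} (S : DownUpData q s κ c B)
    (hu : S.u ∈ R.part (-1))
    (ht : S.t = μ • R.t) : μ = 1 := by
  have hu0 : ρ S.u (Finsupp.single 0 1) = 0 := by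
    have h := map_mem_initialSpan_of_mem_part hρ hqs hκ hu (N := 0) (M := 1) (by norm_num)
      (single_mem_initialSpan zero_lt_one 1)
    exact Finsupp.ext fun k => mem_initialSpan.1 h k k.zero_le
  have h0 : ρ ((q : K) • S.t - 1) (Finsupp.single 0 1) = 0 := by
    have h := congrArg (fun b => ρ b (Finsupp.single 0 (1 : F))) S.d_mul_u
    simp only [map_mul, map_smul, End.mul_apply, hu0, map_zero, LinearMap.smul_apply] at h
    rw [eq_comm, smul_eq_zero_iff_right (mul_ne_zero hκ s.ne_zero)] at h
    exact ((End.isUnit_iff _).1 (S.isUnit_x.map ρ)).injective (h.trans (map_zero _).symm)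
  rw [ht, map_sub, map_smul, map_smul, map_one, LinearMap.sub_apply, LinearMap.smul_apply,
    LinearMap.smul_apply, map_t_single hρ, End.one_apply, algebraMap_smul, smul_smul, smul_smul,
    sub_eq_zero, zero_add, pow_one] at h0
  have h := DFunLike.congr_fun h0 0
  rw [Finsupp.smul_apply, Finsupp.single_eq_same, ← Algebra.algebraMap_eq_smul_one,
    map_eq_one_iff _ (algebraMap K F).injective, mul_right_comm, mul_inv_cancel₀ q.ne_zero,
    one_mul] at h
  exact h

theorem base_le_range {k : Kˣ} (hx : θ R.x = (k : K) • R.x) (ht : θ R.t = R.t) :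
    R.base ≤ θ.range := by
  have hx' : θ ((↑k⁻¹ : K) • R.x) = R.x := by rw [map_smul, hx, smul_smul, Units.inv_mul, one_smul]
  refine Algebra.adjoin_le ?_
  rintro _ ((rfl | rfl | rfl) | ⟨a, ha, rfl⟩)
  · exact ⟨_, hx'⟩
  · exact ⟨_, (map_ringInverse θ (R.isUnit_x.smul k⁻¹)).trans (congrArg _ hx')⟩
  · exact ⟨_, ht⟩
  · exact ⟨_, (map_algHom_resolvent ha).trans (by rw [ht])⟩

include hψ hqs hR in
theorem range_eq_top_of_mem_part (hA : ∀ a ∈ resolventSet K R.t, (q : K) * a ∈ resolventSet K R.t)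
    (hA' : ∀ a ∈ resolventSet K R.t, (↑q⁻¹ : K) * a ∈ resolventSet K R.t) {k : Kˣ}
    (hx : θ R.x = (k : K) • R.x) (ht : θ R.t = R.t) (hd : θ R.d ∈ R.part 1)
    (hu : θ R.u ∈ R.part (-1)) : θ.range = ⊤ := by
  obtain ⟨a, ha, hda⟩ := exists_eq_mul_d_pow_of_mem_part hA' (n := 1) hd
  obtain ⟨b, hb, hub⟩ := exists_eq_mul_u_pow_of_mem_part hA' (n := 1) hu
  obtain ⟨a', ha', -, hua⟩ := R.exists_semiconjBy_pow_of_mem_base hA 1 ha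
  obtain ⟨b', hb', hdb⟩ := exists_semiconjBy_d_pow_of_mem_base hA' 1 hb
  rw [pow_one] at hda hub hua hdb
  have := (injective_of_isMonomial hA hA' hR hqs hψ).noZeroDivisors ψ (map_zero ψ) (map_mul ψ)
  have hd0 : R.d ≠ 0 := fun h => hψ.d_ne_zero ((congrArg ψ h).trans (map_zero ψ))
  have hu0 : R.u ≠ 0 := fun h => hψ.u_ne_zero ((congrArg ψ h).trans (map_zero ψ))
  have hba : b * a' = algebraMap K B k := by
    refine mul_right_cancel₀ (mul_ne_zero hu0 hd0) ?_
    rw [mul_assoc, ← mul_assoc a', ← hua.eq, mul_assoc R.u, hda, ← mul_assoc, hub, ← map_mul,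
      R.u_mul_d, map_smul, map_mul, map_sub, map_one, hx, ht, ← Algebra.smul_def, smul_comm,
      smul_mul_assoc]
  have hab : b' * a = algebraMap K B k := by
    refine mul_right_cancel₀ (mul_ne_zero hd0 hu0) ?_
    rw [(R.commute_of_mem_base hb' ha).eq, mul_assoc, ← mul_assoc b', ← hdb.eq, mul_assoc R.d, hub,
      ← mul_assoc, hda, ← map_mul, R.d_mul_u, map_smul, map_mul, map_sub, map_one, map_smul, hx, ht,
      ← Algebra.smul_def, smul_comm, smul_mul_assoc]
  have mem {b : B} (hb : (k : K) • b ∈ θ.range) : b ∈ θ.range := by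
    simpa [smul_smul] using θ.range.smul_mem hb (↑k⁻¹ : K)
  have hbase := base_le_range hx ht
  refine hR.eq_top (mem ?_) (mem ?_) hbase
  · rw [Algebra.smul_def, ← hab, mul_assoc, hda]
    exact mul_mem (hbase hb') ⟨_, rfl⟩
  · rw [Algebra.smul_def, ← hba, (R.commute_of_mem_base hb ha').eq, mul_assoc, hub]
    exact mul_mem (hbase ha') ⟨_, rfl⟩

include hρ hψ hqs hκ hR h1 in
theorem bijective_of_one_notMem (hc0 : c ≠ 0) (θ : B →ₐ[K] B) : Function.Bijective θ := by
  have hA := mul_mem_resolventSet_of_map_eq_fock hρ hκ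
  have hA' := inv_mul_mem_resolventSet_of_one_notMem h1 hκ
  have hinj := injective_of_isMonomial hA hA' hR hqs hψ
  obtain ⟨μ, hμ⟩ := exists_map_comp_t_eq_smul hψ hqs hκ hc0 θ
  have ht := hinj hμ
  have hμ0 : μ ≠ 0 := fun h0 => not_isUnit_d hρ hψ hqs hκ hR (R.map θ)
    (isUnit_d_of_t_eq_zero _ hκ (by rw [map_t, ht, h0, zero_smul]))
  lift μ to Kˣ using hμ0.isUnit
  obtain ⟨k, hk⟩ := exists_map_comp_x_eq_smul hψ hqs hκ hμ
  obtain ⟨l', hθ⟩ := exists_isMonomial_comp hψ hqs hκ hμ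
  obtain ⟨f, -, hf⟩ := hθ.d
  obtain ⟨g, -, hg⟩ := hθ.u
  have hd := mem_part_of_injective hψ hqs hR hA hinj hf
  have hu := mem_part_of_injective hψ hqs hR hA hinj hg
  rw [eq_one_of_u_mem_part hρ hqs hκ (R.map θ) hu ht, one_smul] at ht
  refine ⟨.of_comp (injective_of_isMonomial hA hA' hR hqs hθ), ?_⟩
  rw [← AlgHom.range_eq_top]
  exact range_eq_top_of_mem_part hψ hqs hR hA hA' (hinj hk) ht hd hu

end NotMem

end OneNotMem

end DownUpData

/-! ### The case of `1` outside the spectrum of `t` -/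

section OneSidedInverse

variable {B : Type*} [Ring B] {d v : B}

/-- The idempotent `dⁿvⁿ`, for a left inverse `v` of `d`: if `d` is the shift of a sequence space,
it projects onto the sequences starting at the index `n`. -/
def tailProj (d v : B) (n : ℕ) : B := d ^ n * v ^ n

/-- The idempotent `dⁿ(1 - dv)vⁿ`, for a left inverse `v` of `d`: if `d` is the shift of a sequence
space, it projects onto the `n`-th coordinate. -/
def levelProj (d v : B) (n : ℕ) : B := d ^ n * (1 - d * v) * v ^ n

theorem tailProj_zero (d v : B) : tailProj d v 0 = 1 := by simp [tailProj]

theorem levelProj_zero (d v : B) : levelProj d v 0 = 1 - d * v := by simp [levelProj]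

theorem levelProj_eq_sub (d v : B) (n : ℕ) :
    levelProj d v n = tailProj d v n - tailProj d v (n + 1) := by
  rw [levelProj, tailProj, tailProj, pow_succ d, pow_succ' v]
  noncomm_ring

theorem sum_levelProj (d v : B) (n : ℕ) :
    ∑ k ∈ Finset.range n, levelProj d v k = 1 - tailProj d v n := by
  simp only [levelProj_eq_sub, Finset.sum_range_sub', tailProj_zero]

theorem tailProj_eq_of_levelProj_eq {d v d' v' : B} (h : ∀ n, levelProj d v n = levelProj d' v' n)
    (n : ℕ) : tailProj d v n = tailProj d' v' n := by
  rw [← sub_right_inj (a := (1 : B)), ← sum_levelProj, ← sum_levelProj]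
  exact Finset.sum_congr rfl fun k _ => h k

theorem map_tailProj {C G : Type*} [Ring C] [FunLike G B C] [RingHomClass G B C] (f : G) (n : ℕ) :
    f (tailProj d v n) = tailProj (f d) (f v) n := by
  simp only [tailProj, map_mul, map_pow]

theorem map_levelProj {C G : Type*} [Ring C] [FunLike G B C] [RingHomClass G B C] (f : G) (n : ℕ) :
    f (levelProj d v n) = levelProj (f d) (f v) n := by
  simp only [levelProj_eq_sub, map_sub, map_tailProj]

theorem levelProj_add (d v : B) (m n : ℕ) :
    levelProj d v (m + n) = d ^ m * levelProj d v n * v ^ m := by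
  rw [levelProj, pow_add d, add_comm m n, pow_add v, levelProj]
  noncomm_ring

theorem levelProj_succ (d v : B) (n : ℕ) : levelProj d v (n + 1) = d * levelProj d v n * v := by
  rw [add_comm, levelProj_add, pow_one, pow_one]

theorem commute_levelProj {K : Type u} [Field K] [Algebra K B] {k : Kˣ} {a : B}
    (hd : SemiconjBy d a ((k : K) • a)) (hv : SemiconjBy v ((k : K) • a) a) (n : ℕ) :
    Commute (levelProj d v n) a := by
  have of_smul {b : B} (h : Commute b ((k : K) • a)) : Commute b a := by
    simpa [smul_smul] using h.smul_right (↑k⁻¹ : K)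
  induction n with
  | zero => exact levelProj_zero d v ▸ of_smul ((Commute.one_left _).sub_left (hd.mul_left hv))
  | succ n ih => exact levelProj_succ d v n ▸ of_smul ((hd.mul_left ih).mul_left hv)

section LeftInverse

variable (h : v * d = 1)
include h

theorem tailProj_mul_pow {m n : ℕ} (hmn : m ≤ n) : tailProj d v m * d ^ n = d ^ n := by
  obtain ⟨k, rfl⟩ := Nat.exists_eq_add_of_le hmn
  rw [tailProj, mul_assoc, pow_add, ← mul_assoc (v ^ m), pow_mul_pow_eq_one m h, one_mul]

theorem pow_mul_tailProj {m n : ℕ} (hmn : m ≤ n) : v ^ n * tailProj d v m = v ^ n := by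
  obtain ⟨k, rfl⟩ := Nat.exists_eq_add_of_le' hmn
  rw [tailProj, pow_add, mul_assoc, ← mul_assoc (v ^ m), pow_mul_pow_eq_one m h, one_mul]

theorem tailProj_mul_tailProj {m n : ℕ} (hmn : m ≤ n) :
    tailProj d v m * tailProj d v n = tailProj d v n := by
  rw [tailProj.eq_1 d v n, ← mul_assoc, tailProj_mul_pow h hmn]

theorem tailProj_mul_tailProj' {m n : ℕ} (hmn : m ≤ n) :
    tailProj d v n * tailProj d v m = tailProj d v n := by
  rw [tailProj.eq_1 d v n, mul_assoc, pow_mul_tailProj h hmn]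

theorem tailProj_mul_levelProj {m n : ℕ} (hmn : m ≤ n) :
    tailProj d v m * levelProj d v n = levelProj d v n := by
  rw [levelProj_eq_sub, mul_sub, tailProj_mul_tailProj h hmn, tailProj_mul_tailProj h (by omega)]

theorem levelProj_mul_tailProj {m n : ℕ} (hmn : m ≤ n) :
    levelProj d v n * tailProj d v m = levelProj d v n := by
  rw [levelProj_eq_sub, sub_mul, tailProj_mul_tailProj' h hmn, tailProj_mul_tailProj' h (by omega)]

theorem levelProj_mul_tailProj_of_lt {m n : ℕ} (hmn : n < m) :
    levelProj d v n * tailProj d v m = 0 := by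
  rw [levelProj_eq_sub, sub_mul, tailProj_mul_tailProj h hmn.le, tailProj_mul_tailProj h hmn,
    sub_self]

theorem isIdempotentElem_levelProj (n : ℕ) : IsIdempotentElem (levelProj d v n) := by
  rw [IsIdempotentElem, levelProj_eq_sub d v, mul_sub, ← levelProj_eq_sub,
    levelProj_mul_tailProj h le_rfl, levelProj_mul_tailProj_of_lt h n.lt_succ_self, sub_zero]

theorem levelProj_zero_mul : levelProj d v 0 * d = 0 := by
  rw [levelProj_zero, sub_mul, mul_assoc, h, one_mul, mul_one, sub_self]

theorem pow_mul_levelProj_mul_pow (n : ℕ) (b : B) :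
    v ^ n * (levelProj d v n * (d ^ n * b * v ^ n) * levelProj d v n) * d ^ n =
      levelProj d v 0 * b * levelProj d v 0 := by
  have h' (z : B) : v ^ n * (d ^ n * z) = z := by rw [← mul_assoc, pow_mul_pow_eq_one n h, one_mul]
  simp only [levelProj, mul_assoc, h', pow_mul_pow_eq_one n h, pow_zero, one_mul, mul_one]

end LeftInverse

theorem compression_eq_sum (d v b : B) (n : ℕ) :
    (1 - tailProj d v n) * b * (1 - tailProj d v n) = ∑ k ∈ Finset.range n, ∑ l ∈ Finset.range n,
      d ^ k * (levelProj d v 0 * (v ^ k * b * d ^ l) * levelProj d v 0) * v ^ l := by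
  rw [← sum_levelProj, Finset.sum_mul, Finset.sum_mul_sum]
  simp only [levelProj, pow_zero, one_mul, mul_one, mul_assoc]

theorem compression_mem {S : Type*} [SetLike S B] [SubringClass S B] {A : S} (h : v * d = 1)
    (hd : d ∈ A) (hv : v ∈ A) {n : ℕ} (hA : ∀ b, levelProj d v n * b * levelProj d v n ∈ A)
    (m : ℕ) (b : B) : (1 - tailProj d v m) * b * (1 - tailProj d v m) ∈ A := by
  rw [compression_eq_sum]
  refine sum_mem fun k _ => sum_mem fun l _ =>
    mul_mem (mul_mem (pow_mem hd k) ?_) (pow_mem hv l)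
  rw [← pow_mul_levelProj_mul_pow h n]
  exact mul_mem (mul_mem (pow_mem hv n) (hA _)) (pow_mem hd n)

variable {d' v' : B}

theorem levelProj_eq_zero (h : d * v = 1) (n : ℕ) : levelProj d v n = 0 := by
  rw [levelProj, h, sub_self, mul_zero, zero_mul]

theorem tailProj_eq_one (h : d * v = 1) (n : ℕ) : tailProj d v n = 1 :=
  pow_mul_pow_eq_one n h

theorem isUnit_of_levelProj_eq_zero (h : v * d = 1) {n : ℕ} (hn : levelProj d v n = 0) :
    IsUnit d := by
  refine isUnit_iff_exists.2 ⟨v, ?_, h⟩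
  have h0 := pow_mul_levelProj_mul_pow h n 1
  rw [hn, zero_mul, zero_mul, mul_zero, zero_mul, mul_one, isIdempotentElem_levelProj h 0,
    levelProj_zero, eq_comm, sub_eq_zero] at h0
  exact h0.symm

theorem levelProj_succ_mul (h : v * d = 1) (n : ℕ) :
    levelProj d v (n + 1) * d = d * levelProj d v n := by
  rw [levelProj_succ, mul_assoc, h, mul_one]

theorem exists_unit_eq_of_tailProj_eq (h : v * d = 1) (h' : v' * d' = 1) {m k : ℕ}
    (htail : tailProj d' v' k = tailProj d v m) :
    ∃ g : Bˣ, (g : B) = v ^ m * d' ^ k ∧ (↑g⁻¹ : B) = v' ^ k * d ^ m := by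
  refine ⟨⟨v ^ m * d' ^ k, v' ^ k * d ^ m, ?_, ?_⟩, rfl, rfl⟩
  · calc v ^ m * d' ^ k * (v' ^ k * d ^ m) = v ^ m * tailProj d' v' k * d ^ m := by
          rw [tailProj]; noncomm_ring
      _ = 1 := by rw [htail, pow_mul_tailProj h le_rfl, pow_mul_pow_eq_one m h]
  · calc v' ^ k * d ^ m * (v ^ m * d' ^ k) = v' ^ k * tailProj d v m * d' ^ k := by
          rw [tailProj]; noncomm_ring
      _ = 1 := by rw [← htail, pow_mul_tailProj h' le_rfl, pow_mul_pow_eq_one k h']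

theorem conj_levelProj (h : v * d = 1) {m k i : ℕ}
    (hi : levelProj d' v' (k + i) = levelProj d v (m + i)) :
    v ^ m * d' ^ k * levelProj d' v' i * (v' ^ k * d ^ m) = levelProj d v i := by
  calc v ^ m * d' ^ k * levelProj d' v' i * (v' ^ k * d ^ m)
      = v ^ m * levelProj d' v' (k + i) * d ^ m := by rw [levelProj_add]; noncomm_ring
    _ = v ^ m * d ^ m * levelProj d v i * (v ^ m * d ^ m) := by
      rw [hi, levelProj_add]; noncomm_ring
    _ = levelProj d v i := by rw [pow_mul_pow_eq_one m h, one_mul, mul_one]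

end OneSidedInverse

namespace DownUpData

section LeftInverse

open LaurentPolynomial

variable {K : Type u} [Field K] {q s : Kˣ} {κ c : K} {B C : Type*} [Ring B] [Algebra K B]
  [Ring C] [Algebra K C] (R : DownUpData q s κ c B)

theorem map_evalX (f : B →ₐ[K] C) (h : K[T;T⁻¹]) : f (R.evalX h) = (R.map f).evalX h := by
  refine DFunLike.congr_fun (f := f.comp R.evalX) (laurentPolynomial_algHom_ext ?_) h
  rw [AlgHom.comp_apply, evalX_T_one, evalX_T_one, map_x]

theorem semiconjBy_evalX (S : DownUpData q s κ c B) {b : B} {k : Kˣ}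
    (h : SemiconjBy b R.x ((k : K) • S.x)) (f : K[T;T⁻¹]) :
    SemiconjBy b (R.evalX f) (S.evalX (laurentTwist k f)) := by
  have twist (n : ℤ) : laurentTwist k (T n) = C ((k ^ n : Kˣ) : K) * T n := by
    simpa using laurentTwist_C_mul_T k 1 n
  have hT : SemiconjBy b (R.evalX (T 1)) (S.evalX (laurentTwist k (T 1))) := by
    rwa [twist, ← smul_eq_C_mul, map_smul, evalX_T_one, evalX_T_one, zpow_one]
  have hT' : SemiconjBy b (R.evalX (T (-1))) (S.evalX (laurentTwist k (T (-1)))) := by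
    have h1 : T (-1) * T 1 = (1 : K[T;T⁻¹]) := by rw [← T_add, neg_add_cancel, T_zero]
    have hX : R.evalX (T 1) * R.evalX (T (-1)) = 1 := by rw [← map_mul, mul_comm, h1, map_one]
    have hY : S.evalX (laurentTwist k (T (-1))) * S.evalX (laurentTwist k (T 1)) = 1 := by
      rw [← map_mul, ← map_mul, h1, map_one, map_one]
    rw [SemiconjBy, ← one_mul (b * _), ← hY, mul_assoc, ← mul_assoc _ b, ← hT.eq, mul_assoc b, hX,
      mul_one]
  induction f using LaurentPolynomial.induction_on with
  | h_C a =>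
    rw [← mul_one (C a), ← smul_eq_C_mul, map_smul, map_one, map_smul, map_smul, map_one, map_one]
    exact (SemiconjBy.one_right b).smul_right a
  | h_add ih ih' => simpa only [map_add] using ih.add_right ih'
  | h_C_mul_T n a ih =>
    rw [T_add, ← mul_assoc, map_mul R.evalX, map_mul (laurentTwist k), map_mul S.evalX]
    exact ih.mul_right hT
  | h_C_mul_T_Z n a ih =>
    rw [sub_eq_add_neg, T_add, ← mul_assoc, map_mul R.evalX, map_mul (laurentTwist k),
      map_mul S.evalX]
    exact ih.mul_right hT'

/-- The left inverse `(ud)⁻¹u` of `d`, when `1` is not in the spectrum of `t`. -/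
def v : B := Ring.inverse (R.u * R.d) * R.u

section Inverse

variable {R} (hκ : κ ≠ 0) (h1 : (1 : K) ∈ resolventSet K R.t)
include hκ h1

theorem isUnit_u_mul_d : IsUnit (R.u * R.d) := by
  rw [R.u_mul_d, ← neg_sub, mul_neg, ← map_one (algebraMap K B)]
  exact (R.isUnit_x.mul h1).neg.smul (Units.mk0 κ hκ)

theorem v_mul_d : R.v * R.d = 1 := by
  rw [v, mul_assoc, Ring.inverse_mul_cancel _ (isUnit_u_mul_d hκ h1)]

theorem u_mul_d_mul_v : R.u * R.d * R.v = R.u := by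
  rw [v, Ring.mul_inverse_cancel_left _ _ (isUnit_u_mul_d hκ h1)]

theorem inverse_u_mul_d_mem_base : Ring.inverse (R.u * R.d) ∈ R.base := by
  have ht : R.t - 1 = -(algebraMap K B 1 - R.t) := by rw [map_one, neg_sub]
  have h : R.u * R.d * (-κ⁻¹ • (resolvent R.t (1 : K) * Ring.inverse R.x)) = 1 := by
    rw [R.u_mul_d, ht, mul_neg, smul_neg, neg_smul, neg_mul_neg, smul_mul_smul_comm,
      mul_inv_cancel₀ hκ, mul_assoc, ← mul_assoc (_ - _), resolvent,
      Ring.mul_inverse_cancel _ h1, one_mul, Ring.mul_inverse_cancel _ R.isUnit_x, one_smul]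
  rw [← mul_one (Ring.inverse _), ← h, Ring.inverse_mul_cancel_left _ _ (isUnit_u_mul_d hκ h1)]
  exact R.base.smul_mem
    (R.base.mul_mem (R.resolvent_mem_base h1) R.inverse_x_mem_base) _

theorem v_x : SemiconjBy R.v ((s : K) • R.x) R.x :=
  (R.commute_of_mem_base (inverse_u_mul_d_mem_base hκ h1) R.x_mem_base).semiconjBy.mul_left R.u_x

theorem v_t : SemiconjBy R.v ((q : K) • R.t) R.t :=
  (R.commute_of_mem_base (inverse_u_mul_d_mem_base hκ h1) R.t_mem_base).semiconjBy.mul_left R.u_t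

theorem exists_v_pow_eq_mul_u_pow
    (hA : ∀ a ∈ resolventSet K R.t, (q : K) * a ∈ resolventSet K R.t) (n : ℕ) :
    ∃ a ∈ R.base, R.v ^ n = a * R.u ^ n := by
  induction n with
  | zero => exact ⟨1, R.base.one_mem, by simp⟩
  | succ n ih =>
    obtain ⟨a, ha, h⟩ := ih
    obtain ⟨b, hb, -, hub⟩ :=
      R.exists_semiconjBy_pow_of_mem_base hA n (inverse_u_mul_d_mem_base hκ h1)
    refine ⟨a * b, R.base.mul_mem ha hb, ?_⟩
    rw [pow_succ, h, v, mul_assoc, ← mul_assoc (R.u ^ n), hub.eq, pow_succ]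
    simp only [mul_assoc]

theorem commute_levelProj_of_mem_base (n : ℕ) {a : B} (ha : a ∈ R.base) :
    Commute (levelProj R.d R.v n) a :=
  R.commute_of_mem_base_of_commute ha (commute_levelProj R.d_x (v_x hκ h1) n)
    (commute_levelProj R.d_t (v_t hκ h1) n)

theorem u_mul_levelProj_zero : R.u * levelProj R.d R.v 0 = 0 := by
  rw [levelProj_zero, mul_sub, mul_one, ← mul_assoc, u_mul_d_mul_v hκ h1, sub_self]

theorem t_mul_levelProj (n : ℕ) :
    R.t * levelProj R.d R.v n = (q : K)⁻¹ ^ (n + 1) • levelProj R.d R.v n := by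
  induction n with
  | zero =>
    have h : κ * s ≠ 0 := mul_ne_zero hκ s.ne_zero
    have hx : R.x * (((q : K) • R.t - 1) * levelProj R.d R.v 0) = 0 := by
      rw [← mul_assoc, ← inv_smul_smul₀ h (R.x * _), ← R.d_mul_u, smul_mul_assoc, mul_assoc,
        u_mul_levelProj_zero hκ h1, mul_zero, smul_zero]
    rw [R.isUnit_x.mul_right_eq_zero, sub_mul, one_mul, sub_eq_zero, smul_mul_assoc] at hx
    rw [zero_add, pow_one, eq_inv_smul_iff₀ q.ne_zero, hx]
  | succ n ih =>
    rw [levelProj_succ, pow_succ', mul_smul, eq_inv_smul_iff₀ q.ne_zero, ← smul_mul_assoc,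
      ← mul_assoc, ← mul_assoc, ← R.d_t.eq, mul_assoc R.d, ih, mul_smul_comm, smul_mul_assoc]

end Inverse

end LeftInverse

section Levels

open LaurentPolynomial Module SkewLaurent

variable {K : Type u} [Field K] {q s : Kˣ} {κ c : K} {B : Type*} [Ring B] [Algebra K B]
  {R : DownUpData q s κ c B}

section Fock

variable {F : Type*} [Field F] [Algebra K F] {ξ : Fˣ} {hc : ∀ k : ℕ, c ≠ (q : K)⁻¹ ^ (k + 1)}
  {ρ : B →ₐ[K] End F (ℕ →₀ F)} (hρ : R.map ρ = fock q s κ ξ hc)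
include hρ

theorem map_evalX_single_zero (f : K[T;T⁻¹]) (a : F) :
    ρ (R.evalX f) (Finsupp.single 0 a) = Finsupp.single 0 (laurentEval ξ f * a) := by
  have hx (a : F) : ρ R.x (Finsupp.single 0 a) = Finsupp.single 0 (ξ * a) := by
    rw [map_x_single hρ, pow_zero, map_one, one_mul, mul_comm]
  induction f using LaurentPolynomial.induction_on generalizing a with
  | h_C k =>
    rw [← mul_one (C k), ← smul_eq_C_mul, map_smul, map_one, map_smul, map_one, map_smul, map_one,
      smul_one_mul, LinearMap.smul_apply, End.one_apply, Finsupp.smul_single]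
  | h_add hf hg =>
    rw [map_add, map_add, LinearMap.add_apply, hf, hg, map_add, add_mul, Finsupp.single_add]
  | h_C_mul_T n k ih =>
    rw [T_add, ← mul_assoc, map_mul R.evalX, map_mul ρ, End.mul_apply, evalX_T_one, hx, ih,
      map_mul (laurentEval ξ) (_ * _), laurentEval_T ξ 1, zpow_one, mul_assoc]
  | h_C_mul_T_Z n k ih =>
    have hx' : ρ (Ring.inverse R.x) (Finsupp.single 0 a) = Finsupp.single 0 ((ξ⁻¹ : Fˣ) * a) := by
      rw [← ξ.mul_inv_cancel_left a, ← hx, ← End.mul_apply, ← map_mul,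
        Ring.inverse_mul_cancel _ R.isUnit_x, map_one, End.one_apply, ξ.mul_inv_cancel_left]
    rw [sub_eq_add_neg, T_add, ← mul_assoc, map_mul R.evalX, map_mul ρ, End.mul_apply,
      evalX_T_neg_one, hx', ih, map_mul (laurentEval ξ) (_ * _), laurentEval_T ξ (-1),
      zpow_neg_one, mul_assoc]

theorem map_v_pow_single_of_lt {m n : ℕ} (hκ : κ ≠ 0) (h1 : (1 : K) ∈ resolventSet K R.t)
    (hmn : m < n) (a : F) : ρ (R.v ^ n) (Finsupp.single m a) = 0 := by
  obtain ⟨k, rfl⟩ := Nat.exists_eq_add_of_lt hmn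
  have hv : ρ R.v (Finsupp.single 0 a) = 0 := by
    rw [v, map_mul, End.mul_apply, map_u_single_zero hρ, map_zero]
  rw [← zero_add m, ← map_d_pow_single hρ, ← End.mul_apply, ← map_mul, zero_add,
    show m + k + 1 = k + 1 + m by omega, pow_add, mul_assoc, pow_mul_pow_eq_one m (v_mul_d hκ h1),
    mul_one, pow_succ, map_mul, End.mul_apply, hv, map_zero]

theorem map_tailProj_single (hκ : κ ≠ 0) (h1 : (1 : K) ∈ resolventSet K R.t) (n m : ℕ) (a : F) :
    ρ (tailProj R.d R.v n) (Finsupp.single m a) = if n ≤ m then Finsupp.single m a else 0 := by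
  split_ifs with h
  · rw [← zero_add m, ← map_d_pow_single hρ, ← End.mul_apply, ← map_mul,
      tailProj_mul_pow (v_mul_d hκ h1) h]
  · rw [tailProj, map_mul, End.mul_apply, map_v_pow_single_of_lt hρ hκ h1 (not_le.1 h), map_zero]

theorem map_levelProj_single (hκ : κ ≠ 0) (h1 : (1 : K) ∈ resolventSet K R.t) (n m : ℕ) (a : F) :
    ρ (levelProj R.d R.v n) (Finsupp.single m a) = if m = n then Finsupp.single m a else 0 := by
  rw [levelProj_eq_sub, map_sub, LinearMap.sub_apply, map_tailProj_single hρ hκ h1,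
    map_tailProj_single hρ hκ h1]
  grind

end Fock

section Torsion

variable (hκ : κ ≠ 0) (h1 : (1 : K) ∈ resolventSet K R.t)
  (hA : ∀ a ∈ resolventSet K R.t, (q : K) * a ∈ resolventSet K R.t)
include hκ h1 hA

theorem IsTorsion.exists_pow_mul_eq_zero {b : B} (hb : R.IsTorsion b) :
    ∃ N, ∀ n ≥ N, R.v ^ n * b = 0 ∧ b * R.d ^ n = 0 := by
  obtain ⟨N, hu, hd⟩ := hb
  obtain ⟨a, -, ha⟩ := exists_v_pow_eq_mul_u_pow hκ h1 hA N
  refine ⟨N, fun n hn => ?_⟩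
  obtain ⟨k, rfl⟩ := Nat.exists_eq_add_of_le hn
  rw [pow_add, (Commute.pow_pow_self R.v N k).eq, mul_assoc, ha, mul_assoc, hu, mul_zero, mul_zero,
    pow_add, ← mul_assoc, hd, zero_mul]
  exact ⟨rfl, rfl⟩

theorem IsTorsion.exists_compression_eq {b : B} (hb : R.IsTorsion b) :
    ∃ n, (1 - tailProj R.d R.v n) * b * (1 - tailProj R.d R.v n) = b := by
  obtain ⟨n, hn⟩ := hb.exists_pow_mul_eq_zero hκ h1 hA
  obtain ⟨hv, hd⟩ := hn n le_rfl
  refine ⟨n, ?_⟩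
  rw [sub_mul, one_mul, tailProj, mul_assoc, hv, mul_zero, sub_zero, mul_sub, mul_one, ← mul_assoc,
    hd, zero_mul, sub_zero]

theorem IsTorsion.eq_zero {b : B} (hb : R.IsTorsion b)
    (h : ∀ k l, levelProj R.d R.v 0 * (R.v ^ k * b * R.d ^ l) * levelProj R.d R.v 0 = 0) :
    b = 0 := by
  obtain ⟨n, hn⟩ := hb.exists_compression_eq hκ h1 hA
  rw [← hn, compression_eq_sum]
  exact Finset.sum_eq_zero fun k _ => Finset.sum_eq_zero fun l _ => by
    rw [h, mul_zero, zero_mul]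

end Torsion

theorem semiconjBy_d_pow_evalX (n : ℕ) (f : K[T;T⁻¹]) :
    SemiconjBy (R.d ^ n) (R.evalX f) (R.evalX (laurentTwist (s ^ n) f)) := by
  refine semiconjBy_evalX R R ?_ f
  induction n with
  | zero => simp
  | succ n ih =>
    rw [pow_succ', pow_succ, Units.val_mul, mul_smul]
    exact (R.d_x.smul_right _).mul_left ih

variable (hκ : κ ≠ 0) (h1 : (1 : K) ∈ resolventSet K R.t)
include hκ h1

theorem exists_mul_levelProj_zero_eq (hres : ∀ a ∈ resolventSet K R.t, a ≠ (q : K)⁻¹) {a : B}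
    (ha : a ∈ R.base) : ∃ f, a * levelProj R.d R.v 0 = R.evalX f * levelProj R.d R.v 0 := by
  have ht : R.t * levelProj R.d R.v 0 = (q : K)⁻¹ • levelProj R.d R.v 0 := by
    simpa using t_mul_levelProj hκ h1 0
  induction ha using R.base_induction with
  | x => exact ⟨T 1, by rw [evalX_T_one]⟩
  | x_inv => exact ⟨T (-1), by rw [evalX_T_neg_one]⟩
  | t => exact ⟨algebraMap K _ (q : K)⁻¹, by rw [AlgHom.commutes, ← Algebra.smul_def, ht]⟩
  | resolvent a ha =>
    refine ⟨algebraMap K _ (a - (q : K)⁻¹)⁻¹, ?_⟩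
    rw [AlgHom.commutes, ← Algebra.smul_def, eq_inv_smul_iff₀ (sub_ne_zero.2 (hres a ha)),
      ← mul_smul_comm, sub_smul, ← ht, Algebra.smul_def, ← sub_mul, resolvent,
      Ring.inverse_mul_cancel_left _ _ ha]
  | algebraMap k => exact ⟨algebraMap K _ k, by rw [AlgHom.commutes]⟩
  | add a b _ _ iha ihb =>
    obtain ⟨f, hf⟩ := iha
    obtain ⟨g, hg⟩ := ihb
    exact ⟨f + g, by rw [add_mul, hf, hg, map_add, add_mul]⟩
  | mul a b ha _ iha ihb =>
    obtain ⟨f, hf⟩ := iha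
    obtain ⟨g, hg⟩ := ihb
    refine ⟨f * g, ?_⟩
    rw [mul_assoc, hg, ← mul_assoc, (R.commute_of_mem_base ha (R.evalX_mem_base g)).eq, mul_assoc,
      hf, ← mul_assoc, ← map_mul, mul_comm g]

theorem exists_levelProj_zero_mul_mul_eq (hR : R.IsUniversal)
    (hA : ∀ a ∈ resolventSet K R.t, (q : K) * a ∈ resolventSet K R.t)
    (hres : ∀ a ∈ resolventSet K R.t, a ≠ (q : K)⁻¹) (b : B) :
    ∃ f, levelProj R.d R.v 0 * b * levelProj R.d R.v 0 = R.evalX f * levelProj R.d R.v 0 := by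
  have hd := levelProj_zero_mul (v_mul_d hκ h1)
  have hu := u_mul_levelProj_zero hκ h1
  induction b using hR.induction hA with
  | d_pow_mul_u_pow i j a ha =>
    obtain ⟨f, hf⟩ := exists_mul_levelProj_zero_eq hκ h1 hres ha
    obtain _ | i := i
    · obtain _ | j := j
      · refine ⟨f, ?_⟩
        rw [pow_zero, pow_zero, one_mul, mul_one,
          (commute_levelProj_of_mem_base hκ h1 0 ha).eq, mul_assoc,
          isIdempotentElem_levelProj (v_mul_d hκ h1), hf]
      · refine ⟨0, ?_⟩
        simp only [pow_succ, mul_assoc, hu, mul_zero, map_zero, zero_mul]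
    · refine ⟨0, ?_⟩
      rw [pow_succ', mul_assoc R.d, mul_assoc R.d, ← mul_assoc _ R.d, hd, map_zero]
      simp only [zero_mul]
  | add a b iha ihb =>
    obtain ⟨f, hf⟩ := iha
    obtain ⟨g, hg⟩ := ihb
    exact ⟨f + g, by rw [mul_add, add_mul, hf, hg, map_add, add_mul]⟩
  | smul k a iha =>
    obtain ⟨f, hf⟩ := iha
    exact ⟨k • f, by rw [mul_smul_comm, smul_mul_assoc, hf, map_smul, smul_mul_assoc]⟩

theorem exists_levelProj_mul_mul_eq (hR : R.IsUniversal)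
    (hA : ∀ a ∈ resolventSet K R.t, (q : K) * a ∈ resolventSet K R.t)
    (hres : ∀ a ∈ resolventSet K R.t, a ≠ (q : K)⁻¹) (n : ℕ) (b : B) :
    ∃ f, levelProj R.d R.v n * b * levelProj R.d R.v n = R.evalX f * levelProj R.d R.v n := by
  obtain ⟨f, hf⟩ := exists_levelProj_zero_mul_mul_eq hκ h1 hR hA hres (R.v ^ n * b * R.d ^ n)
  refine ⟨laurentTwist (s ^ n) f, ?_⟩
  have h := congrArg (R.d ^ n * · * R.v ^ n) hf
  simp only [levelProj_zero, ← mul_assoc, (semiconjBy_d_pow_evalX n f).eq] at h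
  simpa only [levelProj, ← mul_assoc] using h

end Levels

section Faithful

open LaurentPolynomial Module SkewLaurent

variable {K : Type u} [Field K] {q s : Kˣ} {κ c : K} {B : Type*} [Ring B] [Algebra K B]
  {R : DownUpData q s κ c B} {F : Type*} [Field F] [Algebra K F] {ξ : Fˣ}
  {hc : ∀ k : ℕ, c ≠ (q : K)⁻¹ ^ (k + 1)} {ρ : B →ₐ[K] End F (ℕ →₀ F)}
  (hρ : R.map ρ = fock q s κ ξ hc) (hξ : Function.Injective (laurentEval ξ : K[T;T⁻¹] →ₐ[K] F))
  (hκ : κ ≠ 0) (h1 : (1 : K) ∈ resolventSet K R.t)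
include hρ hξ hκ h1

theorem eq_zero_of_map_evalX_mul_levelProj_zero {f : K[T;T⁻¹]}
    (h : ρ (R.evalX f * levelProj R.d R.v 0) = 0) : f = 0 := by
  have h' := DFunLike.congr_fun h (Finsupp.single 0 (1 : F))
  rw [map_mul, End.mul_apply, map_levelProj_single hρ hκ h1, if_pos rfl,
    map_evalX_single_zero hρ, mul_one, LinearMap.zero_apply, Finsupp.single_eq_zero] at h'
  exact hξ (h'.trans (map_zero _).symm)

theorem eq_zero_of_evalX_mul_levelProj {n : ℕ} {f : K[T;T⁻¹]}
    (h : R.evalX f * levelProj R.d R.v n = 0) : f = 0 := by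
  have hd := semiconjBy_d_pow_evalX (R := R) n (laurentTwist (s ^ n)⁻¹ f)
  rw [laurentTwist_laurentTwist_inv] at hd
  have h0 : R.d ^ n * (R.evalX (laurentTwist (s ^ n)⁻¹ f) * levelProj R.d R.v 0) = 0 := by
    have := congrArg (· * R.d ^ n) h
    simp only [levelProj, pow_zero, mul_one, one_mul, mul_assoc, zero_mul,
      pow_mul_pow_eq_one n (v_mul_d hκ h1)] at this ⊢
    rw [← mul_assoc, hd.eq, mul_assoc, this]
  have hf : laurentTwist (s ^ n)⁻¹ f = 0 :=
    eq_zero_of_map_evalX_mul_levelProj_zero hρ hξ hκ h1 <| by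
      rw [← one_mul (_ * _), ← pow_mul_pow_eq_one n (v_mul_d hκ h1), mul_assoc, h0, mul_zero,
        map_zero]
  rw [← laurentTwist_laurentTwist_inv (s ^ n) f, hf, map_zero]

theorem IsTorsion.eq_zero_of_map_eq_zero (hR : R.IsUniversal) {b : B} (hb : R.IsTorsion b)
    (h : ρ b = 0) : b = 0 := by
  have hA := mul_mem_resolventSet_of_map_eq_fock hρ hκ
  have hres (a) (ha : a ∈ resolventSet K R.t) : a ≠ (q : K)⁻¹ := by
    simpa using ne_inv_pow_of_mem_resolventSet hρ ha 0
  refine hb.eq_zero hκ h1 hA fun k l => ?_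
  obtain ⟨f, hf⟩ := exists_levelProj_zero_mul_mul_eq hκ h1 hR hA hres (R.v ^ k * b * R.d ^ l)
  have hf0 : f = 0 := eq_zero_of_map_evalX_mul_levelProj_zero hρ hξ hκ h1 <| by
    rw [← hf, map_mul, map_mul, map_mul, map_mul, h]
    simp only [mul_zero, zero_mul]
  rw [hf, hf0, map_zero, zero_mul]

end Faithful

section FixedLevels

open LaurentPolynomial Module SkewLaurent

variable {K : Type u} [Field K] {q s : Kˣ} {κ c : K} {B : Type*} [Ring B] [Algebra K B]
  {R : DownUpData q s κ c B} {F : Type*} [Field F] [Algebra K F] {ξ : Fˣ}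
  {hc : ∀ k : ℕ, c ≠ (q : K)⁻¹ ^ (k + 1)} {ρ : B →ₐ[K] End F (ℕ →₀ F)}
  {ψ : B →ₐ[K] SkewLaurent q s} {l ν : Kˣ} {θ : B →ₐ[K] B}

theorem IsTorsion.exists_levelProj_mul_eq_zero (hκ : κ ≠ 0) (h1 : (1 : K) ∈ resolventSet K R.t)
    (hA : ∀ a ∈ resolventSet K R.t, (q : K) * a ∈ resolventSet K R.t) {b : B}
    (hb : R.IsTorsion b) :
    ∃ n, levelProj R.d R.v n * b = 0 ∧ b * levelProj R.d R.v n = 0 := by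
  obtain ⟨N, hN⟩ := hb.exists_pow_mul_eq_zero hκ h1 hA
  obtain ⟨hv, hd⟩ := hN N le_rfl
  exact ⟨N, by rw [levelProj, mul_assoc, hv, mul_zero],
    by rw [levelProj, mul_assoc (_ ^ _), ← mul_assoc, hd, zero_mul]⟩

theorem ext_of_mul_levelProj (hρ : R.map ρ = fock q s κ ξ hc) (hκ : κ ≠ 0)
    (h1 : (1 : K) ∈ resolventSet K R.t) {b b' : B}
    (h : ∀ n, b * levelProj R.d R.v n = b' * levelProj R.d R.v n) : ρ b = ρ b' := by
  refine Finsupp.lhom_ext fun n a => ?_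
  have hn : ρ (levelProj R.d R.v n) (Finsupp.single n a) = Finsupp.single n a := by
    rw [map_levelProj_single hρ hκ h1, if_pos rfl]
  rw [← hn, ← End.mul_apply, ← End.mul_apply, ← map_mul, ← map_mul, h]

variable (hρ : R.map ρ = fock q s κ ξ hc)
  (hξ : Function.Injective (laurentEval ξ : K[T;T⁻¹] →ₐ[K] F))
  (hψ : IsMonomial (R.map ψ) l ν) (hqs : ∀ m n : ℤ, q ^ m * s ^ n = 1 → m = 0 ∧ n = 0)
  (hκ : κ ≠ 0) (h1 : (1 : K) ∈ resolventSet K R.t) (hR : R.IsUniversal)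
  (hθ : ∀ n, θ (levelProj R.d R.v n) = levelProj R.d R.v n)

include hρ hξ hψ hqs hκ h1 hR hθ in
theorem map_t_eq_of_map_levelProj {μ : K} (hμ : ψ (θ R.t) = ψ (μ • R.t)) : θ R.t = R.t := by
  have hA := mul_mem_resolventSet_of_map_eq_fock hρ hκ
  have hθt (n : ℕ) : θ R.t * levelProj R.d R.v n = R.t * levelProj R.d R.v n := by
    rw [t_mul_levelProj hκ h1, ← hθ n, ← map_mul, t_mul_levelProj hκ h1, map_smul, hθ]
  obtain rfl : μ = 1 := by
    have htors : R.IsTorsion (θ R.t - μ • R.t) := by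
      rw [← map_eq_zero_iff_isTorsion hR hA hqs hψ, map_sub, hμ, sub_self]
    obtain ⟨n, -, hn⟩ := htors.exists_levelProj_mul_eq_zero hκ h1 hA
    rw [sub_mul, hθt, smul_mul_assoc, t_mul_levelProj hκ h1, smul_comm, ← smul_sub,
      smul_eq_zero_iff_right (pow_ne_zero _ (inv_ne_zero q.ne_zero))] at hn
    by_contra h
    have h0 : R.evalX 1 * levelProj R.d R.v n = 0 := by
      rw [map_one, one_mul, ← smul_eq_zero_iff_right (sub_ne_zero.2 h), ← neg_eq_zero, ← neg_smul,
        neg_sub, sub_smul, one_smul, hn]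
    exact one_ne_zero (eq_zero_of_evalX_mul_levelProj hρ hξ hκ h1 h0)
  rw [one_smul] at hμ
  refine sub_eq_zero.1 (IsTorsion.eq_zero_of_map_eq_zero hρ hξ hκ h1 hR ?_ ?_)
  · rw [← map_eq_zero_iff_isTorsion hR hA hqs hψ, map_sub, hμ, sub_self]
  · rw [map_sub, ext_of_mul_levelProj hρ hκ h1 hθt, sub_self]

include hρ hψ hqs hκ h1 hR in
theorem exists_semiconjBy_levelProj {k : Kˣ} (hk : ψ (θ R.x) = ψ ((k : K) • R.x)) :
    ∃ n, ∀ f, SemiconjBy (levelProj R.d R.v n) (θ (R.evalX f)) (R.evalX (laurentTwist k f)) := by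
  have hA := mul_mem_resolventSet_of_map_eq_fock hρ hκ
  have htors : R.IsTorsion (θ R.x - (k : K) • R.x) := by
    rw [← map_eq_zero_iff_isTorsion hR hA hqs hψ, map_sub, hk, sub_self]
  obtain ⟨n, hn, -⟩ := htors.exists_levelProj_mul_eq_zero hκ h1 hA
  refine ⟨n, fun f => map_evalX R θ f ▸ semiconjBy_evalX (R.map θ) R ?_ f⟩
  rw [mul_sub, sub_eq_zero] at hn
  exact hn.trans ((commute_levelProj_of_mem_base hκ h1 n R.x_mem_base).smul_right _).eq

include hρ hψ hqs hκ h1 hR hθ in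
theorem mem_range_of_isTorsion {k : Kˣ} (hk : ψ (θ R.x) = ψ ((k : K) • R.x)) {b : B}
    (hb : R.IsTorsion b) : b ∈ θ.range := by
  have hA := mul_mem_resolventSet_of_map_eq_fock hρ hκ
  obtain ⟨n, hn⟩ := exists_semiconjBy_levelProj hρ hψ hqs hκ h1 hR hk
  obtain ⟨m, hm⟩ := hb.exists_compression_eq hκ h1 hA
  have hres (a) (ha : a ∈ resolventSet K R.t) : a ≠ (q : K)⁻¹ := by
    simpa using ne_inv_pow_of_mem_resolventSet hρ ha 0
  have hlev (n : ℕ) : levelProj (θ R.d) (θ R.v) n = levelProj R.d R.v n := by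
    rw [← map_levelProj, hθ]
  rw [← hm, ← tailProj_eq_of_levelProj_eq hlev]
  refine compression_mem (A := θ.range) (n := n) (by rw [← map_mul, v_mul_d hκ h1, map_one])
    (θ.mem_range_self _) (θ.mem_range_self _) (fun b => ?_) m b
  obtain ⟨f, hf⟩ := exists_levelProj_mul_mul_eq hκ h1 hR hA hres n b
  have h := (hn (laurentTwist k⁻¹ f)).eq
  rw [laurentTwist_laurentTwist_inv, ← hθ, ← map_mul] at h
  rw [hlev, hf, ← hθ, ← h]
  exact ⟨_, rfl⟩

include hρ hξ hψ hqs hκ h1 hR hθ in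
theorem injective_of_map_levelProj {μ : Kˣ} (hμ : ψ (θ R.t) = ψ ((μ : K) • R.t)) :
    Function.Injective θ := by
  have hA := mul_mem_resolventSet_of_map_eq_fock hρ hκ
  have hres (a) (ha : a ∈ resolventSet K R.t) : a ≠ (q : K)⁻¹ := by
    simpa using ne_inv_pow_of_mem_resolventSet hρ ha 0
  obtain ⟨k, hk⟩ := exists_map_comp_x_eq_smul hψ hqs hκ hμ
  obtain ⟨l', hψθ⟩ := exists_isMonomial_comp hψ hqs hκ hμ
  obtain ⟨n, hn⟩ := exists_semiconjBy_levelProj hρ hψ hqs hκ h1 hR hk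
  refine (injective_iff_map_eq_zero θ).2 fun b hb => ?_
  have htors : R.IsTorsion b := by
    rw [← map_eq_zero_iff_isTorsion hR hA hqs hψθ, AlgHom.comp_apply, hb, map_zero]
  refine htors.eq_zero hκ h1 hA fun i j => ?_
  obtain ⟨f, hf⟩ := exists_levelProj_mul_mul_eq hκ h1 hR hA hres n
    (R.d ^ n * (R.v ^ i * b * R.d ^ j) * R.v ^ n)
  have hf0 : R.evalX (laurentTwist k f) * levelProj R.d R.v n = 0 := by
    have h := congrArg θ hf
    simp only [map_mul, hb, mul_zero, zero_mul] at h
    rw [← (hn f).eq, ← hθ, ← map_mul, commute_levelProj_of_mem_base hκ h1 n (R.evalX_mem_base f),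
      map_mul, ← h]
  have hf0 := laurentTwist_injective k
    ((eq_zero_of_evalX_mul_levelProj hρ hξ hκ h1 hf0).trans (map_zero _).symm)
  rw [← pow_mul_levelProj_mul_pow (v_mul_d hκ h1) n, hf, hf0, map_zero, zero_mul, mul_zero,
    zero_mul]

end FixedLevels

end DownUpData

namespace SkewLaurent

variable {K : Type u} [Field K] {q s : Kˣ}

theorem commute_of_mem_homogeneous_zero {a b : SkewLaurent q s} (ha : a ∈ homogeneous q s 0)
    (hb : b ∈ homogeneous q s 0) : Commute a b := by
  obtain ⟨f, rfl⟩ := ha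
  obtain ⟨g, rfl⟩ := hb
  rw [Commute, SemiconjBy, monomial_zero_mul, monomial_zero_mul, mul_comm]

theorem mul_mul_eq_of_mul_eq_one {D V D' V' z : SkewLaurent q s} (hV : V ∈ homogeneous q s (-1))
    (hD' : D' ∈ homogeneous q s 1) (hz : z ∈ homogeneous q s 0) (h : V * D = 1)
    (h' : V' * D' = 1) : D * z * V = D' * z * V' := by
  have hcomm : Commute (V * D') z :=
    commute_of_mem_homogeneous_zero (SetLike.mul_mem_graded hV hD') hz
  calc D * z * V = D * z * V * (D' * V') := by rw [mul_eq_one_comm.1 h', mul_one]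
    _ = D * (z * (V * D')) * V' := by noncomm_ring
    _ = D * V * D' * z * V' := by rw [← hcomm.eq]; noncomm_ring
    _ = D' * z * V' := by rw [mul_eq_one_comm.1 h, one_mul]

end SkewLaurent

namespace DownUpData

open LaurentPolynomial Module SkewLaurent

variable {K : Type u} [Field K] {q s : Kˣ} {κ c : K} {B : Type*} [Ring B] [Algebra K B]
  {R : DownUpData q s κ c B} {F : Type*} [Field F] [Algebra K F] {ξ : Fˣ}
  {hc : ∀ k : ℕ, c ≠ (q : K)⁻¹ ^ (k + 1)} {ρ : B →ₐ[K] End F (ℕ →₀ F)}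
  {ψ : B →ₐ[K] SkewLaurent q s} {l ν : Kˣ} {θ : B →ₐ[K] B}

theorem v_mem_part (hκ : κ ≠ 0) (h1 : (1 : K) ∈ resolventSet K R.t) : R.v ∈ R.part (-1) := by
  have h := mem_part (R := R) (i := 0) (j := 1) (n := -1) (inverse_u_mul_d_mem_base hκ h1)
    (by norm_num)
  rwa [pow_zero, one_mul, pow_one] at h

theorem map_v_mem_homogeneous (hψ : IsMonomial (R.map ψ) l ν)
    (hqs : ∀ m n : ℤ, q ^ m * s ^ n = 1 → m = 0 ∧ n = 0) (hκ : κ ≠ 0)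
    (h1 : (1 : K) ∈ resolventSet K R.t) : ψ R.v ∈ homogeneous q s (-1) :=
  map_mem_homogeneous_of_mem_part hψ hqs (v_mem_part hκ h1)

theorem u_mul_d_mem_base (R : DownUpData q s κ c B) : R.u * R.d ∈ R.base := by
  rw [R.u_mul_d]
  exact R.base.smul_mem
    (mul_mem R.x_mem_base (sub_mem R.t_mem_base (one_mem _))) _

section Range

variable (hρ : R.map ρ = fock q s κ ξ hc)
  (hψ : IsMonomial (R.map ψ) l ν) (hqs : ∀ m n : ℤ, q ^ m * s ^ n = 1 → m = 0 ∧ n = 0)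
  (hκ : κ ≠ 0) (h1 : (1 : K) ∈ resolventSet K R.t) (hR : R.IsUniversal)
  (hθ : ∀ n, θ (levelProj R.d R.v n) = levelProj R.d R.v n) (ht : θ R.t = R.t)
include hρ hψ hqs hκ h1 hR hθ ht

theorem mem_range_of_map_eq {b b' : B} (h : ψ b = ψ b') (hb' : b' ∈ θ.range) : b ∈ θ.range := by
  have hA := mul_mem_resolventSet_of_map_eq_fock hρ hκ
  obtain ⟨k, hk⟩ := exists_map_comp_x_eq_smul (μ := 1) hψ hqs hκ
    (by rw [ht, Units.val_one, one_smul])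
  rw [← sub_add_cancel b b']
  refine add_mem (mem_range_of_isTorsion hρ hψ hqs hκ h1 hR hθ hk ?_) hb'
  rw [← map_eq_zero_iff_isTorsion hR hA hqs hψ, map_sub, h, sub_self]

theorem base_le_range_of_map_levelProj : R.base ≤ θ.range := by
  have of_map_eq {b b' : B} (h : ψ b = ψ (θ b')) : b ∈ θ.range :=
    mem_range_of_map_eq hρ hψ hqs hκ h1 hR hθ ht h (θ.mem_range_self _)
  obtain ⟨k, hk⟩ := exists_map_comp_x_eq_smul (μ := 1) hψ hqs hκ
    (by rw [ht, Units.val_one, one_smul])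
  have hx : ψ R.x = ψ (θ ((↑k⁻¹ : K) • R.x)) := by
    rw [map_smul, map_smul, hk, map_smul, smul_smul, Units.inv_mul, one_smul]
  refine Algebra.adjoin_le ?_
  rintro _ ((rfl | rfl | rfl) | ⟨a, ha, rfl⟩)
  · exact of_map_eq hx
  · have hu : IsUnit ((↑k⁻¹ : K) • R.x) := R.isUnit_x.smul k⁻¹
    refine of_map_eq (b' := Ring.inverse ((↑k⁻¹ : K) • R.x)) ?_
    rw [map_ringInverse θ hu, map_ringInverse ψ (hu.map θ), ← hx, map_ringInverse ψ R.isUnit_x]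
  · exact ⟨_, ht⟩
  · exact ⟨_, (map_algHom_resolvent ha).trans (by rw [ht])⟩

theorem d_mul_mul_v_mem_range {z : B} (hz : z ∈ θ.range) (hz0 : ψ z ∈ homogeneous q s 0) :
    R.d * z * R.v ∈ θ.range := by
  obtain ⟨l', hψθ⟩ := exists_isMonomial_comp (μ := 1) hψ hqs hκ
    (by rw [ht, Units.val_one, one_smul])
  obtain ⟨f, -, hf⟩ := hψθ.d
  refine mem_range_of_map_eq hρ hψ hqs hκ h1 hR hθ ht (b' := θ R.d * z * θ R.v) ?_
    (mul_mem (mul_mem (θ.mem_range_self _) hz) (θ.mem_range_self _))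
  simp only [map_mul]
  refine mul_mul_eq_of_mul_eq_one (map_v_mem_homogeneous hψ hqs hκ h1) ⟨f, hf.symm⟩ hz0 ?_ ?_
  · rw [← map_mul, v_mul_d hκ h1, map_one]
  · rw [← map_mul, ← map_mul, v_mul_d hκ h1, map_one, map_one]

theorem d_pow_mul_mul_u_pow_mem_range {a : B} (ha : a ∈ R.base) (i : ℕ) :
    R.d ^ i * a * R.u ^ i ∈ θ.range := by
  have hbase := base_le_range_of_map_levelProj hρ hψ hqs hκ h1 hR hθ ht
  induction i with
  | zero => simpa using hbase ha
  | succ i ih =>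
    have hz : R.d ^ i * a * R.u ^ i * (R.u * R.d) ∈ θ.range := mul_mem ih (hbase R.u_mul_d_mem_base)
    have hz0 : ψ (R.d ^ i * a * R.u ^ i * (R.u * R.d)) ∈ homogeneous q s 0 := by
      rw [map_mul]
      exact SetLike.mul_mem_graded (i := 0) (j := 0) (map_mem_homogeneous hψ hqs (sub_self _) ha)
        (map_mem_homogeneous_of_mem_base hψ hqs R.u_mul_d_mem_base)
    have h := d_mul_mul_v_mem_range hρ hψ hqs hκ h1 hR hθ ht hz hz0
    rwa [mul_assoc R.d, mul_assoc (_ * _ * _), u_mul_d_mul_v hκ h1, mul_assoc (_ * a), ← pow_succ,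
      ← mul_assoc, ← mul_assoc, ← pow_succ'] at h

theorem mem_range_of_map_mem_homogeneous_zero {b : B} (hb : ψ b ∈ homogeneous q s 0) :
    b ∈ θ.range := by
  have hA := mul_mem_resolventSet_of_map_eq_fock hρ hκ
  obtain ⟨b', hb', h⟩ := exists_mem_map_eq (ψ := ψ.toLinearMap)
    (fun n b hb => map_mem_homogeneous_of_mem_part hψ hqs hb) (hR.iSup_part hA ▸ Submodule.mem_top)
    hb
  refine mem_range_of_map_eq hρ hψ hqs hκ h1 hR hθ ht h.symm ?_
  have : R.part 0 ≤ θ.range.toSubmodule := Submodule.span_le.2 <| by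
    rintro _ ⟨i, j, a, ha, hij, rfl⟩
    obtain rfl : i = j := by omega
    exact d_pow_mul_mul_u_pow_mem_range hρ hψ hqs hκ h1 hR hθ ht ha i
  exact this hb'

theorem range_eq_top_of_map_levelProj : θ.range = ⊤ := by
  have hbase := base_le_range_of_map_levelProj hρ hψ hqs hκ h1 hR hθ ht
  obtain ⟨l', hψθ⟩ := exists_isMonomial_comp (μ := 1) hψ hqs hκ
    (by rw [ht, Units.val_one, one_smul])
  have hd (ψ' : B →ₐ[K] SkewLaurent q s) {l ν : Kˣ} (h : IsMonomial (R.map ψ') l ν) :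
      ψ' R.d ∈ homogeneous q s 1 := by
    obtain ⟨f, -, hf⟩ := h.d
    exact ⟨f, hf.symm⟩
  have hθv : θ R.v * θ R.d = 1 := by rw [← map_mul, v_mul_d hκ h1, map_one]
  have mem_of_degree_zero {b : B} (hb : ψ b ∈ homogeneous q s 0) : b ∈ θ.range :=
    mem_range_of_map_mem_homogeneous_zero hρ hψ hqs hκ h1 hR hθ ht hb
  have hdv : R.d * θ R.v ∈ θ.range := mem_of_degree_zero <| by
    rw [map_mul]
    exact SetLike.mul_mem_graded (hd ψ hψ) (map_v_mem_homogeneous hψθ hqs hκ h1)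
  have hvd : θ R.d * R.v ∈ θ.range := mem_of_degree_zero <| by
    rw [map_mul]
    exact SetLike.mul_mem_graded (hd (ψ.comp θ) hψθ) (map_v_mem_homogeneous hψ hqs hκ h1)
  have hv : R.v ∈ θ.range := by
    rw [← one_mul R.v, ← hθv, mul_assoc]
    exact mul_mem (θ.mem_range_self _) hvd
  refine hR.eq_top ?_ ?_ hbase
  · rw [← mul_one R.d, ← hθv, ← mul_assoc]
    exact mul_mem hdv (θ.mem_range_self _)
  · rw [← u_mul_d_mul_v hκ h1]
    exact mul_mem (hbase R.u_mul_d_mem_base) hv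

end Range

theorem bijective_of_map_levelProj (hρ : R.map ρ = fock q s κ ξ hc)
    (hξ : Function.Injective (laurentEval ξ : K[T;T⁻¹] →ₐ[K] F))
    (hψ : IsMonomial (R.map ψ) l ν) (hqs : ∀ m n : ℤ, q ^ m * s ^ n = 1 → m = 0 ∧ n = 0)
    (hκ : κ ≠ 0) (hc0 : c ≠ 0) (h1 : (1 : K) ∈ resolventSet K R.t) (hR : R.IsUniversal)
    (hθ : ∀ n, θ (levelProj R.d R.v n) = levelProj R.d R.v n) : Function.Bijective θ := by
  obtain ⟨μ, hμ⟩ := exists_map_comp_t_eq_smul hψ hqs hκ hc0 θ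
  have ht := map_t_eq_of_map_levelProj hρ hξ hψ hqs hκ h1 hR hθ hμ
  refine ⟨injective_of_map_levelProj (μ := 1) hρ hξ hψ hqs hκ h1 hR hθ
    (by rw [ht, Units.val_one, one_smul]), ?_⟩
  rw [← AlgHom.range_eq_top]
  exact range_eq_top_of_map_levelProj hρ hψ hqs hκ h1 hR hθ ht

end DownUpData

section EventuallyDiagonal

open Module

variable {F : Type*} [Field F] {N : ℕ} {T P : End F (ℕ →₀ F)} {a : ℕ → F} {μ : F}
  (hT : ∀ y ∈ initialSpan F N, T y ∈ initialSpan F N)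
  (hdiag : ∀ m ≥ N, T (Finsupp.single m 1) = a m • Finsupp.single m 1)
  (hμ : ¬ End.HasEigenvalue (M := initialSpan F N) (T.restrict hT) μ)

include hμ in
theorem eq_zero_of_mem_initialSpan_of_apply_eq_smul {w : ℕ →₀ F} (hw : w ∈ initialSpan F N)
    (h : T w = μ • w) : w = 0 := by
  by_contra h0
  have heig : T.restrict hT ⟨w, hw⟩ = μ • ⟨w, hw⟩ := Subtype.ext h
  exact hμ (End.hasEigenvalue_of_hasEigenvector
    ⟨End.mem_eigenspace_iff.2 heig, fun h' => h0 (congrArg Subtype.val h')⟩)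

include hT hdiag in
theorem apply_apply_eq_mul {k : ℕ} (hk : N ≤ k) (w : ℕ →₀ F) : T w k = a k * w k := by
  classical
  suffices Finsupp.lapply k ∘ₗ T = a k • Finsupp.lapply k from LinearMap.congr_fun this w
  refine Finsupp.lhom_ext' fun j => LinearMap.ext_ring ?_
  simp only [LinearMap.comp_apply, LinearMap.smul_apply, Finsupp.lsingle_apply,
    Finsupp.lapply_apply, smul_eq_mul]
  obtain hj | hj := lt_or_ge j N
  · rw [mem_initialSpan.1 (hT _ (single_mem_initialSpan hj 1)) k hk,
      Finsupp.single_eq_of_ne (by omega), mul_zero]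
  · rw [hdiag j hj, Finsupp.smul_apply, smul_eq_mul, Finsupp.single_apply]
    split_ifs with hjk
    · rw [hjk]
    · rw [mul_zero, mul_zero]

include hdiag hμ in
theorem exists_eq_of_apply_eq_smul {w : ℕ →₀ F} (h : T w = μ • w) (hw : w ≠ 0) :
    ∃ m ≥ N, a m = μ := by
  by_contra! hm
  refine hw (eq_zero_of_mem_initialSpan_of_apply_eq_smul hT hμ (mem_initialSpan.2 fun k hk => ?_) h)
  have hk' := apply_apply_eq_mul hT hdiag hk w
  rw [h, Finsupp.smul_apply, smul_eq_mul, eq_comm, mul_eq_mul_right_iff] at hk'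
  exact hk'.resolve_left (hm k hk)

variable {m : ℕ} (hm : N ≤ m) (ham : ∀ k, a k = μ ↔ k = m)

include hdiag hμ hm ham in
theorem eq_single_of_apply_eq_smul {w : ℕ →₀ F} (h : T w = μ • w) :
    w = Finsupp.single m (w m) := by
  have hsingle : T (Finsupp.single m (w m)) = μ • Finsupp.single m (w m) := by
    rw [← mul_one (w m), ← smul_eq_mul, ← Finsupp.smul_single, map_smul, hdiag m hm,
      (ham m).2 rfl, smul_comm]
  refine sub_eq_zero.1 (eq_zero_of_mem_initialSpan_of_apply_eq_smul hT hμ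
    (mem_initialSpan.2 fun k hk => ?_) (by rw [map_sub, h, hsingle, smul_sub]))
  obtain rfl | hkm := eq_or_ne k m
  · simp
  · have hk' := apply_apply_eq_mul hT hdiag hk w
    rw [h, Finsupp.smul_apply, smul_eq_mul, eq_comm, mul_eq_mul_right_iff, ham,
      or_iff_right hkm] at hk'
    rw [Finsupp.sub_apply, hk', Finsupp.single_eq_of_ne hkm, sub_zero]

include hdiag hμ ham in
theorem apply_single_eq_zero (hPT : P * T = μ • P) {k : ℕ} (hk : k ≠ m) :
    P (Finsupp.single k 1) = 0 := by
  obtain hkN | hkN := lt_or_ge k N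
  · have hinj := LinearMap.ker_eq_bot.1 (End.eigenspace_def.symm.trans (not_not.1 hμ))
    obtain ⟨z, hz⟩ := (LinearMap.injective_iff_surjective (V := initialSpan F N)).1 hinj
      ⟨_, single_mem_initialSpan hkN 1⟩
    have hz : T z - μ • (z : ℕ →₀ F) = Finsupp.single k 1 := congrArg Subtype.val hz
    rw [← hz, map_sub, map_smul, ← End.mul_apply, hPT, LinearMap.smul_apply, sub_self]
  · have h := LinearMap.congr_fun hPT (Finsupp.single k 1)
    rw [End.mul_apply, hdiag k hkN, map_smul, LinearMap.smul_apply] at h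
    rw [← sub_eq_zero, ← sub_smul, smul_eq_zero, sub_eq_zero, ham] at h
    exact h.resolve_left hk

include hdiag hμ hm ham in
theorem apply_single_of_isIdempotentElem (hTP : T * P = μ • P) (hPT : P * T = μ • P)
    (hP : IsIdempotentElem P) (hP0 : P ≠ 0) : P (Finsupp.single m 1) = Finsupp.single m 1 := by
  obtain ⟨α, hα⟩ : ∃ α, P (Finsupp.single m 1) = α • Finsupp.single m (1 : F) := by
    refine ⟨P (Finsupp.single m 1) m, ?_⟩
    rw [Finsupp.smul_single, smul_eq_mul, mul_one]
    refine eq_single_of_apply_eq_smul hT hdiag hμ hm ham ?_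
    rw [← End.mul_apply, hTP, LinearMap.smul_apply]
  have hα0 : α ≠ 0 := by
    rintro rfl
    refine hP0 (Finsupp.lhom_ext' fun k => LinearMap.ext_ring ?_)
    obtain rfl | hk := eq_or_ne k m
    · exact hα.trans (zero_smul _ _)
    · exact apply_single_eq_zero hT hdiag hμ ham hPT hk
  have h := congrArg (α⁻¹ • ·) (LinearMap.congr_fun hP.eq (Finsupp.single m 1))
  simpa only [End.mul_apply, hα, map_smul, inv_smul_smul₀ hα0] using h

end EventuallyDiagonal

namespace DownUpData

section ShiftedLevels

open LaurentPolynomial Module SkewLaurent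

variable {K : Type u} [Field K] {q s : Kˣ} {κ c : K} {B : Type*} [Ring B] [Algebra K B]
  {R : DownUpData q s κ c B} {F : Type*} [Field F] [Algebra K F] {ξ : Fˣ}
  {hc : ∀ k : ℕ, c ≠ (q : K)⁻¹ ^ (k + 1)} {ρ : B →ₐ[K] End F (ℕ →₀ F)}
  {ψ : B →ₐ[K] SkewLaurent q s} {l ν : Kˣ} {θ : B →ₐ[K] B}

theorem map_v_mul_map_d {A G : Type*} [Ring A] [FunLike G B A] [RingHomClass G B A] (f : G)
    (hκ : κ ≠ 0) (h1 : (1 : K) ∈ resolventSet K R.t) : f R.v * f R.d = 1 := by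
  rw [← map_mul, v_mul_d hκ h1, map_one]

theorem map_levelProj_eq_zero (χ : B →ₐ[K] SkewLaurent q s) (hκ : κ ≠ 0)
    (h1 : (1 : K) ∈ resolventSet K R.t) (n : ℕ) : χ (levelProj R.d R.v n) = 0 := by
  rw [map_levelProj, levelProj_eq_zero (mul_eq_one_comm.1 (map_v_mul_map_d χ hκ h1))]

theorem map_tailProj_eq_one (χ : B →ₐ[K] SkewLaurent q s) (hκ : κ ≠ 0)
    (h1 : (1 : K) ∈ resolventSet K R.t) (n : ℕ) : χ (tailProj R.d R.v n) = 1 := by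
  rw [map_tailProj, tailProj_eq_one (mul_eq_one_comm.1 (map_v_mul_map_d χ hκ h1))]

variable (hρ : R.map ρ = fock q s κ ξ hc)
  (hξ : Function.Injective (laurentEval ξ : K[T;T⁻¹] →ₐ[K] F))
  (hψ : IsMonomial (R.map ψ) l ν) (hqs : ∀ m n : ℤ, q ^ m * s ^ n = 1 → m = 0 ∧ n = 0)
  (hκ : κ ≠ 0) (h1 : (1 : K) ∈ resolventSet K R.t) (hR : R.IsUniversal)

include hρ hκ h1 in
theorem map_levelProj_apply (n : ℕ) (y : ℕ →₀ F) (k : ℕ) :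
    ρ (levelProj R.d R.v n) y k = if k = n then y k else 0 := by
  classical
  induction y using Finsupp.induction_linear with
  | zero => simp
  | add y z hy hz =>
    rw [map_add, Finsupp.add_apply, hy, hz]
    split_ifs <;> simp
  | single m a =>
    rw [map_levelProj_single hρ hκ h1]
    grind

include hρ hψ hqs hκ hR in
theorem exists_map_t_single_eq_smul {μ : K} (hμ : ψ (θ R.t) = ψ (μ • R.t)) :
    ∃ N, (∀ y ∈ initialSpan F N, ρ (θ R.t) y ∈ initialSpan F N) ∧
      ∀ m ≥ N, ρ (θ R.t) (Finsupp.single m 1) =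
        algebraMap K F (μ * (q : K)⁻¹ ^ (m + 1)) • Finsupp.single m 1 := by
  have hA := mul_mem_resolventSet_of_map_eq_fock hρ hκ
  have htors : R.IsTorsion (θ R.t - μ • R.t) := by
    rw [← map_eq_zero_iff_isTorsion hR hA hqs hψ, map_sub, hμ, sub_self]
  obtain ⟨N, hN, hN'⟩ := htors.exists_map_mem_initialSpan hρ hqs hκ
  refine ⟨N, fun y hy => ?_, fun m hm => ?_⟩
  · rw [← sub_add_cancel (θ R.t) (μ • R.t), map_add]
    refine add_mem (hN y) (mem_initialSpan.2 fun k hk => ?_)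
    rw [map_smul, LinearMap.smul_apply, Finsupp.smul_apply, map_t_apply hρ,
      mem_initialSpan.1 hy k hk, zero_mul, smul_zero]
  · have h := hN' m hm 1
    rw [map_sub, LinearMap.sub_apply, sub_eq_zero] at h
    rw [h, map_smul, LinearMap.smul_apply, map_t_single hρ, map_mul, mul_smul, algebraMap_smul,
      algebraMap_smul]

include hqs in
theorem mul_inv_pow_eq_iff {μ : K} {k m : ℕ} (h : μ * (q : K)⁻¹ ^ m = (q : K)⁻¹ ^ k) (j : ℕ) :
    μ * (q : K)⁻¹ ^ j = (q : K)⁻¹ ^ k ↔ j = m := by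
  have hμ : μ ≠ 0 := left_ne_zero_of_mul (h ▸ pow_ne_zero k (inv_ne_zero q.ne_zero))
  rw [← h, mul_right_inj' hμ, (inv_pow_injective hqs).eq_iff]

include hρ hξ hψ hqs hκ h1 hR in
theorem map_map_levelProj_ne_zero (θ : B →ₐ[K] B) (n : ℕ) : ρ (θ (levelProj R.d R.v n)) ≠ 0 := by
  have hA := mul_mem_resolventSet_of_map_eq_fock hρ hκ
  intro h
  refine not_isUnit_d hρ hψ hqs hκ hR (R.map θ)
    (isUnit_of_levelProj_eq_zero (n := n) (map_v_mul_map_d θ hκ h1) ?_)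
  rw [map_d, ← map_levelProj]
  refine IsTorsion.eq_zero_of_map_eq_zero hρ hξ hκ h1 hR ?_ h
  rw [← map_eq_zero_iff_isTorsion hR hA hqs hψ]
  exact map_levelProj_eq_zero (ψ.comp θ) hκ h1 n

include hρ hξ hψ hqs hκ h1 hR in
theorem exists_map_levelProj_eq {μ : K} {N k : ℕ}
    (hT : ∀ y ∈ initialSpan F N, ρ (θ R.t) y ∈ initialSpan F N)
    (hdiag : ∀ m ≥ N, ρ (θ R.t) (Finsupp.single m 1) =
      algebraMap K F (μ * (q : K)⁻¹ ^ (m + 1)) • Finsupp.single m 1)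
    (hk : ¬ End.HasEigenvalue (M := initialSpan F N) ((ρ (θ R.t)).restrict hT)
      (algebraMap K F ((q : K)⁻¹ ^ (k + 1)))) :
    ∃ m, μ * (q : K)⁻¹ ^ (m + 1) = (q : K)⁻¹ ^ (k + 1) ∧
      θ (levelProj R.d R.v k) = levelProj R.d R.v m := by
  have hA := mul_mem_resolventSet_of_map_eq_fock hρ hκ
  have hP0 := map_map_levelProj_ne_zero hρ hξ hψ hqs hκ h1 hR θ k
  have hP := ((isIdempotentElem_levelProj (v_mul_d hκ h1) k).map θ).map ρ
  have hTP : ρ (θ R.t) * ρ (θ (levelProj R.d R.v k)) =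
      algebraMap K F ((q : K)⁻¹ ^ (k + 1)) • ρ (θ (levelProj R.d R.v k)) := by
    rw [← map_mul, ← map_mul, t_mul_levelProj hκ h1, map_smul, map_smul, algebraMap_smul]
  have hPT : ρ (θ (levelProj R.d R.v k)) * ρ (θ R.t) =
      algebraMap K F ((q : K)⁻¹ ^ (k + 1)) • ρ (θ (levelProj R.d R.v k)) := by
    rw [← hTP, ← map_mul, ← map_mul, ← map_mul, ← map_mul,
      (commute_levelProj_of_mem_base hκ h1 k R.t_mem_base).eq]
  obtain ⟨y, hy⟩ := DFunLike.ne_iff.1 hP0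
  obtain ⟨m, hm, ham⟩ := exists_eq_of_apply_eq_smul hT hdiag hk (LinearMap.congr_fun hTP y) hy
  have ham := (algebraMap K F).injective ham
  have ham' (j : ℕ) : algebraMap K F (μ * (q : K)⁻¹ ^ (j + 1)) =
      algebraMap K F ((q : K)⁻¹ ^ (k + 1)) ↔ j = m := by
    rw [(algebraMap K F).injective.eq_iff, mul_inv_pow_eq_iff hqs ham, Nat.add_right_cancel_iff]
  refine ⟨m, ham, sub_eq_zero.1 (IsTorsion.eq_zero_of_map_eq_zero hρ hξ hκ h1 hR ?_ ?_)⟩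
  · rw [← map_eq_zero_iff_isTorsion hR hA hqs hψ, map_sub, ← AlgHom.comp_apply,
      map_levelProj_eq_zero _ hκ h1, map_levelProj_eq_zero _ hκ h1, sub_self]
  · refine (map_sub ρ _ _).trans (sub_eq_zero.2
      (Finsupp.lhom_ext' fun j => LinearMap.ext_ring ?_))
    simp only [LinearMap.comp_apply, Finsupp.lsingle_apply, map_levelProj_single hρ hκ h1]
    split_ifs with hj
    · rw [hj, apply_single_of_isIdempotentElem hT hdiag hk hm ham' hTP hPT hP hP0]
    · exact apply_single_eq_zero hT hdiag hk ham' hPT hj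

include hρ hξ hψ hqs hκ h1 hR in
theorem exists_forall_map_levelProj_eq (hc0 : c ≠ 0) (θ : B →ₐ[K] B) :
    ∃ (μ : Kˣ) (k m : ℕ), ψ (θ R.t) = ψ ((μ : K) • R.t) ∧
      ∀ i, θ (levelProj R.d R.v (k + i)) = levelProj R.d R.v (m + i) := by
  obtain ⟨μ, hμ⟩ := exists_map_comp_t_eq_smul hψ hqs hκ hc0 θ
  obtain ⟨N, hT, hdiag⟩ := exists_map_t_single_eq_smul hρ hψ hqs hκ hR hμ
  have hinj : Function.Injective fun k : ℕ => algebraMap K F ((q : K)⁻¹ ^ (k + 1)) :=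
    (algebraMap K F).injective.comp ((inv_pow_injective hqs).comp Nat.succ_injective)
  have hfin := (End.finite_hasEigenvalue (M := initialSpan F N)
    ((ρ (θ R.t)).restrict hT)).preimage hinj.injOn
  obtain ⟨k, hk⟩ : ∃ k, ∀ i, ¬ End.HasEigenvalue (M := initialSpan F N) ((ρ (θ R.t)).restrict hT)
      (algebraMap K F ((q : K)⁻¹ ^ (k + i + 1))) := by
    obtain ⟨k, hk⟩ := hfin.bddAbove
    exact ⟨k + 1, fun i hi => absurd (hk hi) (by omega)⟩
  obtain ⟨m, hm, -⟩ := exists_map_levelProj_eq hρ hξ hψ hqs hκ h1 hR hT hdiag (hk 0)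
  have hμ0 : μ ≠ 0 := left_ne_zero_of_mul (hm ▸ pow_ne_zero _ (inv_ne_zero q.ne_zero))
  refine ⟨Units.mk0 μ hμ0, k, m, hμ, fun i => ?_⟩
  obtain ⟨n, hn, h⟩ := exists_map_levelProj_eq hρ hξ hψ hqs hκ h1 hR hT hdiag (hk i)
  have hmi : μ * (q : K)⁻¹ ^ (m + i + 1) = (q : K)⁻¹ ^ (k + i + 1) := by
    rw [add_right_comm, pow_add, ← mul_assoc, hm, ← pow_add]
    congr 1
    omega
  rw [h, Nat.add_right_cancel ((mul_inv_pow_eq_iff hqs hmi _).1 hn)]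

end ShiftedLevels

section OneMem

open LaurentPolynomial Module SkewLaurent

variable {K : Type u} [Field K] {q s : Kˣ} {κ c : K} {B : Type*} [Ring B] [Algebra K B]
  {R : DownUpData q s κ c B} {F : Type*} [Field F] [Algebra K F] {ξ : Fˣ}
  {hc : ∀ k : ℕ, c ≠ (q : K)⁻¹ ^ (k + 1)} {ρ : B →ₐ[K] End F (ℕ →₀ F)}
  {ψ : B →ₐ[K] SkewLaurent q s} {l ν : Kˣ} {θ : B →ₐ[K] B}
  (hρ : R.map ρ = fock q s κ ξ hc)
  (hξ : Function.Injective (laurentEval ξ : K[T;T⁻¹] →ₐ[K] F))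
  (hψ : IsMonomial (R.map ψ) l ν) (hqs : ∀ m n : ℤ, q ^ m * s ^ n = 1 → m = 0 ∧ n = 0)
  (hκ : κ ≠ 0) (h1 : (1 : K) ∈ resolventSet K R.t) (hR : R.IsUniversal)
  {k m : ℕ} (hθ : ∀ i, θ (levelProj R.d R.v (k + i)) = levelProj R.d R.v (m + i))

include hqs hκ h1 in
theorem iInf_ker_map_levelProj_eq_bot (φ : B →ₐ[K] End F (ℕ →₀ F))
    [FiniteDimensional F ↥(⨅ n, LinearMap.ker (φ (levelProj R.d R.v n)))] :
    ⨅ n, LinearMap.ker (φ (levelProj R.d R.v n)) = ⊥ := by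
  have hd : Function.Injective (φ R.d) :=
    Function.LeftInverse.injective (g := φ R.v) fun y => by
      rw [← End.mul_apply, ← map_mul, v_mul_d hκ h1, map_one, End.one_apply]
  -- The common kernel is stable under the injective operators `φ d` and `φ x`, which commute up to
  -- the factor `s`, and `s` is not a root of unity.
  refine eq_bot_of_mul_eq_smul_mul (s := algebraMap K F s) hd
    ((End.isUnit_iff _).1 (R.isUnit_x.map φ)).injective (fun n hn => ?_) ?_
    (fun z hz => ?_) fun z hz => ?_
  · rw [← map_pow, map_eq_one_iff _ (algebraMap K F).injective] at hn
    exact_mod_cast (hqs 0 n (Units.ext (by simpa using hn))).2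
  · rw [algebraMap_smul, ← map_mul, ← map_mul, ← map_smul, R.d_x.eq, smul_mul_assoc]
  · simp only [Submodule.mem_iInf, LinearMap.mem_ker] at hz ⊢
    rintro (_ | n)
    · rw [← End.mul_apply, ← map_mul, levelProj_zero_mul (v_mul_d hκ h1), map_zero,
        LinearMap.zero_apply]
    · rw [← End.mul_apply, ← map_mul, levelProj_succ_mul (v_mul_d hκ h1), map_mul, End.mul_apply,
        hz, map_zero]
  · simp only [Submodule.mem_iInf, LinearMap.mem_ker] at hz ⊢
    intro n
    rw [← End.mul_apply, ← map_mul, (commute_levelProj_of_mem_base hκ h1 n R.x_mem_base).eq,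
      map_mul, End.mul_apply, hz, map_zero]

include hρ hqs hκ h1 hθ in
theorem eq_zero_of_forall_map_levelProj_apply_eq_zero {y : ℕ →₀ F}
    (hy : ∀ n, ρ (θ (levelProj R.d R.v n)) y = 0) : y = 0 := by
  have hle : ⨅ n, LinearMap.ker (ρ.comp θ (levelProj R.d R.v n)) ≤ initialSpan F m := fun z hz => by
    refine mem_initialSpan.2 fun n hn => ?_
    obtain ⟨i, rfl⟩ := Nat.exists_eq_add_of_le hn
    have h := DFunLike.congr_fun (LinearMap.mem_ker.1 ((Submodule.mem_iInf _).1 hz (k + i))) (m + i)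
    rwa [AlgHom.comp_apply, hθ, map_levelProj_apply hρ hκ h1, if_pos rfl] at h
  have : FiniteDimensional F ↥(⨅ n, LinearMap.ker (ρ.comp θ (levelProj R.d R.v n))) :=
    Submodule.finiteDimensional_of_le hle
  have h : y ∈ ⨅ n, LinearMap.ker (ρ.comp θ (levelProj R.d R.v n)) :=
    (Submodule.mem_iInf _).2 hy
  rwa [iInf_ker_map_levelProj_eq_bot hqs hκ h1, Submodule.mem_bot] at h

include hρ hξ hψ hqs hκ h1 hR hθ in
theorem map_tailProj_eq : θ (tailProj R.d R.v k) = tailProj R.d R.v m := by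
  have hA := mul_mem_resolventSet_of_map_eq_fock hρ hκ
  have hvd := v_mul_d hκ h1
  refine sub_eq_zero.1 (IsTorsion.eq_zero_of_map_eq_zero hρ hξ hκ h1 hR ?_ ?_)
  · rw [← map_eq_zero_iff_isTorsion hR hA hqs hψ, map_sub, ← AlgHom.comp_apply,
      map_tailProj_eq_one _ hκ h1, map_tailProj_eq_one _ hκ h1, sub_self]
  · rw [map_sub, sub_eq_zero]
    refine Finsupp.lhom_ext fun j a => ?_
    rw [map_tailProj_single hρ hκ h1]
    split_ifs with hj
    · obtain ⟨i, rfl⟩ := Nat.exists_eq_add_of_le hj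
      have hsingle : ρ (θ (levelProj R.d R.v (k + i))) (Finsupp.single (m + i) a) =
          Finsupp.single (m + i) a := by
        rw [hθ, map_levelProj_single hρ hκ h1, if_pos rfl]
      rw [← hsingle, ← End.mul_apply, ← map_mul, ← map_mul,
        tailProj_mul_levelProj hvd (Nat.le_add_right k i)]
    · refine eq_zero_of_forall_map_levelProj_apply_eq_zero hρ hqs hκ h1 hθ fun n => ?_
      rw [← End.mul_apply, ← map_mul, ← map_mul]
      obtain hn | hn := lt_or_ge n k
      · rw [levelProj_mul_tailProj_of_lt hvd hn, map_zero, map_zero, LinearMap.zero_apply]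
      · obtain ⟨i, rfl⟩ := Nat.exists_eq_add_of_le hn
        rw [levelProj_mul_tailProj hvd hn, hθ, map_levelProj_single hρ hκ h1, if_neg (by omega)]

include hρ hψ hqs hκ h1 hR in
theorem eq_of_isUnit_v_pow_mul_map_d_pow {l' ν' : Kˣ} (hψθ : IsMonomial (R.map (ψ.comp θ)) l' ν')
    {k m : ℕ} (h : IsUnit (R.v ^ m * θ R.d ^ k)) : k = m := by
  obtain ⟨f, -, hd⟩ := hψθ.d
  have hdeg : ψ (R.v ^ m * θ R.d ^ k) ∈ homogeneous q s (m • (-1) + k • 1) := by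
    rw [map_mul, map_pow, map_pow]
    exact SetLike.mul_mem_graded
      (SetLike.pow_mem_graded m (map_v_mem_homogeneous hψ hqs hκ h1))
      (SetLike.pow_mem_graded k
        (show (R.map (ψ.comp θ)).d ∈ homogeneous q s 1 from hd ▸ monomial_mem 1 f))
  obtain ⟨g, hg⟩ := mem_homogeneous_iff.1 hdeg
  obtain ⟨g', hg'⟩ :=
    mem_homogeneous_iff.1 (map_mem_homogeneous_zero_of_isUnit hρ hqs hκ hR hψ h)
  have hg0 : g ≠ 0 := by
    rintro rfl
    rw [map_zero] at hg
    exact (h.map ψ).ne_zero hg.symm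
  have := eq_of_monomial_eq hg0 (hg.trans hg'.symm)
  rw [nsmul_eq_mul, nsmul_eq_mul] at this
  omega

include hρ hξ hψ hqs hκ h1 hR in
theorem bijective_of_one_mem (hc0 : c ≠ 0) (θ : B →ₐ[K] B) : Function.Bijective θ := by
  have hvd := v_mul_d hκ h1
  obtain ⟨μ, k, m, hμ, hθ⟩ := exists_forall_map_levelProj_eq hρ hξ hψ hqs hκ h1 hR hc0 θ
  obtain ⟨l', hψθ⟩ := exists_isMonomial_comp hψ hqs hκ hμ
  have htail := map_tailProj_eq hρ hξ hψ hqs hκ h1 hR hθ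
  rw [map_tailProj] at htail
  obtain ⟨g, hg, hg'⟩ := exists_unit_eq_of_tailProj_eq hvd (map_v_mul_map_d θ hκ h1) htail
  obtain rfl := eq_of_isUnit_v_pow_mul_map_d_pow hρ hψ hqs hκ h1 hR hψθ (hg ▸ g.isUnit)
  let σ : B ≃ₐ[K] B := MulSemiringAction.toAlgEquiv K B (ConjAct.toConjAct g)
  have hσ : Function.Bijective ((σ : B →ₐ[K] B).comp θ) := by
    refine bijective_of_map_levelProj hρ hξ hψ hqs hκ hc0 h1 hR fun n => ?_
    have hn := hθ n
    rw [map_levelProj] at hn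
    change g * θ (levelProj R.d R.v n) * (g⁻¹ : Bˣ) = _
    rw [map_levelProj, hg, hg', conj_levelProj hvd hn]
  exact (Function.Bijective.of_comp_iff' σ.bijective θ).1 hσ

end OneMem

section Universal

open LaurentPolynomial Module SkewLaurent

variable {K : Type u} [Field K] {q s : Kˣ} {κ c : K} {B : Type*} [Ring B] [Algebra K B]
  {R : DownUpData q s κ c B}

/-- The unit `T` of the field of rational functions `K(T)`. -/
def fractionRingT (K : Type u) [Field K] : (FractionRing K[T;T⁻¹])ˣ :=
  ((isUnit_T 1).map (algebraMap K[T;T⁻¹] (FractionRing K[T;T⁻¹]))).unit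

theorem laurentEval_fractionRingT_injective :
    Function.Injective
      (laurentEval (fractionRingT K) : K[T;T⁻¹] →ₐ[K] FractionRing K[T;T⁻¹]) := by
  have h : laurentEval (fractionRingT K) =
      IsScalarTower.toAlgHom K K[T;T⁻¹] (FractionRing K[T;T⁻¹]) := by
    refine laurentPolynomial_algHom_ext ?_
    rw [laurentEval_T, zpow_one]
    rfl
  rw [h]
  exact IsFractionRing.injective K[T;T⁻¹] (FractionRing K[T;T⁻¹])

theorem IsUniversal.bijective_of_ne_inv_pow (hR : R.IsUniversal)
    (hqs : ∀ m n : ℤ, q ^ m * s ^ n = 1 → m = 0 ∧ n = 0) (hκ : κ ≠ 0) (hc0 : c ≠ 0)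
    (hc : ∀ k : ℕ, c ≠ (q : K)⁻¹ ^ (k + 1)) (θ : B →ₐ[K] B) : Function.Bijective θ := by
  obtain ⟨ρ, hρ⟩ := hR.exists_algHom _ (fock q s κ (fractionRingT K) hc)
  obtain ⟨ψ, hψ⟩ := hR.exists_algHom _ (downUpData q s κ hc0)
  obtain ⟨l, hψ⟩ := exists_isMonomial (μ := 1) hκ hqs (R.map ψ) (by
    rw [hψ, Units.val_one, one_smul]
    rfl)
  by_cases h1 : (1 : K) ∈ resolventSet K R.t
  · exact bijective_of_one_mem hρ laurentEval_fractionRingT_injective hψ hqs hκ h1 hR hc0 θ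
  · exact bijective_of_one_notMem h1 hρ hψ hqs hκ hR hc0 θ

theorem IsUniversal.bijective (hR : R.IsUniversal)
    (hqs : ∀ m n : ℤ, q ^ m * s ^ n = 1 → m = 0 ∧ n = 0) (hκ : κ ≠ 0) (hc0 : c ≠ 0)
    (θ : B →ₐ[K] B) : Function.Bijective θ := by
  by_cases hc : ∀ k : ℕ, c ≠ (q : K)⁻¹ ^ (k + 1)
  · exact hR.bijective_of_ne_inv_pow hqs hκ hc0 hc θ
  · push Not at hc
    obtain ⟨k, rfl⟩ := hc
    have hqs' (m n : ℤ) (h : q⁻¹ ^ m * s⁻¹ ^ n = 1) : m = 0 ∧ n = 0 := by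
      have := hqs (-m) (-n) (by simpa using h)
      omega
    refine hR.swap.bijective_of_ne_inv_pow hqs' (mul_ne_zero hκ s.ne_zero)
      (mul_ne_zero hc0 q.ne_zero) (fun j h => ?_) θ
    rw [pow_succ, inv_mul_cancel_right₀ q.ne_zero] at h
    have hkj : (q : K)⁻¹ ^ (k + (j + 1)) = (q : K)⁻¹ ^ 0 := by
      rw [pow_add, h, ← mul_pow, Units.val_inv_eq_inv_val,
        inv_mul_cancel₀ (inv_ne_zero q.ne_zero), one_pow, pow_zero]
    have := inv_pow_injective hqs hkj
    omega

end Universal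

end DownUpData

/-! ### The localized down-up algebra -/

namespace DUL

variable {K : Type} [Field K] {r s : K}

theorem d_mul_d_mul_u : d K r s * d K r s * u K r s =
    (r + s) • (d K r s * u K r s * d K r s) - (r * s) • (u K r s * d K r s * d K r s) := by
  simpa only [d, u, x, y, map_mul, map_sub, map_smul] using
    RingQuot.mkAlgHom_rel K (DULRel.rel1 (K := K) (r := r) (s := s))

theorem d_mul_u_mul_u : d K r s * u K r s * u K r s =
    (r + s) • (u K r s * d K r s * u K r s) - (r * s) • (u K r s * u K r s * d K r s) := by
  simpa only [d, u, x, y, map_mul, map_sub, map_smul] using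
    RingQuot.mkAlgHom_rel K (DULRel.rel2 (K := K) (r := r) (s := s))

theorem x_mul_ι_two : x K r s * RingQuot.mkAlgHom K (DULRel K r s) (FreeAlgebra.ι K 2) = 1 := by
  simpa only [d, u, x, y, map_mul, map_sub, map_smul, map_one] using
    RingQuot.mkAlgHom_rel K (DULRel.xinvr (K := K) (r := r) (s := s))

theorem ι_two_mul_x : RingQuot.mkAlgHom K (DULRel K r s) (FreeAlgebra.ι K 2) * x K r s = 1 := by
  simpa only [d, u, x, y, map_mul, map_sub, map_smul, map_one] using
    RingQuot.mkAlgHom_rel K (DULRel.xinvl (K := K) (r := r) (s := s))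

theorem y_mul_ι_three :
    y K r s * RingQuot.mkAlgHom K (DULRel K r s) (FreeAlgebra.ι K 3) = 1 := by
  simpa only [d, u, x, y, map_mul, map_sub, map_smul, map_one] using
    RingQuot.mkAlgHom_rel K (DULRel.yinvr (K := K) (r := r) (s := s))

theorem ι_three_mul_y :
    RingQuot.mkAlgHom K (DULRel K r s) (FreeAlgebra.ι K 3) * y K r s = 1 := by
  simpa only [d, u, x, y, map_mul, map_sub, map_smul, map_one] using
    RingQuot.mkAlgHom_rel K (DULRel.yinvl (K := K) (r := r) (s := s))

theorem isUnit_x : IsUnit (x K r s) := ⟨⟨_, _, x_mul_ι_two, ι_two_mul_x⟩, rfl⟩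

theorem isUnit_y : IsUnit (y K r s) := ⟨⟨_, _, y_mul_ι_three, ι_three_mul_y⟩, rfl⟩

theorem adjoin_eq_top : Algebra.adjoin K
    {d K r s, u K r s, Ring.inverse (x K r s), Ring.inverse (y K r s)} = ⊤ := by
  set A := Algebra.adjoin K {d K r s, u K r s, Ring.inverse (x K r s), Ring.inverse (y K r s)}
  have mem {w} (hw : w ∈ ({d K r s, u K r s, Ring.inverse (x K r s),
      Ring.inverse (y K r s)} : Set (DUL K r s))) : w ∈ A := Algebra.subset_adjoin hw
  rw [eq_top_iff]
  intro z _
  obtain ⟨w, rfl⟩ := RingQuot.mkAlgHom_surjective K (DULRel K r s) z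
  induction w using FreeAlgebra.induction with
  | grade0 k => rw [AlgHom.commutes]; exact A.algebraMap_mem k
  | grade1 i =>
    fin_cases i
    · exact mem (by simp [d])
    · exact mem (by simp [u])
    · exact mem (.inr (.inr (.inl
        (isUnit_x.mul_left_cancel (x_mul_ι_two.trans (Ring.mul_inverse_cancel _ isUnit_x).symm)))))
    · exact mem (.inr (.inr (.inr
        (isUnit_y.mul_left_cancel
          (y_mul_ι_three.trans (Ring.mul_inverse_cancel _ isUnit_y).symm)))))
  | mul a b ha hb => rw [map_mul]; exact A.mul_mem (ha trivial) (hb trivial)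
  | add a b ha hb => rw [map_add]; exact A.add_mem (ha trivial) (hb trivial)

theorem exists_algHom {C : Type*} [Ring C] [Algebra K C] {d' u' : C}
    (hd : d' * d' * u' = (r + s) • (d' * u' * d') - (r * s) • (u' * d' * d'))
    (hu : d' * u' * u' = (r + s) • (u' * d' * u') - (r * s) • (u' * u' * d'))
    (hx : IsUnit (d' * u' - r • (u' * d'))) (hy : IsUnit (u' * d' - s • (d' * u'))) :
    ∃ f : DUL K r s →ₐ[K] C, f (d K r s) = d' ∧ f (u K r s) = u' := by
  let g : FreeAlgebra K (Fin 4) →ₐ[K] C := FreeAlgebra.lift K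
    ![d', u', Ring.inverse (d' * u' - r • (u' * d')), Ring.inverse (u' * d' - s • (d' * u'))]
  have g0 : g (FreeAlgebra.ι K 0) = d' := FreeAlgebra.lift_ι_apply _ _
  have g1 : g (FreeAlgebra.ι K 1) = u' := FreeAlgebra.lift_ι_apply _ _
  have g2 : g (FreeAlgebra.ι K 2) = Ring.inverse (d' * u' - r • (u' * d')) :=
    FreeAlgebra.lift_ι_apply _ _
  have g3 : g (FreeAlgebra.ι K 3) = Ring.inverse (u' * d' - s • (d' * u')) :=
    FreeAlgebra.lift_ι_apply _ _
  have hg ⦃a b⦄ (hab : DULRel K r s a b) : g a = g b := by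
    cases hab <;> simp only [map_mul, map_sub, map_smul, map_one, g0, g1, g2, g3]
    · exact hd
    · exact hu
    · exact Ring.mul_inverse_cancel _ hx
    · exact Ring.inverse_mul_cancel _ hx
    · exact Ring.mul_inverse_cancel _ hy
    · exact Ring.inverse_mul_cancel _ hy
  exact ⟨RingQuot.liftAlgHom K ⟨g, hg⟩, (RingQuot.liftAlgHom_mkAlgHom_apply K g hg _).trans g0,
    (RingQuot.liftAlgHom_mkAlgHom_apply K g hg _).trans g1⟩

end DUL

section Relations

variable {K : Type u} [Field K] {B : Type*} [Ring B] [Algebra K B] {d u : B}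

theorem semiconjBy_down_iff {a b : K} :
    SemiconjBy d (d * u - a • (u * d)) (b • (d * u - a • (u * d))) ↔
      d * d * u = (a + b) • (d * u * d) - (a * b) • (u * d * d) := by
  have h : d * (d * u - a • (u * d)) - b • (d * u - a • (u * d)) * d =
      d * d * u - ((a + b) • (d * u * d) - (a * b) • (u * d * d)) := by
    simp only [mul_sub, sub_mul, mul_smul_comm, smul_mul_assoc, ← mul_assoc]
    module
  rw [SemiconjBy, ← sub_eq_zero, h, sub_eq_zero]

theorem semiconjBy_up_iff {a b : K} :
    SemiconjBy u (b • (d * u - a • (u * d))) (d * u - a • (u * d)) ↔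
      d * u * u = (a + b) • (u * d * u) - (a * b) • (u * u * d) := by
  have h : (d * u - a • (u * d)) * u - u * b • (d * u - a • (u * d)) =
      d * u * u - ((a + b) • (u * d * u) - (a * b) • (u * u * d)) := by
    simp only [mul_sub, sub_mul, mul_smul_comm, smul_mul_assoc, ← mul_assoc]
    module
  rw [SemiconjBy, eq_comm, ← sub_eq_zero, h, sub_eq_zero]

theorem commute_mul_mul_of_down_up {a b : K}
    (hd : d * d * u = a • (d * u * d) - b • (u * d * d))
    (hu : d * u * u = a • (u * d * u) - b • (u * u * d)) : Commute (d * u) (u * d) := by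
  have hu' : d * u * (u * d) = d * u * u * d := by simp only [mul_assoc]
  have hd' : u * d * (d * u) = u * (d * d * u) := by simp only [mul_assoc]
  rw [Commute, SemiconjBy, hu', hd', hu, hd]
  simp only [mul_sub, sub_mul, mul_smul_comm, smul_mul_assoc, ← mul_assoc]

theorem smul_sub_smul_down_up {a b c : K} (hc : c * (1 - a * b) = 1 - b ^ 2) :
    (1 - a * b) • (d * u - b • (u * d) - c • (d * u - a • (u * d))) =
      (a - b) • (u * d - b • (d * u)) := by
  linear_combination (norm := module) (-hc) • (d * u - a • (u * d))

theorem commute_sub_smul {e f : B} (h : Commute e f) (a b : K) :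
    Commute (e - a • f) (e - b • f) :=
  ((Commute.refl e).sub_right (h.smul_right b)).sub_left
    ((h.symm.smul_left a).sub_right (((Commute.refl f).smul_right b).smul_left a))

variable {x w : B} {r s : Kˣ}

theorem semiconjBy_mul_inverse_smul (hx : IsUnit x) (hdx : SemiconjBy d x ((s : K) • x))
    (hdw : SemiconjBy d w ((r : K) • w)) :
    SemiconjBy d (w * Ring.inverse x) (((r / s : Kˣ) : K) • (w * Ring.inverse x)) := by
  have hrs : ((r / s : Kˣ) : K) * s = r := by rw [← Units.val_mul, div_mul_cancel]
  refine hx.mul_right_cancel ?_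
  rw [mul_assoc d, Ring.inverse_mul_cancel_right _ _ hx, hdw.eq, mul_assoc _ d, hdx.eq,
    smul_mul_assoc _ x, smul_mul_smul_comm, hrs, ← mul_assoc, Ring.inverse_mul_cancel_right _ _ hx,
    smul_mul_assoc]

theorem semiconjBy_smul_mul_inverse (hx : IsUnit x) (hux : SemiconjBy u ((s : K) • x) x)
    (huw : SemiconjBy u ((r : K) • w) w) :
    SemiconjBy u (((r / s : Kˣ) : K) • (w * Ring.inverse x)) (w * Ring.inverse x) := by
  have hrs : (s : K) * ((r / s : Kˣ) : K) = r := by rw [← Units.val_mul, mul_div_cancel]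
  have hw : w * Ring.inverse x * u * (s : K) • x = w * u := by
    rw [mul_assoc _ u, hux.eq, ← mul_assoc, Ring.inverse_mul_cancel_right _ _ hx]
  refine (hx.smul s).mul_right_cancel ?_
  rw [Units.smul_def, hw, mul_smul_comm, mul_smul_comm _ u, smul_mul_assoc, smul_smul, hrs,
    mul_assoc u, Ring.inverse_mul_cancel_right _ _ hx, ← mul_smul_comm, huw.eq]

theorem mem_resolventSet_mul_inverse {c : K} (hx : IsUnit x) (h : IsUnit (w - c • x)) :
    c ∈ resolventSet K (w * Ring.inverse x) := by
  have hsub : (algebraMap K B c - w * Ring.inverse x) * x = -(w - c • x) := by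
    rw [sub_mul, Ring.inverse_mul_cancel_right _ _ hx, ← Algebra.smul_def, neg_sub]
  obtain ⟨x, rfl⟩ := hx
  rw [spectrum.mem_resolventSet_iff, ← Units.isUnit_mul_units _ x, hsub]
  exact h.neg

end Relations

namespace DownUpData

variable {K : Type u} [Field K] {B : Type*} [Ring B] [Algebra K B] {r s : Kˣ}

section OfRelations

variable {d u : B}

/-- The representation given by elements `d` and `u` satisfying the down-up relations, for which
`x = du - r ud` and `y = ud - s du` are units. -/
def ofRelations (hne : (r : K) ≠ s) (hrs : (r : K) * s ≠ 1)
    (hd : d * d * u = (r + s : K) • (d * u * d) - (r * s : K) • (u * d * d))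
    (hu : d * u * u = (r + s : K) • (u * d * u) - (r * s : K) • (u * u * d))
    (hx : IsUnit (d * u - (r : K) • (u * d))) (hy : IsUnit (u * d - (s : K) • (d * u))) :
    DownUpData (r / s) s (r - s : K)⁻¹ ((1 - (s : K) ^ 2) / (1 - r * s)) B :=
  have hxw : Commute (d * u - (r : K) • (u * d)) (d * u - (s : K) • (u * d)) :=
    commute_sub_smul (commute_mul_mul_of_down_up hd hu) _ _
  have hxt : (d * u - (r : K) • (u * d)) *
      ((d * u - (s : K) • (u * d)) * Ring.inverse (d * u - (r : K) • (u * d))) =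
        d * u - (s : K) • (u * d) := by
    rw [← mul_assoc, hxw.eq, Ring.mul_inverse_cancel_right _ _ hx]
  have hrs' : (1 - r * s : K) ≠ 0 := sub_ne_zero.2 hrs.symm
  have hκ : (r - s : K)⁻¹ * (r - s) = 1 := inv_mul_cancel₀ (sub_ne_zero.2 hne)
  have hd' : SemiconjBy d (d * u - (s : K) • (u * d)) ((r : K) • (d * u - (s : K) • (u * d))) :=
    semiconjBy_down_iff.2 (by rwa [add_comm, mul_comm (s : K)])
  have hu' : SemiconjBy u ((r : K) • (d * u - (s : K) • (u * d))) (d * u - (s : K) • (u * d)) :=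
    semiconjBy_up_iff.2 (by rwa [add_comm, mul_comm (s : K)])
  { d := d
    u := u
    x := d * u - (r : K) • (u * d)
    t := (d * u - (s : K) • (u * d)) * Ring.inverse (d * u - (r : K) • (u * d))
    d_x := semiconjBy_down_iff.2 hd
    d_t := semiconjBy_mul_inverse_smul hx (semiconjBy_down_iff.2 hd) hd'
    u_x := semiconjBy_up_iff.2 hu
    u_t := semiconjBy_smul_mul_inverse hx (semiconjBy_up_iff.2 hu) hu'
    x_t := by rw [Commute, SemiconjBy, hxt, Ring.inverse_mul_cancel_right _ _ hx]
    u_mul_d := by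
      rw [mul_sub, hxt, mul_one]
      linear_combination (norm := module) (-hκ) • (u * d)
    d_mul_u := by
      have h : (s : K) * ((r / s : Kˣ) : K) = r := by rw [← Units.val_mul, mul_div_cancel]
      rw [mul_sub, mul_smul_comm, hxt, mul_one]
      linear_combination (norm := module)
        (-hκ) • (d * u) - ((r - s : K)⁻¹ * h) • (d * u - (s : K) • (u * d))
    isUnit_x := hx
    c_mem := by
      refine mem_resolventSet_mul_inverse hx ((isUnit_smul_iff (Units.mk0 _ hrs') _).1 ?_)
      rw [Units.smul_mk0, smul_sub_smul_down_up (div_mul_cancel₀ _ hrs')]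
      exact hy.smul (Units.mk0 _ (sub_ne_zero.2 hne)) }

end OfRelations

section Relations

variable (R : DownUpData (r / s) s (r - s : K)⁻¹ ((1 - (s : K) ^ 2) / (1 - r * s)) B)

theorem x_eq (hne : (r : K) ≠ s) : R.x = R.d * R.u - (r : K) • (R.u * R.d) := by
  have hκ : (r - s : K)⁻¹ * (r - s) = 1 := inv_mul_cancel₀ (sub_ne_zero.2 hne)
  have h : (s : K) * ((r / s : Kˣ) : K) = r := by rw [← Units.val_mul, mul_div_cancel]
  rw [R.d_mul_u, R.u_mul_d, mul_sub, mul_sub, mul_smul_comm, mul_one]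
  linear_combination (norm := module) (-hκ) • R.x - ((r - s : K)⁻¹ * h) • (R.x * R.t)

theorem x_mul_t_eq (hne : (r : K) ≠ s) : R.x * R.t = R.d * R.u - (s : K) • (R.u * R.d) := by
  have hκ : (r - s : K)⁻¹ * (r - s) = 1 := inv_mul_cancel₀ (sub_ne_zero.2 hne)
  have h : (s : K) * ((r / s : Kˣ) : K) = r := by rw [← Units.val_mul, mul_div_cancel]
  rw [R.d_mul_u, R.u_mul_d, mul_sub, mul_sub, mul_smul_comm, mul_one]
  linear_combination (norm := module)
    (-hκ) • (R.x * R.t) - ((r - s : K)⁻¹ * h) • (R.x * R.t)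

theorem d_mul_d_mul_u (hne : (r : K) ≠ s) : R.d * R.d * R.u =
    (r + s : K) • (R.d * R.u * R.d) - (r * s : K) • (R.u * R.d * R.d) :=
  semiconjBy_down_iff.1 (R.x_eq hne ▸ R.d_x)

theorem d_mul_u_mul_u (hne : (r : K) ≠ s) : R.d * R.u * R.u =
    (r + s : K) • (R.u * R.d * R.u) - (r * s : K) • (R.u * R.u * R.d) :=
  semiconjBy_up_iff.1 (R.x_eq hne ▸ R.u_x)

theorem smul_u_mul_d_sub (hne : (r : K) ≠ s) (hrs : (r : K) * s ≠ 1) :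
    (s - r : K) • (R.u * R.d - (s : K) • (R.d * R.u)) = (1 - r * s : K) •
      (R.x * (algebraMap K B ((1 - (s : K) ^ 2) / (1 - r * s)) - R.t)) := by
  have h := smul_sub_smul_down_up (d := R.d) (u := R.u)
    (div_mul_cancel₀ (1 - (s : K) ^ 2) (sub_ne_zero.2 hrs.symm))
  rw [← R.x_eq hne, ← R.x_mul_t_eq hne] at h
  rw [mul_sub, ← Algebra.commutes, ← Algebra.smul_def]
  linear_combination (norm := module) h

theorem isUnit_u_mul_d_sub (hne : (r : K) ≠ s) (hrs : (r : K) * s ≠ 1) :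
    IsUnit (R.u * R.d - (s : K) • (R.d * R.u)) := by
  refine (isUnit_smul_iff (Units.mk0 _ (sub_ne_zero.2 hne.symm)) _).1 ?_
  rw [Units.smul_mk0, R.smul_u_mul_d_sub hne hrs]
  exact (R.isUnit_x.mul R.c_mem).smul (Units.mk0 _ (sub_ne_zero.2 hrs.symm))

theorem inverse_u_mul_d_sub (hne : (r : K) ≠ s) (hrs : (r : K) * s ≠ 1) :
    Ring.inverse (R.u * R.d - (s : K) • (R.d * R.u)) = ((s - r : K) / (1 - r * s)) •
      (resolvent R.t ((1 - (s : K) ^ 2) / (1 - r * s)) * Ring.inverse R.x) := by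
  have hrs' : (1 - r * s : K) ≠ 0 := sub_ne_zero.2 hrs.symm
  have hy := R.isUnit_u_mul_d_sub hne hrs
  refine hy.mul_left_cancel ?_
  rw [Ring.mul_inverse_cancel _ hy, mul_smul_comm, ← smul_mul_assoc, div_eq_inv_mul, mul_smul,
    R.smul_u_mul_d_sub hne hrs, inv_smul_smul₀ hrs', resolvent, ← mul_assoc,
    Ring.mul_inverse_cancel_right _ _ R.c_mem, Ring.mul_inverse_cancel _ R.isUnit_x]

theorem eq_of_d_eq_of_u_eq (hne : (r : K) ≠ s)
    {R S : DownUpData (r / s) s (r - s : K)⁻¹ ((1 - (s : K) ^ 2) / (1 - r * s)) B}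
    (hd : R.d = S.d) (hu : R.u = S.u) : R = S := by
  have hx : R.x = S.x := by rw [R.x_eq hne, S.x_eq hne, hd, hu]
  refine DownUpData.ext hd hu hx (R.isUnit_x.mul_left_cancel ?_)
  rw [R.x_mul_t_eq hne, hx, S.x_mul_t_eq hne, hd, hu]

end Relations

end DownUpData

namespace DUL

variable {K : Type} [Field K] {r s : Kˣ} (hne : (r : K) ≠ s) (hrs : (r : K) * s ≠ 1)

/-- The representation of `A_S(r+s, -rs)` in itself by its generators. -/
def downUpData : DownUpData (r / s) s (r - s : K)⁻¹ ((1 - (s : K) ^ 2) / (1 - r * s))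
    (DUL K (r : K) s) :=
  DownUpData.ofRelations hne hrs d_mul_d_mul_u d_mul_u_mul_u isUnit_x isUnit_y

theorem isUniversal_downUpData : (downUpData hne hrs).IsUniversal where
  adjoin_eq_top := by
    set R := downUpData hne hrs
    set A := Algebra.adjoin K {R.d, R.u, R.x, Ring.inverse R.x, R.t,
      resolvent R.t ((1 - (s : K) ^ 2) / (1 - r * s))}
    have mem {w} (hw : w ∈ ({R.d, R.u, R.x, Ring.inverse R.x, R.t,
      resolvent R.t ((1 - (s : K) ^ 2) / (1 - r * s))} : Set (DUL K (r : K) s))) : w ∈ A :=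
      Algebra.subset_adjoin hw
    rw [eq_top_iff, ← adjoin_eq_top, Algebra.adjoin_le_iff]
    rintro _ (rfl | rfl | rfl | rfl)
    · exact mem (.inl rfl)
    · exact mem (.inr (.inl rfl))
    · exact mem (.inr (.inr (.inr (.inl rfl))))
    · refine (R.inverse_u_mul_d_sub hne hrs).symm ▸ A.smul_mem (A.mul_mem ?_ ?_) _
      · exact mem (by simp)
      · exact mem (by simp)
  exists_algHom C _ _ S := by
    obtain ⟨f, hd, hu⟩ := exists_algHom (S.d_mul_d_mul_u hne) (S.d_mul_u_mul_u hne)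
      (S.x_eq hne ▸ S.isUnit_x) (S.isUnit_u_mul_d_sub hne hrs)
    exact ⟨f, DownUpData.eq_of_d_eq_of_u_eq hne hd hu⟩

end DUL

theorem stmt14_general (K : Type) [Field K] (r s : K) (hr : r ≠ 0) (hs : s ≠ 0)
    (h : ∀ m n : ℤ, r ^ m * s ^ n = 1 → m = 0 ∧ n = 0) (θ : DUL K r s →ₐ[K] DUL K r s) :
    Function.Bijective θ := by
  lift r to Kˣ using hr.isUnit
  lift s to Kˣ using hs.isUnit
  have hne : (r : K) ≠ s := fun e => by
    have := h 1 (-1) (by rw [e, ← zpow_add₀ s.ne_zero, add_neg_cancel, zpow_zero])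
    omega
  have hrs1 : (r : K) * s ≠ 1 := fun e => by
    have := h 1 1 (by rwa [zpow_one, zpow_one])
    omega
  have hs2 : 1 - (s : K) ^ 2 ≠ 0 := fun e => by
    have := h 0 2 (by rw [zpow_zero, one_mul]; exact_mod_cast (sub_eq_zero.1 e).symm)
    omega
  have hqs (m n : ℤ) (e : (r / s) ^ m * s ^ n = 1) : m = 0 ∧ n = 0 := by
    have hmn := congrArg Units.val e
    rw [Units.val_mul, Units.val_zpow_eq_zpow_val, Units.val_zpow_eq_zpow_val,
      Units.val_div_eq_div_val, Units.val_one, div_zpow, div_mul_eq_mul_div, mul_div_assoc,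
      ← zpow_sub₀ s.ne_zero] at hmn
    have := h m (n - m) hmn
    omega
  exact (DUL.isUniversal_downUpData hne hrs1).bijective hqs (inv_ne_zero (sub_ne_zero.2 hne))
    (div_ne_zero hs2 (sub_ne_zero.2 hrs1.symm)) θ

/-- Assume `rᵐsⁿ = 1` implies `m = n = 0` (with `r ≠ s`).  Every `K`-algebra
endomorphism of the localized down-up algebra `A_S(r+s, -rs)` is an algebra
automorphism. -/
theorem stmt14 (K : Type) [Field K] [CharZero K] (r s : K) (hr : r ≠ 0) (hs : s ≠ 0)
    (h : ∀ m n : ℤ, r ^ m * s ^ n = 1 → m = 0 ∧ n = 0) (hne : r ≠ s)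
    (θ : DUL K r s →ₐ[K] DUL K r s) :
    Function.Bijective θ :=
  stmt14_general K r s hr hs h θ
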